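/- Let Ω ⊆ ℝ³ be a domain and let (ρ, u) be a weak solution of the stationary barotropic Navier–Stokes system on Ω with pressure p and potential G. Assume p : [0,∞) → ℝ is continuous, p(0) = 0, p(s) ≥ 0 for all s ≥ 0, p is continuously differentiable on (0,∞) with p′(s) ≥ 0 for all s > 0, and for some γ > 1 one has liminf_{s→0⁺} P(s)/p(s) > 0 and liminf_{s→0⁺} p(s)/s^γ > 0, where P is the pressure potential associated with p. Assume either γ > 6/5 and G ∈ D₀^{1,q}(Ω) for some 6/5 ≤ q ≤ 6γ/(5γ−6), or 1 < γ ≤ 6/5 and (G ∈ D₀^{1,q}(Ω) for some 6/5 ≤ q < ∞ or G ∈ W^{1,∞}(Ω)). If ρ ∈ L^∞(Ω) and the total energy is finite, i.e. ∫_Ω ( (1/2) ρ|u|² + P(ρ) ) dx < ∞, then u = 0 almost everywhere in Ω. -/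

import Mathlib

noncomputable section

open MeasureTheory Metric Filter Topology Set

/-- Three-dimensional Euclidean space. -/
abbrev E3 : Type := EuclideanSpace ℝ (Fin 3)

/-- Partial derivative of a scalar function in the `i`-th coordinate direction. -/
def pd (f : E3 → ℝ) (i : Fin 3) : E3 → ℝ :=
  fun x => fderiv ℝ f x (EuclideanSpace.single i 1)

/-- Classical gradient matrix of a vector field: `(tgrad φ x) i j = ∂_j φ_i (x)`. -/
def tgrad (φ : E3 → Fin 3 → ℝ) (x : E3) : Fin 3 → Fin 3 → ℝ :=
  fun i j => pd (fun y => φ y i) j x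

/-- Smooth compactly supported scalar test function with support in `Ω`. -/
def IsTest (Ω : Set E3) (φ : E3 → ℝ) : Prop :=
  ContDiff ℝ ((⊤ : ℕ∞) : WithTop ℕ∞) φ ∧ HasCompactSupport φ ∧ tsupport φ ⊆ Ω

/-- `C^n` compactly supported vector-valued test function with support in `Ω`. -/
def IsTestVec (n : WithTop ℕ∞) (Ω : Set E3) (φ : E3 → Fin 3 → ℝ) : Prop :=
  ContDiff ℝ n φ ∧ HasCompactSupport φ ∧ tsupport φ ⊆ Ω

/-- The Newtonian viscous stress tensor
`S(M) = μ (M + Mᵗ - (2/3) (tr M) I) + η (tr M) I`. -/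
def Smat (μ η : ℝ) (M : Fin 3 → Fin 3 → ℝ) : Fin 3 → Fin 3 → ℝ :=
  fun i j =>
    μ * (M i j + M j i - (2 / 3) * (∑ k, M k k) * (if i = j then (1 : ℝ) else 0))
      + η * (∑ k, M k k) * (if i = j then (1 : ℝ) else 0)

/-- `dG` is the weak gradient of the scalar function `G` on `Ω`. -/
def HasWeakGradOn (Ω : Set E3) (G : E3 → ℝ) (dG : E3 → Fin 3 → ℝ) : Prop :=
  ∀ φ : E3 → ℝ, IsTest Ω φ → ∀ i : Fin 3,
    ∫ x in Ω, G x * pd φ i x = - ∫ x in Ω, dG x i * φ x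

/-- `du` is the weak gradient (Jacobian) of the vector field `u` on `Ω`. -/
def HasWeakGradVecOn (Ω : Set E3) (u : E3 → Fin 3 → ℝ) (du : E3 → Fin 3 → Fin 3 → ℝ) : Prop :=
  ∀ φ : E3 → ℝ, IsTest Ω φ → ∀ i j : Fin 3,
    ∫ x in Ω, u x i * pd φ j x = - ∫ x in Ω, du x i j * φ x

/-- `u ∈ D₀^{1,2}(Ω; ℝ³)` with weak gradient `du`: `u` is locally integrable on `Ω`, its weak
gradient belongs to `L²(Ω)`, and `u` can be approximated by smooth compactly supported fields
`uₙ` with `∇uₙ → ∇u` in `L²(Ω)` and `uₙ → u` in `L⁶(Ω)`. -/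
def MemD012 (Ω : Set E3) (u : E3 → Fin 3 → ℝ) (du : E3 → Fin 3 → Fin 3 → ℝ) : Prop :=
  LocallyIntegrableOn u Ω volume ∧
  HasWeakGradVecOn Ω u du ∧
  MemLp du 2 (volume.restrict Ω) ∧
  ∃ un : ℕ → E3 → Fin 3 → ℝ,
    (∀ n, IsTestVec ((⊤ : ℕ∞) : WithTop ℕ∞) Ω (un n)) ∧
    Tendsto (fun n => eLpNorm (fun x => tgrad (un n) x - du x) 2 (volume.restrict Ω))
      atTop (𝓝 0) ∧
    Tendsto (fun n => eLpNorm (fun x => un n x - u x) 6 (volume.restrict Ω)) atTop (𝓝 0)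

/-- `G ∈ D₀^{1,q}(Ω)` with weak gradient `dG`. -/
def MemD01q (Ω : Set E3) (G : E3 → ℝ) (dG : E3 → Fin 3 → ℝ) (q : ℝ) : Prop :=
  HasWeakGradOn Ω G dG ∧
  MemLp dG (ENNReal.ofReal q) (volume.restrict Ω) ∧
  ∃ Gn : ℕ → E3 → ℝ,
    (∀ n, IsTest Ω (Gn n)) ∧
    Tendsto (fun n =>
        eLpNorm (fun x => (fun i => pd (Gn n) i x) - dG x) (ENNReal.ofReal q)
          (volume.restrict Ω)) atTop (𝓝 0) ∧
    ∀ K : Set E3, IsCompact K → K ⊆ Ω →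
      Tendsto (fun n => ∫ x in K, |Gn n x - G x|) atTop (𝓝 0)

/-- `G ∈ W^{1,∞}(Ω)` with weak gradient `dG`: both `G` and `∇G` are essentially bounded. -/
def MemW1inf (Ω : Set E3) (G : E3 → ℝ) (dG : E3 → Fin 3 → ℝ) : Prop :=
  HasWeakGradOn Ω G dG ∧
  MemLp G ⊤ (volume.restrict Ω) ∧ MemLp dG ⊤ (volume.restrict Ω)

/-- Weak solution `(ρ, u)` (with weak gradient `du` of `u` and weak gradient `dG` of `G`) of the
stationary barotropic Navier–Stokes system
`div(ρu) = 0`, `div(ρ u⊗u) + ∇p(ρ) − div S(∇u) = ρ∇G` on `Ω` with no-slip boundary condition. -/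
structure WeakSolution (Ω : Set E3) (μ η : ℝ) (p : ℝ → ℝ)
    (G : E3 → ℝ) (dG : E3 → Fin 3 → ℝ)
    (ρ : E3 → ℝ) (u : E3 → Fin 3 → ℝ) (du : E3 → Fin 3 → Fin 3 → ℝ) : Prop where
  aemeas_ρ : AEMeasurable ρ volume
  aemeas_u : AEMeasurable u volume
  weakGrad_G : HasWeakGradOn Ω G dG
  ρ_nonneg : ∀ᵐ x ∂(volume.restrict Ω), 0 ≤ ρ x
  ρu_locInt : LocallyIntegrableOn (fun x => fun i => ρ x * u x i) (closure Ω) volume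
  mass : ∀ φ : E3 → ℝ, ContDiff ℝ ((⊤ : ℕ∞) : WithTop ℕ∞) φ → HasCompactSupport φ →
    ∫ x in Ω, ρ x * (∑ i, u x i * pd φ i x) = 0
  ρ_locInt : LocallyIntegrableOn ρ Ω volume
  ρu2_locInt : LocallyIntegrableOn (fun x => ρ x * (∑ i, (u x i) ^ 2)) Ω volume
  pρ_locInt : LocallyIntegrableOn (fun x => p (ρ x)) Ω volume
  ρdG_locInt : LocallyIntegrableOn (fun x => fun i => ρ x * dG x i) Ω volume
  u_D012 : MemD012 Ω u du
  momentum : ∀ φ : E3 → Fin 3 → ℝ, IsTestVec 1 Ω φ →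
    ∫ x in Ω, ((∑ i, ∑ j, ρ x * u x i * u x j * tgrad φ x i j)
        + p (ρ x) * (∑ i, tgrad φ x i i))
      = (∫ x in Ω, ∑ i, ∑ j, Smat μ η (du x) i j * tgrad φ x i j)
        - ∫ x in Ω, ∑ i, ρ x * dG x i * φ x i

/-!
Extend the solution by zero to `ℝ³` and test the momentum equation with test fields `uₙ → u`. In
the limit `∫ S(∇u) : ∇u` becomes a sum of three terms, each of which vanishes.

* Convection: `∫ ρ u ⊗ u : ∇u = 0`, by the continuity equation tested with `(uₙ)ᵢ²`.
* Pressure: `∫ p(ρ) div u = 0`, by the renormalised continuity equation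
  `div (H(ρ) u) + (ρ H'(ρ) - H(ρ)) div u = 0`. To prove it, mollify `div (ρ u) = 0` at scale `ε`.
  Translation estimates make the commutator `(ρ u)_ε - ρ_ε u` of size `O(ε)` in `L²`, while
  `ε ∇ρ_ε` is bounded and tends to zero at Lebesgue points of `ρ`. Finiteness of the energy bounds
  the volume of `{ρ > δ}` and puts `p(ρ)` into `L²`, which allows `H` to be truncated near vacuum
  and the spatial cutoff to be removed.
* Potential: `∫ ρ u · ∇G = 0`, by the continuity equation tested with approximations of `G`. For
  `G ∈ W^{1,∞}` the role of a cutoff vanishing at the boundary is played by `|u|² / (|u|² + e)`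
  as `e → 0`.

Two integrations by parts turn `∫ S(∇u) : ∇u = 0` into
`μ ∫ |∇u|² + (μ / 3 + η) ∫ (div u)² = 0`; hence `∇u = 0`, and `u ∈ L⁶` vanishes.
-/

section

open scoped ContDiff

section PartialDerivatives

variable {f g : E3 → ℝ} {x : E3}

lemma hasCompactSupport_pd (hf : HasCompactSupport f) (i : Fin 3) : HasCompactSupport (pd f i) :=
  hf.fderiv_apply (𝕜 := ℝ) _

lemma tsupport_pd_subset (f : E3 → ℝ) (i : Fin 3) : tsupport (pd f i) ⊆ tsupport f :=
  tsupport_fderiv_apply_subset ℝ _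

lemma continuous_pd (hf : ContDiff ℝ 1 f) (i : Fin 3) : Continuous (pd f i) :=
  (hf.continuous_fderiv one_ne_zero).clm_apply continuous_const

lemma contDiff_pd (hf : ContDiff ℝ ∞ f) (i : Fin 3) : ContDiff ℝ ∞ (pd f i) :=
  (hf.fderiv_right (m := ∞) (by simp)).clm_apply contDiff_const

lemma pd_mul (hf : DifferentiableAt ℝ f x) (hg : DifferentiableAt ℝ g x) (i : Fin 3) :
    pd (fun y => f y * g y) i x = f x * pd g i x + g x * pd f i x := by
  simp [pd, fderiv_fun_mul hf hg]

lemma pd_comp {h : ℝ → ℝ} {h' : ℝ} (hf : DifferentiableAt ℝ f x) (hh : HasDerivAt h h' (f x))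
    (i : Fin 3) : pd (fun y => h (f y)) i x = h' * pd f i x := by
  have hcomp : HasFDerivAt (fun y => h (f y)) (h' • fderiv ℝ f x) x :=
    hh.comp_hasFDerivAt x hf.hasFDerivAt
  simp [pd, hcomp.fderiv]

lemma pd_mul_comp {h : ℝ → ℝ} {h' : ℝ} (hg : DifferentiableAt ℝ g x)
    (hf : DifferentiableAt ℝ f x) (hh : HasDerivAt h h' (f x)) (i : Fin 3) :
    pd (fun y => g y * h (f y)) i x = pd g i x * h (f x) + g x * (h' * pd f i x) := by
  have hcomp : DifferentiableAt ℝ (fun y => h (f y)) x := hh.differentiableAt.comp x hf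
  rw [pd_mul hg hcomp, pd_comp hf hh]
  ring

lemma pd_sum {ι : Type*} (s : Finset ι) {f : ι → E3 → ℝ}
    (hf : ∀ k ∈ s, DifferentiableAt ℝ (f k) x) (i : Fin 3) :
    pd (fun y => ∑ k ∈ s, f k y) i x = ∑ k ∈ s, pd (f k) i x := by
  simp [pd, fderiv_fun_sum hf]

lemma pd_comm (hf : ContDiff ℝ ∞ f) (i j : Fin 3) (x : E3) :
    pd (pd f i) j x = pd (pd f j) i x := by
  have hsymm : IsSymmSndFDerivAt ℝ f x :=
    hf.contDiffAt.isSymmSndFDerivAt (by simpa using WithTop.coe_le_coe.2 (le_top : (2 : ℕ∞) ≤ ⊤))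
  have hdiff : DifferentiableAt ℝ (fderiv ℝ f) x :=
    (hf.fderiv_right (m := ∞) (by simp)).differentiable (by simp) x
  have hsnd (v w : E3) : fderiv ℝ (fun y => fderiv ℝ f y v) x w
      = fderiv ℝ (fderiv ℝ f) x w v := by
    simp [fderiv_clm_apply hdiff (differentiableAt_const v)]
  exact (hsnd _ _).trans ((hsymm _ _).trans (hsnd _ _).symm)

lemma pd_comp_sub_left {y : E3} (hf : DifferentiableAt ℝ f (x - y)) (i : Fin 3) :
    pd (fun z => f (x - z)) i y = -pd f i (x - y) := by
  have hcomp : HasFDerivAt (fun z => f (x - z))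
      ((fderiv ℝ f (x - y)).comp (-ContinuousLinearMap.id ℝ E3)) y :=
    hf.hasFDerivAt.comp y ((hasFDerivAt_id y).const_sub x)
  simp [pd, hcomp.fderiv]

lemma integral_mul_pd (hf : ContDiff ℝ 1 f) (hg : ContDiff ℝ 1 g) (hgc : HasCompactSupport g)
    (i : Fin 3) : ∫ x, f x * pd g i x = -∫ x, pd f i x * g x :=
  integral_mul_fderiv_eq_neg_fderiv_mul_of_integrable
    (((continuous_pd hf i).mul hg.continuous).integrable_of_hasCompactSupport hgc.mul_left)
    ((hf.continuous.mul (continuous_pd hg i)).integrable_of_hasCompactSupport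
      (hasCompactSupport_pd hgc i).mul_left)
    ((hf.continuous.mul hg.continuous).integrable_of_hasCompactSupport hgc.mul_left)
    (fun x _ => hf.differentiable one_ne_zero x) (fun x _ => hg.differentiable one_ne_zero x)

lemma norm_fderiv_le_sum_abs_pd (f : E3 → ℝ) (x : E3) : ‖fderiv ℝ f x‖ ≤ ∑ i, |pd f i x| := by
  refine ContinuousLinearMap.opNorm_le_bound _ (Finset.sum_nonneg fun i _ => abs_nonneg _)
    fun v => ?_
  have hbasis : v = ∑ i, v i • EuclideanSpace.single i (1 : ℝ) := by
    simpa using ((EuclideanSpace.basisFun (Fin 3) ℝ).sum_repr v).symm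
  calc ‖fderiv ℝ f x v‖ = ‖∑ i, v i * pd f i x‖ := by
        conv_lhs => rw [hbasis]
        simp [pd]
    _ ≤ ∑ i, |v i| * |pd f i x| := (norm_sum_le _ _).trans_eq (by simp)
    _ ≤ ∑ i, ‖v‖ * |pd f i x| := by
        gcongr with i
        exact PiLp.norm_apply_le v i
    _ = (∑ i, |pd f i x|) * ‖v‖ := by rw [← Finset.mul_sum, mul_comm]

end PartialDerivatives

section Lebesgue

variable {α : Type*} [MeasurableSpace α] {ν : Measure α} {p q : ENNReal} {f g : α → ℝ}

lemma abs_integral_mul_le [p.HolderConjugate q] (hf : MemLp f p ν) (hg : MemLp g q ν) :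
    |∫ x, f x * g x ∂ν| ≤ (eLpNorm f p ν).toReal * (eLpNorm g q ν).toReal := by
  have hint : Integrable (fun x => f x * g x) ν := hf.integrable_mul hg
  calc |∫ x, f x * g x ∂ν| ≤ ∫ x, ‖f x * g x‖ ∂ν :=
        norm_integral_le_integral_norm (fun x => f x * g x)
    _ = (eLpNorm (f • g) 1 ν).toReal := by
        rw [integral_norm_eq_lintegral_enorm hint.1, eLpNorm_one_eq_lintegral_enorm]
        rfl
    _ ≤ (eLpNorm f p ν * eLpNorm g q ν).toReal :=
        ENNReal.toReal_mono (ENNReal.mul_ne_top hf.2.ne hg.2.ne)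
          (eLpNorm_smul_le_mul_eLpNorm hg.1 hf.1)
    _ = (eLpNorm f p ν).toReal * (eLpNorm g q ν).toReal := ENNReal.toReal_mul

lemma memLp_mul_of_ae_bound {c : α → ℝ} {C : ℝ} (hf : MemLp f p ν)
    (hc : AEStronglyMeasurable c ν) (hC : ∀ᵐ x ∂ν, |c x| ≤ C) :
    MemLp (fun x => f x * c x) p ν := by
  refine hf.of_le_mul (c := C) (hf.1.mul hc) ?_
  filter_upwards [hC] with x hx
  rw [norm_mul, mul_comm]
  exact mul_le_mul_of_nonneg_right hx (norm_nonneg _)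

lemma memLp_of_memLp_memLp {r : ENNReal} (hp : MemLp f p ν) (hr : MemLp f r ν)
    (hp0 : p ≠ 0) (hrt : r ≠ ⊤) (hpq : p ≤ q) (hqr : q ≤ r) : MemLp f q ν := by
  have hqt : q ≠ ⊤ := ne_top_of_le_ne_top hrt hqr
  have hq0 : q ≠ 0 := (hp0.bot_lt.trans_le hpq).ne'
  refine ⟨hp.1, ?_⟩
  rw [eLpNorm_lt_top_iff_lintegral_rpow_enorm_lt_top hq0 hqt]
  have hp_fin := lintegral_rpow_enorm_lt_top_of_eLpNorm_lt_top hp0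
    (ne_top_of_le_ne_top hqt hpq) hp.2
  have hr_fin := lintegral_rpow_enorm_lt_top_of_eLpNorm_lt_top
    (hq0.bot_lt.trans_le hqr).ne' hrt hr.2
  calc ∫⁻ a, ‖f a‖ₑ ^ q.toReal ∂ν ≤ ∫⁻ a, (‖f a‖ₑ ^ p.toReal + ‖f a‖ₑ ^ r.toReal) ∂ν := by
        refine lintegral_mono fun x => ?_
        rcases le_total ‖f x‖ₑ 1 with h | h
        · exact (ENNReal.rpow_le_rpow_of_exponent_ge h (ENNReal.toReal_mono hqt hpq)).trans
            le_self_add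
        · exact (ENNReal.rpow_le_rpow_of_exponent_le h (ENNReal.toReal_mono hrt hqr)).trans
            le_add_self
    _ = _ := lintegral_add_left' (hp.1.enorm.pow_const _) _
    _ < ⊤ := ENNReal.add_lt_top.2 ⟨hp_fin, hr_fin⟩

lemma eLpNorm_rpow_toReal {F : Type*} [NormedAddCommGroup F] (hp0 : p ≠ 0) (hp_top : p ≠ ⊤)
    (f : α → F) : eLpNorm f p ν ^ p.toReal = ∫⁻ x, ‖f x‖ₑ ^ p.toReal ∂ν := by
  rw [eLpNorm_eq_lintegral_rpow_enorm_toReal hp0 hp_top, ← ENNReal.rpow_mul,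
    one_div_mul_cancel (ENNReal.toReal_pos hp0 hp_top).ne', ENNReal.rpow_one]

lemma eLpNorm_integral_le {β F : Type*} [MeasurableSpace β] [NormedAddCommGroup F]
    [NormedSpace ℝ F] {τ : Measure β} [SFinite ν] [IsProbabilityMeasure τ] {f : α → β → F}
    (hf : AEStronglyMeasurable f.uncurry (ν.prod τ)) (hp : 1 ≤ p) (hp_top : p ≠ ⊤) {B : ENNReal}
    (hB : ∀ᵐ z ∂τ, eLpNorm (fun y => f y z) p ν ≤ B) :
    eLpNorm (fun y => ∫ z, f y z ∂τ) p ν ≤ B := by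
  have hp0 : p ≠ 0 := (one_pos.trans_le hp).ne'
  have hpos : 0 < p.toReal := ENNReal.toReal_pos hp0 hp_top
  have hjensen : ∀ᵐ y ∂ν, ‖∫ z, f y z ∂τ‖ₑ ^ p.toReal ≤ ∫⁻ z, ‖f y z‖ₑ ^ p.toReal ∂τ := by
    filter_upwards [hf.prodMk_left] with y hy
    rw [← eLpNorm_rpow_toReal hp0 hp_top]
    gcongr
    calc ‖∫ z, f y z ∂τ‖ₑ ≤ ∫⁻ z, ‖f y z‖ₑ ∂τ := enorm_integral_le_lintegral_enorm _
      _ = eLpNorm (f y) 1 τ := eLpNorm_one_eq_lintegral_enorm.symm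
      _ ≤ eLpNorm (f y) p τ := eLpNorm_le_eLpNorm_of_exponent_le hp hy
  rw [← ENNReal.rpow_le_rpow_iff hpos, eLpNorm_rpow_toReal hp0 hp_top]
  calc ∫⁻ y, ‖∫ z, f y z ∂τ‖ₑ ^ p.toReal ∂ν
      ≤ ∫⁻ y, ∫⁻ z, ‖f y z‖ₑ ^ p.toReal ∂τ ∂ν := lintegral_mono_ae hjensen
    _ = ∫⁻ z, ∫⁻ y, ‖f y z‖ₑ ^ p.toReal ∂ν ∂τ :=
        lintegral_lintegral_swap (hf.enorm.pow_const _)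
    _ ≤ ∫⁻ _, B ^ p.toReal ∂τ := by
        refine lintegral_mono_ae ?_
        filter_upwards [hB] with z hz
        rw [← eLpNorm_rpow_toReal hp0 hp_top]
        gcongr
    _ = B ^ p.toReal := by simp

variable {ι : Type*} {l : Filter ι} {fn gn cn : ι → α → ℝ}

lemma tendsto_integral_mul_of_tendsto_eLpNorm [p.HolderConjugate q]
    (hf : MemLp f p ν) (hfn : ∀ n, MemLp (fn n) p ν)
    (hflim : Tendsto (fun n => eLpNorm (fn n - f) p ν) l (𝓝 0))
    (hg : MemLp g q ν) (hgn : ∀ n, MemLp (gn n) q ν)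
    (hglim : Tendsto (fun n => eLpNorm (gn n - g) q ν) l (𝓝 0)) :
    Tendsto (fun n => ∫ x, fn n x * gn n x ∂ν) l (𝓝 (∫ x, f x * g x ∂ν)) := by
  have hdf (n : ι) : MemLp (fn n - f) p ν := (hfn n).sub hf
  have hdg (n : ι) : MemLp (gn n - g) q ν := (hgn n).sub hg
  have hf0 : Tendsto (fun n => (eLpNorm (fn n - f) p ν).toReal) l (𝓝 0) :=
    (ENNReal.tendsto_toReal ENNReal.zero_ne_top).comp hflim
  have hg0 : Tendsto (fun n => (eLpNorm (gn n - g) q ν).toReal) l (𝓝 0) :=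
    (ENNReal.tendsto_toReal ENNReal.zero_ne_top).comp hglim
  have hsplit (n : ι) : ∫ x, fn n x * gn n x ∂ν = ∫ x, f x * g x ∂ν
      + (∫ x, f x * (gn n - g) x ∂ν + ∫ x, (fn n - f) x * g x ∂ν
        + ∫ x, (fn n - f) x * (gn n - g) x ∂ν) := by
    have i₁ : Integrable (fun x => f x * g x) ν := hf.integrable_mul hg
    have i₂ : Integrable (fun x => f x * (gn n - g) x) ν := hf.integrable_mul (hdg n)
    have i₃ : Integrable (fun x => (fn n - f) x * g x) ν := (hdf n).integrable_mul hg
    have i₄ : Integrable (fun x => (fn n - f) x * (gn n - g) x) ν := (hdf n).integrable_mul (hdg n)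
    rw [← integral_add i₂ i₃, ← integral_add (by exact i₂.add i₃) i₄,
      ← integral_add i₁ (by exact (i₂.add i₃).add i₄)]
    congr with x
    simp only [Pi.sub_apply]
    ring
  simp_rw [hsplit]
  have hzero {a b : ι → α → ℝ} (ha : ∀ n, MemLp (a n) p ν) (hb : ∀ n, MemLp (b n) q ν)
      (hab : Tendsto (fun n => (eLpNorm (a n) p ν).toReal * (eLpNorm (b n) q ν).toReal) l (𝓝 0)) :
      Tendsto (fun n => ∫ x, a n x * b n x ∂ν) l (𝓝 0) :=
    squeeze_zero_norm (fun n => abs_integral_mul_le (ha n) (hb n)) hab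
  have h₂ := hzero (fun _ => hf) hdg (by simpa only [mul_zero] using hg0.const_mul _)
  have h₃ := hzero hdf (fun _ => hg) (by simpa only [zero_mul] using hf0.mul_const _)
  have h₄ := hzero hdf hdg (by simpa only [mul_zero] using hf0.mul hg0)
  simpa using ((h₂.add h₃).add h₄).const_add (∫ x, f x * g x ∂ν)

lemma tendsto_integral_const_mul_of_tendsto_eLpNorm [p.HolderConjugate q]
    (hf : MemLp f p ν) (hg : MemLp g q ν) (hgn : ∀ n, MemLp (gn n) q ν)
    (hglim : Tendsto (fun n => eLpNorm (gn n - g) q ν) l (𝓝 0)) :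
    Tendsto (fun n => ∫ x, f x * gn n x ∂ν) l (𝓝 (∫ x, f x * g x ∂ν)) :=
  tendsto_integral_mul_of_tendsto_eLpNorm (fn := fun _ => f) hf (fun _ => hf)
    (by simpa using tendsto_const_nhds) hg hgn hglim

lemma tendsto_eLpNorm_zero_of_dominated [l.IsCountablyGenerated] (hp0 : p ≠ 0) (hp_top : p ≠ ⊤)
    (hfn : ∀ n, AEStronglyMeasurable (fn n) ν) (hg : MemLp g p ν)
    (hbound : ∀ᶠ n in l, ∀ᵐ x ∂ν, |fn n x| ≤ g x)
    (hlim : ∀ᵐ x ∂ν, Tendsto (fun n => fn n x) l (𝓝 0)) :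
    Tendsto (fun n => eLpNorm (fn n) p ν) l (𝓝 0) := by
  have hpos : 0 < p.toReal := ENNReal.toReal_pos hp0 hp_top
  suffices Tendsto (fun n => ∫⁻ x, ‖fn n x‖ₑ ^ p.toReal ∂ν) l (𝓝 (∫⁻ _, 0 ∂ν)) by
    simp_rw [← eLpNorm_rpow_toReal hp0 hp_top] at this
    simpa [← ENNReal.rpow_mul, hpos.ne', hpos] using this.ennrpow_const p.toReal⁻¹
  refine tendsto_lintegral_filter_of_dominated_convergence' (fun x => ‖g x‖ₑ ^ p.toReal)
    (.of_forall fun n => (hfn n).enorm.pow_const _) (hbound.mono fun n hn => ?_) ?_ ?_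
  · filter_upwards [hn] with x hx
    gcongr
    exact enorm_le_iff_norm_le.2 (hx.trans (le_abs_self _))
  · rw [← eLpNorm_rpow_toReal hp0 hp_top]
    exact ENNReal.rpow_ne_top_of_nonneg hpos.le hg.2.ne
  · filter_upwards [hlim] with x hx
    simpa [hpos] using hx.enorm.ennrpow_const p.toReal

variable {c : α → ℝ} {C : ℝ}

lemma tendsto_integral_mul_of_ae_bound [l.IsCountablyGenerated] (hf : Integrable f ν)
    (hcn : ∀ n, AEStronglyMeasurable (cn n) ν) (hC : ∀ᶠ n in l, ∀ᵐ x ∂ν, |cn n x| ≤ C)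
    (hc : ∀ᵐ x ∂ν, Tendsto (fun n => cn n x) l (𝓝 (c x))) :
    Tendsto (fun n => ∫ x, f x * cn n x ∂ν) l (𝓝 (∫ x, f x * c x ∂ν)) := by
  refine tendsto_integral_filter_of_dominated_convergence (fun x => ‖f x‖ * C)
    (.of_forall fun n => hf.1.mul (hcn n)) (hC.mono fun n hCn => ?_) (hf.norm.mul_const C) ?_
  · filter_upwards [hCn] with x hx
    rw [norm_mul]
    gcongr
    exact hx
  · filter_upwards [hc] with x hx
    exact hx.const_mul _

lemma tendsto_integral_mul_mul_of_ae_bound [l.IsCountablyGenerated] [p.HolderConjugate q]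
    (hf : MemLp f p ν) (hg : MemLp g q ν) (hgn : ∀ n, MemLp (gn n) q ν)
    (hglim : Tendsto (fun n => eLpNorm (gn n - g) q ν) l (𝓝 0))
    (hcn : ∀ n, AEStronglyMeasurable (cn n) ν) (hC : ∀ n, ∀ᵐ x ∂ν, |cn n x| ≤ C)
    (hc : ∀ᵐ x ∂ν, Tendsto (fun n => cn n x) l (𝓝 (c x))) :
    Tendsto (fun n => ∫ x, f x * gn n x * cn n x ∂ν) l (𝓝 (∫ x, f x * g x * c x ∂ν)) := by
  have hd (n : ι) : MemLp (fun x => (gn n - g) x * cn n x) q ν :=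
    memLp_mul_of_ae_bound ((hgn n).sub hg) (hcn n) (hC n)
  have hfg : Integrable (fun x => f x * g x) ν := hf.integrable_mul hg
  have hsplit (n : ι) : ∫ x, f x * gn n x * cn n x ∂ν
      = ∫ x, f x * ((gn n - g) x * cn n x) ∂ν + ∫ x, f x * g x * cn n x ∂ν := by
    rw [← integral_add (by exact hf.integrable_mul (hd n))
      (memLp_one_iff_integrable.1 (memLp_mul_of_ae_bound
        (memLp_one_iff_integrable.2 hfg) (hcn n) (hC n)))]
    congr with x
    simp only [Pi.sub_apply]
    ring
  simp_rw [hsplit]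
  have hd0 : Tendsto (fun n => eLpNorm (fun x => (gn n - g) x * cn n x) q ν) l (𝓝 0) := by
    refine tendsto_of_tendsto_of_tendsto_of_le_of_le tendsto_const_nhds
      (by simpa using ENNReal.Tendsto.const_mul hglim (a := ENNReal.ofReal C) (by simp))
      (fun _ => zero_le) fun n => eLpNorm_le_mul_eLpNorm_of_ae_le_mul ?_ q
    filter_upwards [hC n] with x hx
    rw [norm_mul, mul_comm]
    exact mul_le_mul_of_nonneg_right hx (norm_nonneg _)
  have herr : Tendsto (fun n => ∫ x, f x * ((gn n - g) x * cn n x) ∂ν) l (𝓝 0) := by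
    simpa using tendsto_integral_const_mul_of_tendsto_eLpNorm (g := 0) hf MemLp.zero hd
      (by simpa using hd0)
  simpa using herr.add (tendsto_integral_mul_of_ae_bound hfg hcn (.of_forall hC) hc)

end Lebesgue

section Mollification

open ContinuousLinearMap (lsmul)
open scoped Convolution

variable {E : Type*} [NormedAddCommGroup E] [NormedSpace ℝ E]

/-- The `L¹`-invariant rescaling `x ↦ ε⁻ᵈ κ(x / ε)`, `d = dim E`, of a kernel `κ` on `E`. -/
def rescale (κ : E → ℝ) (ε : ℝ) (x : E) : ℝ :=
  ε⁻¹ ^ Module.finrank ℝ E * κ (ε⁻¹ • x)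

variable {κ : E → ℝ}

lemma contDiff_rescale {n : WithTop ℕ∞} (hκ : ContDiff ℝ n κ) (ε : ℝ) :
    ContDiff ℝ n (rescale κ ε) :=
  contDiff_const.mul (hκ.comp (contDiff_const_smul _))

lemma continuous_rescale (hκ : Continuous κ) (ε : ℝ) : Continuous (rescale κ ε) :=
  continuous_const.mul (hκ.comp (continuous_const_smul _))

lemma rescale_eq_zero {R ε : ℝ} (hκ : ∀ x, R < ‖x‖ → κ x = 0) (hε : 0 < ε) {x : E}
    (hx : R * ε < ‖x‖) : rescale κ ε x = 0 := by
  rw [rescale, hκ, mul_zero]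
  rwa [norm_smul, norm_inv, Real.norm_of_nonneg hε.le, ← div_eq_inv_mul, lt_div_iff₀ hε]

lemma sub_eq_integral_fderiv {w : E → ℝ} (hw : ContDiff ℝ 1 w) (y z : E) :
    w (y - z) - w y = ∫ s in Ioc (0 : ℝ) 1, fderiv ℝ w (y - s • z) (-z) := by
  have hderiv (s : ℝ) : HasDerivAt (fun s : ℝ => w (y - s • z)) (fderiv ℝ w (y - s • z) (-z)) s :=
    (hw.differentiable one_ne_zero _).hasFDerivAt.comp_hasDerivAt s
      (by simpa using ((hasDerivAt_id s).smul_const z).const_sub y)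
  have hcont : Continuous fun s : ℝ => fderiv ℝ w (y - s • z) (-z) :=
    ((hw.continuous_fderiv one_ne_zero).comp (by fun_prop)).clm_apply continuous_const
  have hftc := intervalIntegral.integral_eq_sub_of_hasDerivAt (a := 0) (b := 1)
    (fun s _ => hderiv s) (hcont.intervalIntegrable _ _)
  simpa [intervalIntegral.integral_of_le] using hftc.symm

variable [FiniteDimensional ℝ E]

lemma hasCompactSupport_rescale (hκ : HasCompactSupport κ) (ε : ℝ) :
    HasCompactSupport (rescale κ ε) := by
  rcases eq_or_ne ε 0 with rfl | hε
  · rcases Nat.eq_zero_or_pos (Module.finrank ℝ E) with h | h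
    · have := Module.finrank_zero_iff.1 h
      exact .of_compactSpace _
    · exact .intro isCompact_empty fun x _ => by simp [rescale, h.ne']
  · exact (hκ.comp_smul (inv_ne_zero hε)).mul_left

variable [MeasurableSpace E] [BorelSpace E] {μ : Measure E}

variable [μ.IsAddHaarMeasure] {p : ENNReal}

lemma eLpNorm_translate_sub_le_fderiv {w : E → ℝ} (hw : ContDiff ℝ 1 w) (hp : 1 ≤ p)
    (hp_top : p ≠ ⊤) (z : E) :
    eLpNorm (fun y => w (y - z) - w y) p μ ≤ ‖z‖ₑ * eLpNorm (fderiv ℝ w) p μ := by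
  have hcont := hw.continuous_fderiv one_ne_zero
  have : IsProbabilityMeasure (volume.restrict (Ioc (0 : ℝ) 1)) := ⟨by simp⟩
  simp_rw [sub_eq_integral_fderiv hw]
  refine eLpNorm_integral_le (Continuous.aestronglyMeasurable ?_) hp hp_top (.of_forall fun s => ?_)
  · exact (hcont.comp (by fun_prop)).clm_apply continuous_const
  · calc eLpNorm (fun y => fderiv ℝ w (y - s • z) (-z)) p μ
        ≤ ENNReal.ofReal ‖z‖ * eLpNorm (fderiv ℝ w ∘ fun y => y - s • z) p μ :=
          eLpNorm_le_mul_eLpNorm_of_ae_le_mul (.of_forall fun y => by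
            simpa [mul_comm] using (fderiv ℝ w (y - s • z)).le_opNorm (-z)) p
      _ = ‖z‖ₑ * eLpNorm (fderiv ℝ w) p μ := by
          rw [ofReal_norm, eLpNorm_comp_measurePreserving hcont.aestronglyMeasurable
            (measurePreserving_sub_right μ _)]

lemma eLpNorm_translate_sub_le_liminf {w : E → ℝ} {wn : ℕ → E → ℝ}
    (hwn : ∀ n, ContDiff ℝ 1 (wn n))
    (hlim : ∀ᵐ y ∂μ, Tendsto (fun n => wn n y) atTop (𝓝 (w y)))
    (hp : 1 ≤ p) (hp_top : p ≠ ⊤) (z : E) :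
    eLpNorm (fun y => w (y - z) - w y) p μ
      ≤ ‖z‖ₑ * liminf (fun n => eLpNorm (fderiv ℝ (wn n)) p μ) atTop := by
  have htrans : ∀ᵐ y ∂μ, Tendsto (fun n => wn n (y - z)) atTop (𝓝 (w (y - z))) :=
    (measurePreserving_sub_right μ z).quasiMeasurePreserving.ae hlim
  calc eLpNorm (fun y => w (y - z) - w y) p μ
      ≤ liminf (fun n => eLpNorm (fun y => wn n (y - z) - wn n y) p μ) atTop := by
        refine Lp.eLpNorm_lim_le_liminf_eLpNorm (fun n => Continuous.aestronglyMeasurable ?_) _ ?_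
        · have := (hwn n).continuous
          fun_prop
        · filter_upwards [hlim, htrans] with y hy hyz using hyz.sub hy
    _ ≤ liminf (fun n => ‖z‖ₑ * eLpNorm (fderiv ℝ (wn n)) p μ) atTop :=
        liminf_le_liminf (.of_forall fun n => eLpNorm_translate_sub_le_fderiv (hwn n) hp hp_top z)
    _ = ‖z‖ₑ * liminf (fun n => eLpNorm (fderiv ℝ (wn n)) p μ) atTop :=
        ENNReal.liminf_const_mul_of_ne_top (by simp)

lemma integral_rescale (κ : E → ℝ) {ε : ℝ} (hε : 0 < ε) :
    ∫ x, rescale κ ε x ∂μ = ∫ x, κ x ∂μ := by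
  simp only [rescale, integral_const_mul, Measure.integral_comp_smul, inv_pow, inv_inv, smul_eq_mul,
    abs_of_pos (pow_pos hε _)]
  exact inv_mul_cancel_left₀ (pow_pos hε _).ne' _

lemma convolution_sub_eq_integral {f : E → ℝ} (hf : LocallyIntegrable f μ) (hκ : Continuous κ)
    (hκc : HasCompactSupport κ) (y : E) :
    (f ⋆[lsmul ℝ ℝ, μ] κ) y - f y * ∫ x, κ x ∂μ = ∫ t, κ (y - t) * (f t - f y) ∂μ := by
  have hconv : Integrable (fun t => f t * κ (y - t)) μ :=
    hκc.convolutionExists_right (lsmul ℝ ℝ) hf hκ y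
  have hconst : Integrable (fun t => f y * κ (y - t)) μ :=
    ((hκ.integrable_of_hasCompactSupport hκc).comp_sub_left y).const_mul _
  rw [convolution_lsmul, ← integral_sub_left_eq_self κ μ y, ← integral_const_mul]
  simp only [smul_eq_mul]
  rw [← integral_sub hconv hconst]
  congr with t
  ring

lemma abs_convolution_rescale_sub_le {f : E → ℝ} (hf : LocallyIntegrable f μ) (hκ : Continuous κ)
    {C R : ℝ} (hC : ∀ x, |κ x| ≤ C) (hR : ∀ x, R < ‖x‖ → κ x = 0) (hR0 : 0 < R) {ε : ℝ}
    (hε : 0 < ε) (y : E) :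
    |(f ⋆[lsmul ℝ ℝ, μ] rescale κ ε) y - f y * ∫ x, κ x ∂μ|
      ≤ C * μ.real (closedBall 0 R) * ⨍ t in closedBall y (R * ε), ‖f t - f y‖ ∂μ := by
  have hκc : HasCompactSupport κ :=
    .intro (isCompact_closedBall 0 R) fun x hx => hR x (by simpa using hx)
  have hball :
      μ.real (closedBall y (R * ε)) = ε ^ Module.finrank ℝ E * μ.real (closedBall 0 R) := by
    rw [mul_comm R, Measure.real, Measure.addHaar_closedBall_mul _ _ hε.le hR0.le,
      ENNReal.toReal_mul, ENNReal.toReal_ofReal (by positivity), Measure.real]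
  have hV : 0 < μ.real (closedBall (0 : E) R) :=
    ENNReal.toReal_pos (measure_closedBall_pos _ _ hR0).ne' measure_closedBall_lt_top.ne
  have hint : IntegrableOn (fun t => ‖f t - f y‖) (closedBall y (R * ε)) μ :=
    ((hf.sub (locallyIntegrable_const _)).integrableOn_isCompact (isCompact_closedBall _ _)).norm
  have hoff (t : E) (ht : t ∉ closedBall y (R * ε)) : rescale κ ε (y - t) * (f t - f y) = 0 := by
    rw [rescale_eq_zero hR hε, zero_mul]
    rwa [mem_closedBall, not_le, dist_comm, dist_eq_norm] at ht
  rw [← integral_rescale κ hε, convolution_sub_eq_integral hf (continuous_rescale hκ ε)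
    (hasCompactSupport_rescale hκc ε), ← setIntegral_eq_integral_of_forall_compl_eq_zero hoff]
  calc |∫ t in closedBall y (R * ε), rescale κ ε (y - t) * (f t - f y) ∂μ|
      ≤ ∫ t in closedBall y (R * ε), |rescale κ ε (y - t) * (f t - f y)| ∂μ :=
        abs_integral_le_integral_abs
    _ ≤ ∫ t in closedBall y (R * ε), ε⁻¹ ^ Module.finrank ℝ E * C * ‖f t - f y‖ ∂μ := by
        refine integral_mono_of_nonneg (.of_forall fun t => abs_nonneg _) (hint.const_mul _)
          (.of_forall fun t => ?_)
        simp only [rescale, abs_mul, abs_of_pos (pow_pos (inv_pos.2 hε) _), Real.norm_eq_abs]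
        gcongr
        exact hC _
    _ = C * μ.real (closedBall 0 R) * ⨍ t in closedBall y (R * ε), ‖f t - f y‖ ∂μ := by
        rw [integral_const_mul, setAverage_eq, hball, smul_eq_mul, inv_pow]
        field_simp

lemma ae_tendsto_convolution_rescale {f : E → ℝ} (hf : LocallyIntegrable f μ) (hκ : Continuous κ)
    (hκc : HasCompactSupport κ) :
    ∀ᵐ y ∂μ, Tendsto (fun ε => (f ⋆[lsmul ℝ ℝ, μ] rescale κ ε) y) (𝓝[>] 0)
      (𝓝 (f y * ∫ x, κ x ∂μ)) := by
  obtain ⟨C, hC⟩ := hκc.exists_bound_of_continuous hκ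
  obtain ⟨R, hR0, hsupp⟩ := hκc.isBounded.subset_closedBall_lt 0 0
  have hR (x : E) (hx : R < ‖x‖) : κ x = 0 :=
    image_eq_zero_of_notMem_tsupport fun h => by simpa [hx.not_ge] using hsupp h
  have hradius : Tendsto (fun ε => R * ε) (𝓝[>] 0) (𝓝[>] 0) :=
    tendsto_nhdsWithin_iff.2 ⟨((continuous_const_mul R).tendsto' 0 0 (mul_zero R)).mono_left
      nhdsWithin_le_nhds, eventually_mem_nhdsWithin.mono fun ε hε => mul_pos hR0 hε⟩
  filter_upwards [IsUnifLocDoublingMeasure.ae_tendsto_average_norm_sub μ hf 1] with y hy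
  have haverage := hy (fun _ => y) (fun ε => R * ε) hradius
    (eventually_mem_nhdsWithin.mono fun ε hε => by
      simpa using (mul_pos hR0 (mem_Ioi.1 hε)).le)
  rw [tendsto_iff_norm_sub_tendsto_zero]
  refine squeeze_zero' (.of_forall fun _ => norm_nonneg _)
    (eventually_mem_nhdsWithin.mono fun ε hε => ?_)
    (by simpa using haverage.const_mul (C * μ.real (closedBall 0 R)))
  exact abs_convolution_rescale_sub_le hf hκ hC hR hR0 hε y

lemma abs_convolution_rescale_le {f : E → ℝ} {M : ℝ} (hf : ∀ x, |f x| ≤ M) (hκ : Continuous κ)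
    (hκc : HasCompactSupport κ) {ε : ℝ} (hε : 0 < ε) (y : E) :
    |(f ⋆[lsmul ℝ ℝ, μ] rescale κ ε) y| ≤ M * ∫ x, |κ x| ∂μ := by
  have hint : Integrable (fun t => |rescale κ ε t|) μ :=
    ((continuous_rescale hκ ε).integrable_of_hasCompactSupport
      (hasCompactSupport_rescale hκc ε)).abs
  have habs (x : E) : |rescale κ ε x| = rescale (fun x => |κ x|) ε x := by
    simp [rescale, abs_mul, abs_of_pos hε]
  calc |(f ⋆[lsmul ℝ ℝ, μ] rescale κ ε) y| ≤ ∫ t, |f t • rescale κ ε (y - t)| ∂μ :=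
        abs_integral_le_integral_abs
    _ ≤ ∫ t, M * |rescale κ ε (y - t)| ∂μ := by
        refine integral_mono_of_nonneg (.of_forall fun t => abs_nonneg _)
          ((hint.comp_sub_left y).const_mul M) (.of_forall fun t => ?_)
        simp only [smul_eq_mul, abs_mul]
        gcongr
        exact hf t
    _ = M * ∫ x, |κ x| ∂μ := by
        rw [integral_const_mul, integral_sub_left_eq_self (fun t => |rescale κ ε t|) μ y]
        simp_rw [habs]
        rw [integral_rescale _ hε]

lemma convolution_mul_sub_eq_integral {r w : E → ℝ} (hr : LocallyIntegrable r μ)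
    (hrw : LocallyIntegrable (fun t => r t * w t) μ) (hκ : Continuous κ) (hκ0 : ∀ x, 0 ≤ κ x)
    (hκc : HasCompactSupport κ) (y : E) :
    ((fun t => r t * w t) ⋆[lsmul ℝ ℝ, μ] κ) y - (r ⋆[lsmul ℝ ℝ, μ] κ) y * w y
      = ∫ z, r (y - z) * (w (y - z) - w y) ∂μ.withDensity fun z => ENNReal.ofReal (κ z) := by
  have hintr : Integrable (fun t => r t * κ (y - t)) μ :=
    hκc.convolutionExists_right (lsmul ℝ ℝ) hr hκ y
  have hintrw : Integrable (fun t => r t * w t * κ (y - t)) μ :=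
    hκc.convolutionExists_right (lsmul ℝ ℝ) hrw hκ y
  rw [integral_withDensity_eq_integral_toReal_smul hκ.measurable.ennreal_ofReal
    (.of_forall fun _ => ENNReal.ofReal_lt_top), convolution_lsmul, convolution_lsmul]
  simp only [smul_eq_mul]
  rw [← integral_mul_const, ← integral_sub hintrw (hintr.mul_const _),
    ← integral_sub_left_eq_self _ μ y]
  congr with z
  simp only [sub_sub_cancel, ENNReal.toReal_ofReal (hκ0 _)]
  ring

lemma eLpNorm_convolution_mul_sub_le {r w : E → ℝ} {M δ : ℝ} {A p : ENNReal} (hp : 1 ≤ p)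
    (hp_top : p ≠ ⊤) (hr : Measurable r) (hM : ∀ x, |r x| ≤ M) (hw : Measurable w)
    (hwl : LocallyIntegrable w μ)
    (hA : ∀ z, eLpNorm (fun y => w (y - z) - w y) p μ ≤ ‖z‖ₑ * A)
    (hκ : Continuous κ) (hκ0 : ∀ x, 0 ≤ κ x) (hκ1 : ∫ x, κ x ∂μ = 1)
    (hδ : ∀ x, δ < ‖x‖ → κ x = 0) :
    eLpNorm (fun y => ((fun t => r t * w t) ⋆[lsmul ℝ ℝ, μ] κ) y
        - (r ⋆[lsmul ℝ ℝ, μ] κ) y * w y) p μ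
      ≤ ENNReal.ofReal M * (ENNReal.ofReal δ * A) := by
  have hκc : HasCompactSupport κ :=
    .intro (isCompact_closedBall 0 δ) fun x hx => hδ x (by simpa using hx)
  have hprob : IsProbabilityMeasure (μ.withDensity fun z => ENNReal.ofReal (κ z)) :=
    ⟨by rw [withDensity_apply _ .univ, setLIntegral_univ, ← ofReal_integral_eq_lintegral_ofReal
      (hκ.integrable_of_hasCompactSupport hκc) (.of_forall hκ0), hκ1, ENNReal.ofReal_one]⟩
  have hrl : LocallyIntegrable r μ := (locallyIntegrable_const M).mono hr.aestronglyMeasurable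
    (.of_forall fun x => (hM x).trans (le_abs_self M))
  have hrw : LocallyIntegrable (fun t => r t * w t) μ := by
    refine (hwl.smul M).mono (hr.mul hw).aestronglyMeasurable (.of_forall fun x => ?_)
    simp only [norm_mul, Pi.smul_apply, smul_eq_mul]
    gcongr
    exact (hM x).trans (le_abs_self M)
  simp_rw [convolution_mul_sub_eq_integral hrl hrw hκ hκ0 hκc]
  have hmeas : Measurable fun yz : E × E => r (yz.1 - yz.2) * (w (yz.1 - yz.2) - w yz.1) := by
    fun_prop
  refine eLpNorm_integral_le hmeas.aestronglyMeasurable hp hp_top ?_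
  rw [ae_withDensity_iff hκ.measurable.ennreal_ofReal]
  refine .of_forall fun z hz => ?_
  have hzδ : ‖z‖ ≤ δ := le_of_not_gt fun h => hz (by simp [hδ z h])
  calc eLpNorm (fun y => r (y - z) * (w (y - z) - w y)) p μ
      ≤ ENNReal.ofReal M * eLpNorm (fun y => w (y - z) - w y) p μ :=
        eLpNorm_le_mul_eLpNorm_of_ae_le_mul (.of_forall fun y => by
          rw [norm_mul]
          exact mul_le_mul_of_nonneg_right (hM _) (norm_nonneg _)) p
    _ ≤ ENNReal.ofReal M * (ENNReal.ofReal δ * A) := by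
        gcongr
        refine (hA z).trans ?_
        rw [← ofReal_norm]
        gcongr

end Mollification

section Mollify

open ContinuousLinearMap (lsmul)
open scoped Convolution

lemma pd_convolution {f κ : E3 → ℝ} (hf : LocallyIntegrable f) (hκ : ContDiff ℝ 1 κ)
    (hκc : HasCompactSupport κ) (i : Fin 3) :
    pd (f ⋆[lsmul ℝ ℝ] κ) i = f ⋆[lsmul ℝ ℝ] pd κ i := by
  ext y
  have hint : ConvolutionExistsAt f (fderiv ℝ κ) y ((lsmul ℝ ℝ).precompR E3) :=
    (hκc.fderiv ℝ).convolutionExists_right _ hf (hκ.continuous_fderiv one_ne_zero) y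
  rw [pd, (hκc.hasFDerivAt_convolution_right (lsmul ℝ ℝ) hf hκ y).fderiv, convolution_def,
    ContinuousLinearMap.integral_apply hint.integrable]
  rfl

lemma pd_rescale (κ : E3 → ℝ) (ε : ℝ) (i : Fin 3) :
    pd (rescale κ ε) i = fun x => ε⁻¹ * rescale (pd κ i) ε x := by
  ext x
  have hfun : rescale κ ε = ε⁻¹ ^ Module.finrank ℝ E3 • fun x => κ (ε⁻¹ • x) := rfl
  simp only [hfun, pd, fderiv_const_smul_field, fderiv_comp_smul, Pi.smul_apply,
    smul_apply, smul_eq_mul, rescale]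
  ring

lemma integral_pd_eq_zero {f : E3 → ℝ} (hf : ContDiff ℝ 1 f) (hfc : HasCompactSupport f)
    (i : Fin 3) : ∫ x, pd f i x = 0 := by
  simpa [pd] using integral_mul_pd (f := fun _ => 1) contDiff_const hf hfc i

/-- A smooth probability density on `ℝ³` supported in the unit ball. -/
def mollifier : E3 → ℝ :=
  (⟨1 / 2, 1, by norm_num, by norm_num⟩ : ContDiffBump (0 : E3)).normed volume

lemma contDiff_mollifier : ContDiff ℝ ∞ mollifier :=
  ContDiffBump.contDiff_normed _

lemma hasCompactSupport_mollifier : HasCompactSupport mollifier :=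
  ContDiffBump.hasCompactSupport_normed _

lemma mollifier_nonneg (x : E3) : 0 ≤ mollifier x :=
  ContDiffBump.nonneg_normed _ x

lemma integral_mollifier : ∫ x, mollifier x = 1 :=
  ContDiffBump.integral_normed _

lemma mollifier_eq_zero (x : E3) (hx : 1 < ‖x‖) : mollifier x = 0 := by
  rw [← Function.notMem_support, mollifier, ContDiffBump.support_normed_eq]
  simpa using hx.le

/-- The mollification of `f` at scale `ε`. -/
def mollify (ε : ℝ) (f : E3 → ℝ) : E3 → ℝ :=
  f ⋆[lsmul ℝ ℝ] rescale mollifier ε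

variable {f r w : E3 → ℝ} {M ε : ℝ}

lemma contDiff_mollify (hf : LocallyIntegrable f) (ε : ℝ) : ContDiff ℝ ∞ (mollify ε f) :=
  (hasCompactSupport_rescale hasCompactSupport_mollifier ε).contDiff_convolution_right _ hf
    (contDiff_rescale contDiff_mollifier ε)

lemma pd_mollify (hf : LocallyIntegrable f) (ε : ℝ) (i : Fin 3) :
    pd (mollify ε f) i = f ⋆[lsmul ℝ ℝ] pd (rescale mollifier ε) i :=
  pd_convolution hf ((contDiff_rescale contDiff_mollifier ε).of_le (by simp))
    (hasCompactSupport_rescale hasCompactSupport_mollifier ε) i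

lemma mul_pd_mollify (hf : LocallyIntegrable f) (hε : ε ≠ 0) (i : Fin 3) (y : E3) :
    ε * pd (mollify ε f) i y = (f ⋆[lsmul ℝ ℝ] rescale (pd mollifier i) ε) y := by
  simp only [pd_mollify hf, pd_rescale, convolution_lsmul, smul_eq_mul]
  rw [← integral_const_mul]
  congr with t
  field_simp

lemma abs_mollify_le (hf : ∀ x, |f x| ≤ M) (hε : 0 < ε) (y : E3) : |mollify ε f y| ≤ M := by
  simpa [mollify, abs_of_nonneg (mollifier_nonneg _), integral_mollifier] using
    abs_convolution_rescale_le (μ := volume) hf contDiff_mollifier.continuous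
      hasCompactSupport_mollifier hε y

lemma abs_mul_pd_mollify_le (hf : LocallyIntegrable f) (hM : ∀ x, |f x| ≤ M) (hε : 0 < ε)
    (i : Fin 3) (y : E3) : |ε * pd (mollify ε f) i y| ≤ M * ∫ x, |pd mollifier i x| := by
  rw [mul_pd_mollify hf hε.ne']
  exact abs_convolution_rescale_le hM (contDiff_pd contDiff_mollifier i).continuous
    (hasCompactSupport_pd hasCompactSupport_mollifier i) hε y

lemma ae_tendsto_mollify (hf : LocallyIntegrable f) :
    ∀ᵐ y, Tendsto (fun ε => mollify ε f y) (𝓝[>] 0) (𝓝 (f y)) := by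
  simpa [mollify, integral_mollifier] using
    ae_tendsto_convolution_rescale hf contDiff_mollifier.continuous hasCompactSupport_mollifier

/-- Mean-zero kernels kill `f` at its Lebesgue points, so no regularity of `f` is needed. -/
lemma ae_tendsto_mul_pd_mollify (hf : LocallyIntegrable f) (i : Fin 3) :
    ∀ᵐ y, Tendsto (fun ε => ε * pd (mollify ε f) i y) (𝓝[>] 0) (𝓝 0) := by
  filter_upwards [ae_tendsto_convolution_rescale hf (contDiff_pd contDiff_mollifier i).continuous
    (hasCompactSupport_pd hasCompactSupport_mollifier i)] with y hy
  rw [integral_pd_eq_zero (contDiff_mollifier.of_le (by simp)) hasCompactSupport_mollifier,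
    mul_zero] at hy
  exact hy.congr' (eventually_mem_nhdsWithin.mono fun ε hε =>
    (mul_pd_mollify hf (ne_of_gt hε) i y).symm)

lemma eLpNorm_mollify_mul_sub_le {A p : ENNReal} (hp : 1 ≤ p) (hp_top : p ≠ ⊤)
    (hr : Measurable r) (hM : ∀ x, |r x| ≤ M) (hw : Measurable w) (hwl : LocallyIntegrable w)
    (hA : ∀ z, eLpNorm (fun y => w (y - z) - w y) p ≤ ‖z‖ₑ * A) (hε : 0 < ε) :
    eLpNorm (fun y => mollify ε (fun t => r t * w t) y - mollify ε r y * w y) p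
      ≤ ENNReal.ofReal M * (ENNReal.ofReal ε * A) := by
  refine eLpNorm_convolution_mul_sub_le hp hp_top hr hM hw hwl hA
    (continuous_rescale contDiff_mollifier.continuous ε) (fun x => ?_)
    (by rw [integral_rescale _ hε, integral_mollifier])
    fun x hx => rescale_eq_zero mollifier_eq_zero hε (by rwa [one_mul])
  exact mul_nonneg (by positivity) (mollifier_nonneg _)

end Mollify

section SmoothApprox

lemma holderConjugate_six_fifths_six : (ENNReal.ofReal (6 / 5)).HolderConjugate 6 := by
  simpa using Real.HolderConjugate.ennrealOfReal (p := 6 / 5) (q := 6)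
    ((Real.holderConjugate_iff).2 ⟨by norm_num, by norm_num⟩)

/-- `w` belongs to the homogeneous Sobolev space `D^{1,2}(ℝ³)` with gradient `dw`, as witnessed by
the sequence `wn` of test functions converging to it in `L⁶`, in energy and almost everywhere. -/
structure SmoothApprox (w : E3 → ℝ) (dw : Fin 3 → E3 → ℝ) (wn : ℕ → E3 → ℝ) : Prop where
  measurable : Measurable w
  memLp : MemLp w 6
  memLp_grad : ∀ j, MemLp (dw j) 2
  contDiff : ∀ n, ContDiff ℝ ∞ (wn n)
  hasCompactSupport : ∀ n, HasCompactSupport (wn n)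
  tendsto : Tendsto (fun n => eLpNorm (wn n - w) 6) atTop (𝓝 0)
  tendsto_grad : ∀ j, Tendsto (fun n => eLpNorm (pd (wn n) j - dw j) 2) atTop (𝓝 0)
  ae_tendsto : ∀ᵐ x, Tendsto (fun n => wn n x) atTop (𝓝 (w x))

lemma eLpNorm_fderiv_le_sum_pd {w : E3 → ℝ} (hw : ContDiff ℝ 1 w) {p : ENNReal} (hp : 1 ≤ p) :
    eLpNorm (fderiv ℝ w) p ≤ ∑ j, eLpNorm (pd w j) p := by
  calc eLpNorm (fderiv ℝ w) p volume ≤ eLpNorm (∑ j, fun y => ‖pd w j y‖) p volume := by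
        refine eLpNorm_mono_real fun y => ?_
        simpa using norm_fderiv_le_sum_abs_pd w y
    _ ≤ ∑ j, eLpNorm (fun y => ‖pd w j y‖) p volume :=
        eLpNorm_sum_le (fun j _ => (continuous_pd hw j).norm.aestronglyMeasurable) hp
    _ = ∑ j, eLpNorm (pd w j) p volume := by simp only [eLpNorm_norm]

namespace SmoothApprox

variable {w : E3 → ℝ} {dw : Fin 3 → E3 → ℝ} {wn : ℕ → E3 → ℝ}

lemma contDiff_one (h : SmoothApprox w dw wn) (n : ℕ) : ContDiff ℝ 1 (wn n) :=
  (h.contDiff n).of_le (by simp)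

lemma memLp_seq (h : SmoothApprox w dw wn) (n : ℕ) (p : ENNReal) : MemLp (wn n) p :=
  (h.contDiff n).continuous.memLp_of_hasCompactSupport (h.hasCompactSupport n)

lemma memLp_pd_seq (h : SmoothApprox w dw wn) (n : ℕ) (j : Fin 3) (p : ENNReal) :
    MemLp (pd (wn n) j) p :=
  (continuous_pd (h.contDiff_one n) j).memLp_of_hasCompactSupport
    (hasCompactSupport_pd (h.hasCompactSupport n) j)

lemma locallyIntegrable (h : SmoothApprox w dw wn) : LocallyIntegrable w :=
  h.memLp.locallyIntegrable (by norm_num)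

lemma integral_mul_pd_eq_neg (h : SmoothApprox w dw wn) {ψ : E3 → ℝ} (hψ : ContDiff ℝ 1 ψ)
    (hψc : HasCompactSupport ψ) (j : Fin 3) : ∫ x, w x * pd ψ j x = -∫ x, ψ x * dw j x := by
  have := holderConjugate_six_fifths_six
  have hleft := tendsto_integral_const_mul_of_tendsto_eLpNorm (p := ENNReal.ofReal (6 / 5))
    ((continuous_pd hψ j).memLp_of_hasCompactSupport (hasCompactSupport_pd hψc j)) h.memLp
    (h.memLp_seq · 6) h.tendsto
  have hright := tendsto_integral_const_mul_of_tendsto_eLpNorm (p := 2)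
    (hψ.continuous.memLp_of_hasCompactSupport hψc) (h.memLp_grad j) (h.memLp_pd_seq · j 2)
    (h.tendsto_grad j)
  have hparts (n : ℕ) : ∫ x, pd ψ j x * wn n x = -∫ x, ψ x * pd (wn n) j x := by
    simpa only [mul_comm] using integral_mul_pd (h.contDiff_one n) hψ hψc j
  simp_rw [hparts] at hleft
  simpa only [mul_comm (w _)] using tendsto_nhds_unique hleft hright.neg

lemma eLpNorm_translate_sub_le (h : SmoothApprox w dw wn) (z : E3) :
    eLpNorm (fun y => w (y - z) - w y) 2 ≤ ‖z‖ₑ * ∑ j, eLpNorm (dw j) 2 := by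
  refine (eLpNorm_translate_sub_le_liminf h.contDiff_one h.ae_tendsto (by norm_num) (by simp)
    z).trans ?_
  gcongr
  have hlim : Tendsto (fun n => ∑ j, (eLpNorm (pd (wn n) j - dw j) 2 volume
      + eLpNorm (dw j) 2 volume)) atTop (𝓝 (∑ j, eLpNorm (dw j) 2)) := by
    simpa using tendsto_finsetSum Finset.univ fun j _ => (h.tendsto_grad j).add_const _
  rw [← hlim.liminf_eq]
  refine liminf_le_liminf (.of_forall fun n => ?_)
  refine (eLpNorm_fderiv_le_sum_pd (h.contDiff_one n) (by norm_num)).trans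
    (Finset.sum_le_sum fun j _ => ?_)
  simpa using eLpNorm_add_le ((h.memLp_pd_seq n j 2).sub (h.memLp_grad j)).1 (h.memLp_grad j).1
    (by norm_num)

lemma integrable_mul_of_continuous (h : SmoothApprox w dw wn) {f : E3 → ℝ} (hf : Continuous f)
    (hfc : HasCompactSupport f) : Integrable (fun x => f x * w x) := by
  have := holderConjugate_six_fifths_six
  exact (hf.memLp_of_hasCompactSupport (p := ENNReal.ofReal (6 / 5)) hfc).integrable_mul h.memLp

lemma integrable_mul_grad_of_continuous (h : SmoothApprox w dw wn) {f : E3 → ℝ} (hf : Continuous f)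
    (hfc : HasCompactSupport f) (j : Fin 3) : Integrable (fun x => f x * dw j x) :=
  (hf.memLp_of_hasCompactSupport (p := 2) hfc).integrable_mul (h.memLp_grad j)

end SmoothApprox

end SmoothApprox

section Renormalisation

/-- The Friedrichs commutator `(r w)_ε - r_ε w` of mollification and multiplication by `w`. -/
def mollifyCommutator (ε : ℝ) (r w : E3 → ℝ) (y : E3) : ℝ :=
  mollify ε (fun t => r t * w t) y - mollify ε r y * w y

variable {r w : E3 → ℝ} {M : ℝ} {dw : Fin 3 → E3 → ℝ} {wn : ℕ → E3 → ℝ}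

lemma locallyIntegrable_of_abs_le (hr : Measurable r) (hM : ∀ x, |r x| ≤ M) :
    LocallyIntegrable r :=
  (locallyIntegrable_const M).mono hr.aestronglyMeasurable
    (.of_forall fun x => (hM x).trans (le_abs_self M))

namespace SmoothApprox

lemma memLp_mul (hw : SmoothApprox w dw wn) (hr : Measurable r) (hM : ∀ x, |r x| ≤ M) :
    MemLp (fun x => r x * w x) 6 := by
  simpa only [mul_comm (w _)] using
    memLp_mul_of_ae_bound hw.memLp hr.aestronglyMeasurable (.of_forall hM)

lemma locallyIntegrable_mul (hw : SmoothApprox w dw wn) (hr : Measurable r)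
    (hM : ∀ x, |r x| ≤ M) : LocallyIntegrable (fun x => r x * w x) :=
  (hw.memLp_mul hr hM).locallyIntegrable (by norm_num)

lemma aestronglyMeasurable_mollifyCommutator (hw : SmoothApprox w dw wn) (hr : Measurable r)
    (hM : ∀ x, |r x| ≤ M) (ε : ℝ) : AEStronglyMeasurable (mollifyCommutator ε r w) :=
  (contDiff_mollify (hw.locallyIntegrable_mul hr hM) ε).continuous.aestronglyMeasurable.sub
    ((contDiff_mollify (locallyIntegrable_of_abs_le hr hM) ε).continuous.aestronglyMeasurable.mul
      hw.measurable.aestronglyMeasurable)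

lemma eLpNorm_mollifyCommutator_le (hw : SmoothApprox w dw wn) (hr : Measurable r)
    (hM : ∀ x, |r x| ≤ M) {ε : ℝ} (hε : 0 < ε) :
    eLpNorm (mollifyCommutator ε r w) 2
      ≤ ENNReal.ofReal M * (ENNReal.ofReal ε * ∑ j, eLpNorm (dw j) 2) :=
  eLpNorm_mollify_mul_sub_le (by norm_num) (by simp) hr hM hw.measurable hw.locallyIntegrable
    hw.eLpNorm_translate_sub_le hε

lemma tendsto_integral_mollifyCommutator_mul (hw : SmoothApprox w dw wn) (hr : Measurable r)
    (hM : ∀ x, |r x| ≤ M) {φ : ℝ → E3 → ℝ} (hφ : ∀ ε, MemLp (φ ε) 2)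
    (hlim : Tendsto (fun ε => eLpNorm (ε • φ ε) 2) (𝓝[>] 0) (𝓝 0)) :
    Tendsto (fun ε => ∫ y, mollifyCommutator ε r w y * φ ε y) (𝓝[>] 0) (𝓝 0) := by
  set A : ENNReal := ∑ j, eLpNorm (dw j) 2
  have hA : A ≠ ⊤ := ENNReal.sum_ne_top.2 fun j _ => (hw.memLp_grad j).2.ne
  have hbound (ε : ℝ) (hε : 0 < ε) : ‖∫ y, mollifyCommutator ε r w y * φ ε y‖
      ≤ (ENNReal.ofReal M * A).toReal * (eLpNorm (ε • φ ε) 2).toReal := by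
    have hcomm := hw.eLpNorm_mollifyCommutator_le hr hM hε
    have htop : ENNReal.ofReal M * (ENNReal.ofReal ε * A) ≠ ⊤ := by finiteness
    refine (abs_integral_mul_le (p := 2) (q := 2)
      ⟨hw.aestronglyMeasurable_mollifyCommutator hr hM ε, hcomm.trans_lt htop.lt_top⟩
      (hφ ε)).trans ?_
    rw [eLpNorm_const_smul, Real.enorm_of_nonneg hε.le, ← ENNReal.toReal_mul, ← ENNReal.toReal_mul]
    refine ENNReal.toReal_mono (by have := (hφ ε).2.ne; finiteness) ?_
    calc eLpNorm (mollifyCommutator ε r w) 2 volume * eLpNorm (φ ε) 2 volume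
        ≤ ENNReal.ofReal M * (ENNReal.ofReal ε * A) * eLpNorm (φ ε) 2 volume := by gcongr
      _ = ENNReal.ofReal M * A * (ENNReal.ofReal ε * eLpNorm (φ ε) 2 volume) := by ring
  refine squeeze_zero_norm' (eventually_mem_nhdsWithin.mono hbound) ?_
  simpa using ((ENNReal.tendsto_toReal ENNReal.zero_ne_top).comp hlim).const_mul
    (ENNReal.ofReal M * A).toReal

end SmoothApprox

lemma contDiff_one_of_hasDerivAt {g g' : ℝ → ℝ} (hg : ∀ s, HasDerivAt g (g' s) s)
    (hg' : Continuous g') : ContDiff ℝ 1 g :=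
  contDiff_one_iff_deriv.2 ⟨fun s => (hg s).differentiableAt, by
    rwa [funext fun s => (hg s).deriv]⟩

lemma exists_abs_le_of_continuous {b : ℝ → ℝ} (hb : Continuous b) (M : ℝ) :
    ∃ C, ∀ s, |s| ≤ M → |b s| ≤ C := by
  obtain ⟨C, hC⟩ := isCompact_Icc.exists_bound_of_continuousOn hb.continuousOn (s := Icc (-M) M)
  exact ⟨C, fun s hs => hC s (abs_le.1 hs)⟩

lemma tendsto_integral_mul_comp_mollify (hr : Measurable r) (hM : ∀ x, |r x| ≤ M) {f : E3 → ℝ}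
    (hf : Integrable f) {b : ℝ → ℝ} (hb : Continuous b) :
    Tendsto (fun ε => ∫ x, f x * b (mollify ε r x)) (𝓝[>] 0) (𝓝 (∫ x, f x * b (r x))) := by
  have hrl := locallyIntegrable_of_abs_le hr hM
  obtain ⟨C, hC⟩ := exists_abs_le_of_continuous hb M
  refine tendsto_integral_mul_of_ae_bound hf (C := C)
    (fun ε => (hb.comp (contDiff_mollify hrl ε).continuous).aestronglyMeasurable)
    (eventually_mem_nhdsWithin.mono fun ε hε => .of_forall fun x => hC _ (abs_mollify_le hM hε x))
    ?_
  filter_upwards [ae_tendsto_mollify hrl] with x hx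
  exact (hb.tendsto _).comp hx

variable {g g' H : ℝ → ℝ} {ζ : E3 → ℝ}

lemma tendsto_eLpNorm_smul_pd_mul_comp_mollify (hr : Measurable r) (hM : ∀ x, |r x| ≤ M)
    (hg : ∀ s, HasDerivAt g (g' s) s) (hg' : Continuous g') (hζ : ContDiff ℝ 1 ζ)
    (hζc : HasCompactSupport ζ) (i : Fin 3) :
    Tendsto (fun ε => eLpNorm (ε • pd (fun y => ζ y * g (mollify ε r y)) i) 2) (𝓝[>] 0)
      (𝓝 0) := by
  have hrl := locallyIntegrable_of_abs_le hr hM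
  have hgc : Continuous g := continuous_iff_continuousAt.2 fun s => (hg s).continuousAt
  have hR (ε : ℝ) : ContDiff ℝ ∞ (mollify ε r) := contDiff_mollify hrl ε
  have hψ (ε : ℝ) : ContDiff ℝ 1 (fun y => ζ y * g (mollify ε r y)) :=
    hζ.mul ((contDiff_one_of_hasDerivAt hg hg').comp ((hR ε).of_le (by simp)))
  have hpd (ε : ℝ) (y : E3) : (ε • pd (fun y => ζ y * g (mollify ε r y)) i) y
      = pd ζ i y * (ε * g (mollify ε r y))
        + ζ y * (g' (mollify ε r y) * (ε * pd (mollify ε r) i y)) := by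
    have hRy := (hR ε).differentiable (by simp) y
    rw [Pi.smul_apply, smul_eq_mul, pd_mul_comp (hζ.differentiable one_ne_zero y) hRy (hg _)]
    ring
  obtain ⟨C, hC⟩ := exists_abs_le_of_continuous hgc M
  obtain ⟨C', hC'⟩ := exists_abs_le_of_continuous hg' M
  set K := M * ∫ x, |pd mollifier i x|
  refine tendsto_eLpNorm_zero_of_dominated (g := fun y => ‖pd ζ i y‖ * C + ‖ζ y‖ * (C' * K))
    two_ne_zero (by simp) (fun ε => ((continuous_pd (hψ ε) i).const_smul ε).aestronglyMeasurable)
    ?_ ?_ ?_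
  · exact (((continuous_pd hζ i).memLp_of_hasCompactSupport
      (hasCompactSupport_pd hζc i)).norm.mul_const C).add
        ((hζ.continuous.memLp_of_hasCompactSupport hζc).norm.mul_const _)
  · filter_upwards [eventually_mem_nhdsWithin, nhdsWithin_le_nhds (Iic_mem_nhds one_pos)]
      with ε (hε : 0 < ε) (hε1 : ε ≤ 1)
    refine .of_forall fun y => ?_
    have hRM := abs_mollify_le hM hε y
    have hC'0 : 0 ≤ C' := (abs_nonneg _).trans (hC' _ hRM)
    rw [hpd]
    refine (abs_add_le _ _).trans ?_
    rw [abs_mul, abs_mul ε, abs_of_pos hε, abs_mul (ζ y), abs_mul (g' _), Real.norm_eq_abs,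
      Real.norm_eq_abs]
    gcongr
    · exact (mul_le_of_le_one_left (abs_nonneg _) hε1).trans (hC _ hRM)
    · exact hC' _ hRM
    · exact abs_mul_pd_mollify_le hrl hM hε i y
  · filter_upwards [ae_tendsto_mollify hrl, ae_tendsto_mul_pd_mollify hrl i] with y hRy hdRy
    simp_rw [hpd]
    simpa using ((tendsto_nhdsWithin_of_tendsto_nhds tendsto_id).mul
        ((hgc.tendsto _).comp hRy)).const_mul (pd ζ i y) |>.add
      ((((hg'.tendsto _).comp hRy).mul hdRy).const_mul (ζ y))

namespace SmoothApprox

lemma integrable_mollifyCommutator_mul (hw : SmoothApprox w dw wn) (hr : Measurable r)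
    (hM : ∀ x, |r x| ≤ M) {φ : E3 → ℝ} (hφ : Continuous φ) (hφc : HasCompactSupport φ) (ε : ℝ) :
    Integrable fun x => mollifyCommutator ε r w x * φ x := by
  have hR := contDiff_mollify (locallyIntegrable_of_abs_le hr hM) ε
  have hm := contDiff_mollify (hw.locallyIntegrable_mul hr hM) ε
  refine (((hm.continuous.mul hφ).integrable_of_hasCompactSupport hφc.mul_left).sub
    (hw.integrable_mul_of_continuous (hR.continuous.mul hφ) hφc.mul_left)).congr
      (.of_forall fun x => ?_)
  simp only [mollifyCommutator, Pi.sub_apply, Pi.mul_apply]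
  ring

lemma integral_mollify_mul_pd_eq (hw : SmoothApprox w dw wn) (hr : Measurable r)
    (hM : ∀ x, |r x| ≤ M) (hg : ∀ s, HasDerivAt g (g' s) s) (hg' : Continuous g')
    (hH : ∀ s, HasDerivAt H (s * g' s) s) (hζ : ContDiff ℝ 1 ζ) (hζc : HasCompactSupport ζ)
    (ε : ℝ) (i : Fin 3) :
    ∫ x, mollify ε (fun t => r t * w t) x * pd (fun y => ζ y * g (mollify ε r y)) i x
      = (∫ x, pd ζ i x * w x * (mollify ε r x * g (mollify ε r x) - H (mollify ε r x)))
        - (∫ x, ζ x * dw i x * H (mollify ε r x))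
        + ∫ x, mollifyCommutator ε r w x * pd (fun y => ζ y * g (mollify ε r y)) i x := by
  set R := mollify ε r
  have hR : ContDiff ℝ 1 R := (contDiff_mollify (locallyIntegrable_of_abs_le hr hM) ε).of_le
    (by simp)
  have hgR : ContDiff ℝ 1 (fun y => g (R y)) := (contDiff_one_of_hasDerivAt hg hg').comp hR
  have hHR : ContDiff ℝ 1 (fun y => H (R y)) :=
    (contDiff_one_of_hasDerivAt hH (continuous_id.mul hg')).comp hR
  have hχc : HasCompactSupport (fun y => ζ y * H (R y)) := hζc.mul_right
  have hflux : Integrable fun x => pd ζ i x * (R x * g (R x) - H (R x)) * w x :=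
    hw.integrable_mul_of_continuous ((continuous_pd hζ i).mul ((hR.mul hgR).sub hHR).continuous)
      (hasCompactSupport_pd hζc i).mul_right
  have hdiv : Integrable fun x => pd (fun y => ζ y * H (R y)) i x * w x :=
    hw.integrable_mul_of_continuous (continuous_pd (hζ.mul hHR) i) (hasCompactSupport_pd hχc i)
  have hcomm := hw.integrable_mollifyCommutator_mul hr hM (continuous_pd (hζ.mul hgR) i)
    (hasCompactSupport_pd hζc.mul_right i) ε
  have hweak : ∫ x, ζ x * dw i x * H (R x) = -∫ x, pd (fun y => ζ y * H (R y)) i x * w x := by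
    rw [← neg_eq_iff_eq_neg]
    simpa only [mul_right_comm, mul_comm (w _)] using
      (hw.integral_mul_pd_eq_neg (hζ.mul hHR) hχc i).symm
  simp_rw [hweak, sub_neg_eq_add, mul_right_comm _ (w _)]
  rw [← integral_add hflux hdiv, ← integral_add (by exact hflux.add hdiv) hcomm]
  refine integral_congr_ae (.of_forall fun x => ?_)
  have hζx := hζ.differentiable one_ne_zero x
  have hRx := hR.differentiable one_ne_zero x
  simp only [mollifyCommutator, pd_mul_comp hζx hRx (hg _), pd_mul_comp hζx hRx (hH _)]
  ring

end SmoothApprox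

/-- A bounded density `r` transported by a velocity field `v ∈ D^{1,2}(ℝ³)`, component `v i` having
gradient `dv i` and being approximated by the test functions `vn i`, with `div (r v) = 0`. -/
structure SteadyFlow (r : E3 → ℝ) (M : ℝ) (v : Fin 3 → E3 → ℝ) (dv : Fin 3 → Fin 3 → E3 → ℝ)
    (vn : Fin 3 → ℕ → E3 → ℝ) : Prop where
  measurable : Measurable r
  abs_le : ∀ x, |r x| ≤ M
  approx : ∀ i, SmoothApprox (v i) (dv i) (vn i)
  mass : ∀ φ, ContDiff ℝ ∞ φ → HasCompactSupport φ → ∑ i, ∫ x, r x * v i x * pd φ i x = 0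

namespace SteadyFlow

variable {v : Fin 3 → E3 → ℝ} {dv : Fin 3 → Fin 3 → E3 → ℝ} {vn : Fin 3 → ℕ → E3 → ℝ}

lemma sum_pd_mollify_eq_zero (h : SteadyFlow r M v dv vn) (ε : ℝ) (y : E3) :
    ∑ i, pd (mollify ε (fun t => r t * v i t)) i y = 0 := by
  have hK := contDiff_rescale contDiff_mollifier ε
  have hmass := h.mass (fun t => rescale mollifier ε (y - t)) (hK.comp (by fun_prop))
    ((hasCompactSupport_rescale hasCompactSupport_mollifier ε).comp_homeomorph
      (Homeomorph.subLeft y))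
  simp_rw [pd_comp_sub_left (hK.differentiable (by simp) _), mul_neg, integral_neg,
    Finset.sum_neg_distrib, neg_eq_zero] at hmass
  simpa only [pd_mollify ((h.approx _).locallyIntegrable_mul h.measurable h.abs_le),
    convolution_lsmul, smul_eq_mul] using hmass

lemma sum_integral_mollify_mul_pd_eq_zero (h : SteadyFlow r M v dv vn) (ε : ℝ) {ψ : E3 → ℝ}
    (hψ : ContDiff ℝ 1 ψ) (hψc : HasCompactSupport ψ) :
    ∑ i, ∫ y, mollify ε (fun t => r t * v i t) y * pd ψ i y = 0 := by
  have hm (i : Fin 3) : ContDiff ℝ 1 (mollify ε (fun t => r t * v i t)) :=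
    (contDiff_mollify ((h.approx i).locallyIntegrable_mul h.measurable h.abs_le) ε).of_le (by simp)
  simp_rw [fun i => integral_mul_pd (hm i) hψ hψc i]
  have hint (i : Fin 3) :
      Integrable fun y => pd (mollify ε (fun t => r t * v i t)) i y * ψ y :=
    ((continuous_pd (hm i) i).mul hψ.continuous).integrable_of_hasCompactSupport hψc.mul_left
  rw [Finset.sum_neg_distrib, ← integral_finsetSum _ fun i _ => hint i]
  simp [← Finset.sum_mul, h.sum_pd_mollify_eq_zero ε]

theorem sum_integral_renormalised_eq (h : SteadyFlow r M v dv vn)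
    (hg : ∀ s, HasDerivAt g (g' s) s) (hg' : Continuous g')
    (hH : ∀ s, HasDerivAt H (s * g' s) s) (hζ : ContDiff ℝ 1 ζ) (hζc : HasCompactSupport ζ) :
    ∑ i, ∫ x, pd ζ i x * v i x * (r x * g (r x) - H (r x))
      = ∑ i, ∫ x, ζ x * dv i i x * H (r x) := by
  have hgc := contDiff_one_of_hasDerivAt hg hg'
  have hHc := contDiff_one_of_hasDerivAt hH (continuous_id.mul hg')
  have hψ (ε : ℝ) : ContDiff ℝ 1 (fun y => ζ y * g (mollify ε r y)) :=
    hζ.mul (hgc.comp ((contDiff_mollify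
      (locallyIntegrable_of_abs_le h.measurable h.abs_le) ε).of_le (by simp)))
  have hflux (i : Fin 3) := tendsto_integral_mul_comp_mollify h.measurable h.abs_le
    ((h.approx i).integrable_mul_of_continuous (continuous_pd hζ i) (hasCompactSupport_pd hζc i))
    ((continuous_id.mul hgc.continuous).sub hHc.continuous)
  have hdiv (i : Fin 3) := tendsto_integral_mul_comp_mollify h.measurable h.abs_le
    ((h.approx i).integrable_mul_grad_of_continuous hζ.continuous hζc i) hHc.continuous
  have hcomm (i : Fin 3) := (h.approx i).tendsto_integral_mollifyCommutator_mul h.measurable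
    h.abs_le (fun ε => (continuous_pd (hψ ε) i).memLp_of_hasCompactSupport
      (hasCompactSupport_pd hζc.mul_right i))
    (tendsto_eLpNorm_smul_pd_mul_comp_mollify h.measurable h.abs_le hg hg' hζ hζc i)
  have hlim := tendsto_finsetSum Finset.univ fun i _ => ((hflux i).sub (hdiv i)).add (hcomm i)
  have hzero := tendsto_nhds_unique (hlim.congr fun ε => (Finset.sum_congr rfl fun i _ =>
      ((h.approx i).integral_mollify_mul_pd_eq h.measurable h.abs_le hg hg' hH hζ hζc ε i).symm
      ).trans
    (h.sum_integral_mollify_mul_pd_eq_zero ε (hψ ε) hζc.mul_right)) tendsto_const_nhds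
  simp only [add_zero, Finset.sum_sub_distrib] at hzero
  exact sub_eq_zero.1 hzero

end SteadyFlow

end Renormalisation

section Pressure

lemma contDiffOn_one_of_hasDerivAt {f f' : ℝ → ℝ} {s : Set ℝ} (hs : IsOpen s)
    (hf : ∀ x ∈ s, HasDerivAt f (f' x) x) (hf' : ContinuousOn f' s) : ContDiffOn ℝ 1 f s :=
  (contDiffOn_one_iff_derivWithin hs.uniqueDiffOn).2
    ⟨fun x hx => (hf x hx).differentiableAt.differentiableWithinAt,
      hf'.congr fun x hx => (hf x hx).hasDerivWithinAt.derivWithin (hs.uniqueDiffWithinAt hx)⟩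

lemma contDiff_of_contDiffOn_Ioi {f : ℝ → ℝ} {n : WithTop ℕ∞} {δ : ℝ} (hδ : 0 < δ)
    (hf : ContDiffOn ℝ n f (Ioi 0)) (hf0 : ∀ s ≤ δ, f s = 0) : ContDiff ℝ n f := by
  refine contDiff_iff_contDiffAt.2 fun s => ?_
  rcases lt_or_ge s δ with hs | hs
  · refine (contDiffAt_const (c := (0 : ℝ))).congr_of_eventuallyEq ?_
    filter_upwards [Iio_mem_nhds hs] with t ht using hf0 t (le_of_lt ht)
  · exact hf.contDiffAt (Ioi_mem_nhds (hδ.trans_le hs))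

lemma exists_hasDerivAt_mul_of_eq_zero {H : ℝ → ℝ} {δ : ℝ} (hδ : 0 < δ) (hH : ContDiff ℝ 1 H)
    (hH0 : ∀ s ≤ δ, H s = 0) :
    ∃ g g' : ℝ → ℝ, (∀ s, HasDerivAt g (g' s) s) ∧ Continuous g' ∧ (∀ s ≤ δ, g s = 0) ∧
      ∀ s, HasDerivAt H (s * g' s) s := by
  have hHc : Continuous (deriv H) := hH.continuous_deriv le_rfl
  have hderiv (s : ℝ) (hs : s ≤ δ) : deriv H s = 0 := by
    have hlt : EqOn (deriv H) (fun _ => 0) (Iio δ) := fun t ht => by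
      have : H =ᶠ[𝓝 t] fun _ => 0 := by
        filter_upwards [Iio_mem_nhds ht] with t' ht' using hH0 t' (le_of_lt ht')
      rw [this.deriv_eq, deriv_const]
    exact hlt.closure hHc continuous_const (by rwa [closure_Iio])
  have hcont : Continuous fun s => deriv H s / s := by
    refine (contDiff_of_contDiffOn_Ioi (n := 0) hδ ?_ fun s hs => ?_).continuous
    · exact contDiffOn_zero.2 (hHc.continuousOn.div continuousOn_id fun s hs => ne_of_gt hs)
    · rw [hderiv s hs, zero_div]
  refine ⟨fun s => ∫ t in δ..s, deriv H t / t, fun s => deriv H s / s,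
    fun s => (hcont.integral_hasStrictDerivAt δ s).hasDerivAt, hcont, fun s hs => ?_, fun s => ?_⟩
  · refine intervalIntegral.integral_zero_ae (.of_forall fun t ht => ?_)
    rw [uIoc_of_ge hs] at ht
    rw [hderiv t ht.2, zero_div]
  · have hs : s * (deriv H s / s) = deriv H s := by
      rcases eq_or_ne s 0 with rfl | hs
      · rw [zero_mul, hderiv 0 hδ.le]
      · exact mul_div_cancel₀ _ hs
    rw [hs]
    exact (hH.differentiable one_ne_zero s).hasDerivAt

/-- A smooth truncation of the identity of `ℝ`, vanishing for `|y| ≤ κ`. -/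
def truncate (κ y : ℝ) : ℝ := y * Real.smoothTransition ((y / κ) ^ 2 - 1)

lemma contDiff_truncate (κ : ℝ) : ContDiff ℝ ∞ (truncate κ) :=
  contDiff_id.mul (Real.smoothTransition.contDiff.comp (by fun_prop))

lemma truncate_eq_zero {κ y : ℝ} (hy : |y| ≤ κ) : truncate κ y = 0 := by
  have : (y / κ) ^ 2 ≤ 1 := by
    rw [sq_le_one_iff_abs_le_one, abs_div]
    exact div_le_one_of_le₀ (hy.trans (le_abs_self κ)) (abs_nonneg κ)
  rw [truncate, Real.smoothTransition.zero_of_nonpos (by linarith), mul_zero]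

lemma abs_truncate_le (κ y : ℝ) : |truncate κ y| ≤ |y| := by
  rw [truncate, abs_mul, abs_of_nonneg (Real.smoothTransition.nonneg _)]
  exact mul_le_of_le_one_right (abs_nonneg y) (Real.smoothTransition.le_one _)

lemma tendsto_truncate (y : ℝ) : Tendsto (fun κ => truncate κ y) (𝓝[>] 0) (𝓝 y) := by
  rcases eq_or_ne y 0 with rfl | hy
  · simp [truncate]
  · have hlim : Tendsto (fun κ : ℝ => y ^ 2 * κ⁻¹ ^ 2) (𝓝[>] 0) atTop :=
      ((tendsto_pow_atTop two_ne_zero).comp tendsto_inv_nhdsGT_zero).const_mul_atTop (by positivity)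
    refine tendsto_const_nhds.congr' ?_
    filter_upwards [hlim.eventually_ge_atTop 2] with κ hκ
    rw [truncate, div_eq_mul_inv, mul_pow, Real.smoothTransition.one_of_one_le (by linarith),
      mul_one]

/-- A smooth function with values in `[0, 1]`, equal to `1` on the unit ball and supported in the
ball of radius `2`. -/
def unitBump : ContDiffBump (0 : E3) := ⟨1, 2, one_pos, one_lt_two⟩

/-- Smooth compactly supported functions tending to `1` everywhere as `ε → 0`. -/
def cutoff (ε : ℝ) (x : E3) : ℝ := unitBump (ε • x)

lemma contDiff_cutoff (ε : ℝ) : ContDiff ℝ 1 (cutoff ε) :=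
  unitBump.contDiff.comp (by fun_prop)

lemma hasCompactSupport_cutoff {ε : ℝ} (hε : ε ≠ 0) : HasCompactSupport (cutoff ε) :=
  unitBump.hasCompactSupport.comp_smul hε

lemma abs_cutoff_le_one (ε : ℝ) (x : E3) : |cutoff ε x| ≤ 1 := by
  rw [cutoff, abs_of_nonneg unitBump.nonneg]
  exact unitBump.le_one

lemma tendsto_cutoff (x : E3) : Tendsto (fun ε => cutoff ε x) (𝓝[>] 0) (𝓝 1) := by
  have hcont : Continuous fun ε => cutoff ε x := unitBump.continuous.comp (by fun_prop)
  have h0 : cutoff 0 x = 1 := unitBump.one_of_mem_closedBall (by simp [unitBump])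
  exact h0 ▸ hcont.continuousWithinAt

lemma pd_comp_smul (f : E3 → ℝ) (c : ℝ) (i : Fin 3) (x : E3) :
    pd (fun y => f (c • y)) i x = c * pd f i (c • x) := by
  simp [pd, fderiv_comp_smul]

lemma exists_abs_pd_cutoff_le (i : Fin 3) : ∃ C, ∀ ε x, |pd (cutoff ε) i x| ≤ |ε| * C := by
  have hb : ContDiff ℝ 1 (unitBump : E3 → ℝ) := unitBump.contDiff
  obtain ⟨C, hC⟩ := (hasCompactSupport_pd unitBump.hasCompactSupport i).exists_bound_of_continuous
    (continuous_pd hb i)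
  refine ⟨C, fun ε x => ?_⟩
  unfold cutoff
  rw [pd_comp_smul, abs_mul]
  exact mul_le_mul_of_nonneg_left (hC _) (abs_nonneg ε)

lemma tendsto_pd_cutoff (i : Fin 3) (x : E3) :
    Tendsto (fun ε => pd (cutoff ε) i x) (𝓝[>] 0) (𝓝 0) := by
  obtain ⟨C, hC⟩ := exists_abs_pd_cutoff_le i
  refine tendsto_nhdsWithin_of_tendsto_nhds (squeeze_zero_norm (fun ε => hC ε x) ?_)
  simpa using (continuous_abs.tendsto (0 : ℝ)).mul_const C

variable {r : E3 → ℝ} {M : ℝ} {v : Fin 3 → E3 → ℝ} {dv : Fin 3 → Fin 3 → E3 → ℝ}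
  {vn : Fin 3 → ℕ → E3 → ℝ}

lemma memLp_comp_of_eq_zero {b : ℝ → ℝ} {δ : ℝ} (hr : Measurable r) (hM : ∀ x, |r x| ≤ M)
    (hfin : volume {x | δ < r x} ≠ ⊤) (hb : Continuous b) (hb0 : ∀ s ≤ δ, b s = 0)
    (q : ENNReal) : MemLp (fun x => b (r x)) q := by
  obtain ⟨C, hC⟩ := exists_abs_le_of_continuous hb M
  have hset : MeasurableSet {x | δ < r x} := measurableSet_lt measurable_const hr
  refine (memLp_mul_of_ae_bound (memLp_indicator_const q hset (1 : ℝ) (Or.inr hfin))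
    (hb.measurable.comp hr).aestronglyMeasurable (.of_forall fun x => hC (r x) (hM x))).ae_eq
    (.of_forall fun x => ?_)
  by_cases hx : δ < r x
  · simp [indicator, hx]
  · simp [indicator, hx, hb0 _ (not_lt.1 hx)]

namespace SteadyFlow

lemma sum_integral_div_mul_comp_eq_zero (h : SteadyFlow r M v dv vn) {H : ℝ → ℝ} {δ : ℝ}
    (hδ : 0 < δ) (hfin : volume {x | δ < r x} ≠ ⊤) (hH : ContDiff ℝ 1 H)
    (hH0 : ∀ s ≤ δ, H s = 0) : ∑ i, ∫ x, H (r x) * dv i i x = 0 := by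
  have := holderConjugate_six_fifths_six
  obtain ⟨g, g', hg, hg', hg0, hHg⟩ := exists_hasDerivAt_mul_of_eq_zero hδ hH hH0
  have hflux_cont : Continuous fun s => s * g s - H s :=
    (continuous_id.mul (contDiff_one_of_hasDerivAt hg hg').continuous).sub hH.continuous
  have hflux_memLp := memLp_comp_of_eq_zero h.measurable h.abs_le hfin hflux_cont
    (fun s hs => by rw [hg0 s hs, hH0 s hs, mul_zero, sub_zero]) (ENNReal.ofReal (6 / 5))
  have hH_memLp := memLp_comp_of_eq_zero h.measurable h.abs_le hfin hH.continuous hH0 2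
  have hflux (i : Fin 3) : Tendsto
      (fun ε => ∫ x, (r x * g (r x) - H (r x)) * v i x * pd (cutoff ε) i x) (𝓝[>] 0) (𝓝 0) := by
    obtain ⟨C, hC⟩ := exists_abs_pd_cutoff_le i
    have hC0 : 0 ≤ C := by simpa using (abs_nonneg _).trans (hC 1 0)
    have hbound : ∀ᶠ ε in 𝓝[>] (0 : ℝ), ∀ᵐ x, |pd (cutoff ε) i x| ≤ C := by
      filter_upwards [Ioo_mem_nhdsGT one_pos] with ε hε
      refine .of_forall fun x => (hC ε x).trans (mul_le_of_le_one_left hC0 ?_)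
      rw [abs_of_pos hε.1]
      exact hε.2.le
    simpa using tendsto_integral_mul_of_ae_bound (hflux_memLp.integrable_mul (h.approx i).memLp)
      (fun ε => (continuous_pd (contDiff_cutoff ε) i).aestronglyMeasurable) hbound
      (.of_forall (tendsto_pd_cutoff i))
  have hdiv (i : Fin 3) : Tendsto (fun ε => ∫ x, H (r x) * dv i i x * cutoff ε x) (𝓝[>] 0)
      (𝓝 (∫ x, H (r x) * dv i i x)) := by
    simpa using tendsto_integral_mul_of_ae_bound
      (hH_memLp.integrable_mul ((h.approx i).memLp_grad i))
      (fun ε => (contDiff_cutoff ε).continuous.aestronglyMeasurable)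
      (.of_forall fun ε => .of_forall (abs_cutoff_le_one ε)) (.of_forall tendsto_cutoff)
  have hflux_sum := tendsto_finsetSum Finset.univ fun i _ => hflux i
  rw [Finset.sum_const_zero] at hflux_sum
  refine tendsto_nhds_unique (tendsto_finsetSum Finset.univ fun i _ => hdiv i)
    (hflux_sum.congr' (eventually_mem_nhdsWithin.mono fun ε (hε : 0 < ε) => ?_))
  have := h.sum_integral_renormalised_eq hg hg' hHg (contDiff_cutoff ε)
    (hasCompactSupport_cutoff hε.ne')
  simpa only [mul_comm, mul_left_comm, mul_assoc] using this

lemma sum_integral_truncate_comp_eq_zero (h : SteadyFlow r M v dv vn) (hr0 : ∀ x, 0 ≤ r x)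
    (hfin : ∀ δ > 0, volume {x | δ < r x} ≠ ⊤) {p : ℝ → ℝ} (hp : ContinuousOn p (Ici 0))
    (hp1 : ContDiffOn ℝ 1 p (Ioi 0)) (hp0 : p 0 = 0) {κ : ℝ} (hκ : 0 < κ) :
    ∑ i, ∫ x, truncate κ (p (r x)) * dv i i x = 0 := by
  have hpmax : Continuous fun s => p (max s 0) :=
    hp.comp_continuous (by fun_prop) fun s => le_max_right s 0
  obtain ⟨δ, hδ, hsmall⟩ := Metric.continuousAt_iff.1 (hpmax.continuousAt (x := 0)) κ hκ
  have hzero (s : ℝ) (hs : s ≤ δ / 2) : truncate κ (p (max s 0)) = 0 := by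
    refine truncate_eq_zero ?_
    have := hsmall (x := max s 0) (by
      rw [Real.dist_eq, sub_zero, abs_of_nonneg (le_max_right s 0)]
      exact max_lt (by linarith) hδ)
    simpa [hp0] using this.le
  have hsmooth : ContDiffOn ℝ 1 (fun s => truncate κ (p (max s 0))) (Ioi 0) :=
    ((contDiff_truncate κ).of_le (by simp)).comp_contDiffOn
      (hp1.congr fun s hs => by rw [max_eq_left (le_of_lt hs)])
  have := h.sum_integral_div_mul_comp_eq_zero (half_pos hδ) (hfin _ (half_pos hδ))
    (contDiff_of_contDiffOn_Ioi (half_pos hδ) hsmooth hzero) hzero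
  simpa only [max_eq_left (hr0 _)] using this

theorem sum_integral_pressure_mul_div_eq_zero (h : SteadyFlow r M v dv vn) (hr0 : ∀ x, 0 ≤ r x)
    (hfin : ∀ δ > 0, volume {x | δ < r x} ≠ ⊤) {p : ℝ → ℝ} (hp : ContinuousOn p (Ici 0))
    (hp1 : ContDiffOn ℝ 1 p (Ioi 0)) (hp0 : p 0 = 0) (hpL2 : MemLp (fun x => p (r x)) 2) :
    ∑ i, ∫ x, p (r x) * dv i i x = 0 := by
  have hlim (i : Fin 3) : Tendsto (fun κ => ∫ x, truncate κ (p (r x)) * dv i i x) (𝓝[>] 0)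
      (𝓝 (∫ x, p (r x) * dv i i x)) := by
    refine tendsto_integral_filter_of_dominated_convergence (fun x => ‖p (r x) * dv i i x‖)
      (.of_forall fun κ => ?_) (.of_forall fun κ => .of_forall fun x => ?_)
      (hpL2.integrable_mul ((h.approx i).memLp_grad i)).norm
      (.of_forall fun x => (tendsto_truncate _).mul_const _)
    · exact ((contDiff_truncate κ).continuous.comp_aestronglyMeasurable hpL2.1).mul
        ((h.approx i).memLp_grad i).1
    · rw [norm_mul, norm_mul]
      exact mul_le_mul_of_nonneg_right (abs_truncate_le κ _) (norm_nonneg _)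
  refine tendsto_nhds_unique (tendsto_finsetSum Finset.univ fun i _ => hlim i)
    (tendsto_const_nhds.congr' (eventually_mem_nhdsWithin.mono fun κ (hκ : 0 < κ) => ?_))
  exact (h.sum_integral_truncate_comp_eq_zero hr0 hfin hp hp1 hp0 hκ).symm

end SteadyFlow

end Pressure

section Dissipation

lemma integral_pd_mul_pd_comm {a b : E3 → ℝ} (ha : ContDiff ℝ ∞ a) (hb : ContDiff ℝ ∞ b)
    (hbc : HasCompactSupport b) (i j : Fin 3) :
    ∫ x, pd a j x * pd b i x = ∫ x, pd a i x * pd b j x := by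
  have hb1 : ContDiff ℝ 1 b := hb.of_le (by simp)
  have hpd (k : Fin 3) : ContDiff ℝ 1 (pd a k) := (contDiff_pd ha k).of_le (by simp)
  rw [integral_mul_pd (hpd j) hb1 hbc i, integral_mul_pd (hpd i) hb1 hbc j]
  simp_rw [pd_comm ha j i]

lemma exists_eLpNorm_six_le_sum_pd : ∃ C : NNReal, ∀ {w : E3 → ℝ}, ContDiff ℝ 1 w →
    HasCompactSupport w → eLpNorm w 6 ≤ C * ∑ j, eLpNorm (pd w j) 2 := by
  refine ⟨eLpNormLESNormFDerivOfEqInnerConst (volume : Measure E3) (2 : NNReal),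
    fun {w} hw hwc => ?_⟩
  refine (eLpNorm_le_eLpNorm_fderiv_of_eq_inner (μ := volume) (p := 2) (p' := 6)
    hw hwc (by norm_num) (by simp) (by simp; norm_num)).trans ?_
  gcongr
  exact eLpNorm_fderiv_le_sum_pd hw one_le_two

namespace SmoothApprox

variable {w₁ w₂ : E3 → ℝ} {dw₁ dw₂ : Fin 3 → E3 → ℝ} {wn₁ wn₂ : ℕ → E3 → ℝ}

lemma tendsto_integral_pd_mul_pd (h₁ : SmoothApprox w₁ dw₁ wn₁) (h₂ : SmoothApprox w₂ dw₂ wn₂)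
    (j l : Fin 3) : Tendsto (fun n => ∫ x, pd (wn₁ n) j x * pd (wn₂ n) l x) atTop
      (𝓝 (∫ x, dw₁ j x * dw₂ l x)) :=
  tendsto_integral_mul_of_tendsto_eLpNorm (p := 2) (q := 2) (h₁.memLp_grad j)
    (h₁.memLp_pd_seq · j 2) (h₁.tendsto_grad j) (h₂.memLp_grad l) (h₂.memLp_pd_seq · l 2)
    (h₂.tendsto_grad l)

lemma integral_grad_mul_grad_comm (h₁ : SmoothApprox w₁ dw₁ wn₁) (h₂ : SmoothApprox w₂ dw₂ wn₂)
    (i j : Fin 3) : ∫ x, dw₁ j x * dw₂ i x = ∫ x, dw₁ i x * dw₂ j x :=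
  tendsto_nhds_unique (h₁.tendsto_integral_pd_mul_pd h₂ j i)
    ((h₁.tendsto_integral_pd_mul_pd h₂ i j).congr fun n =>
      (integral_pd_mul_pd_comm (h₁.contDiff n) (h₂.contDiff n) (h₂.hasCompactSupport n) i j).symm)

lemma exists_eLpNorm_six_le (h : SmoothApprox w₁ dw₁ wn₁) :
    ∃ C : NNReal, eLpNorm w₁ 6 ≤ C * ∑ j, eLpNorm (dw₁ j) 2 := by
  obtain ⟨C, hsobolev⟩ := exists_eLpNorm_six_le_sum_pd
  refine ⟨C, ?_⟩
  have hbound (n : ℕ) : eLpNorm w₁ 6 ≤ eLpNorm (wn₁ n - w₁) 6 volume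
      + C * ∑ j, (eLpNorm (pd (wn₁ n) j - dw₁ j) 2 volume + eLpNorm (dw₁ j) 2 volume) := by
    calc eLpNorm w₁ 6 volume = eLpNorm (wn₁ n - (wn₁ n - w₁)) 6 volume := by rw [sub_sub_cancel]
      _ ≤ eLpNorm (wn₁ n) 6 volume + eLpNorm (wn₁ n - w₁) 6 volume :=
        eLpNorm_sub_le (h.memLp_seq n 6).1 ((h.memLp_seq n 6).sub h.memLp).1 (by norm_num)
      _ ≤ _ := by
        rw [add_comm]
        gcongr
        refine (hsobolev (h.contDiff_one n) (h.hasCompactSupport n)).trans ?_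
        gcongr with j
        simpa using eLpNorm_add_le ((h.memLp_pd_seq n j 2).sub (h.memLp_grad j)).1
          (h.memLp_grad j).1 (by norm_num)
  refine ge_of_tendsto' (x := (atTop : Filter ℕ)) ?_ hbound
  have hgrad := tendsto_finsetSum Finset.univ fun j _ =>
    (h.tendsto_grad j).add_const (eLpNorm (dw₁ j) 2)
  simpa using h.tendsto.add (ENNReal.Tendsto.const_mul hgrad (Or.inr ENNReal.coe_ne_top))

lemma ae_eq_zero (h : SmoothApprox w₁ dw₁ wn₁) (hgrad : ∀ j, dw₁ j =ᵐ[volume] 0) :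
    w₁ =ᵐ[volume] 0 := by
  refine (eLpNorm_eq_zero_iff (p := 6) h.memLp.1 (by norm_num)).1 (le_antisymm ?_ zero_le)
  obtain ⟨C, hC⟩ := h.exists_eLpNorm_six_le
  simpa [eLpNorm_congr_ae (hgrad _)] using hC

end SmoothApprox

lemma sum_Smat_mul_self (μ η : ℝ) (A : Fin 3 → Fin 3 → ℝ) :
    ∑ i, ∑ j, Smat μ η A i j * A i j = ∑ i, ∑ j,
      (μ * (A i j * A i j) + μ * (A i j * A j i) + (η - 2 / 3 * μ) * (A i i * A j j)) := by
  simp [Smat, Fin.sum_univ_three]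
  ring

variable {v : Fin 3 → E3 → ℝ} {dv : Fin 3 → Fin 3 → E3 → ℝ} {vn : Fin 3 → ℕ → E3 → ℝ} {μ η : ℝ}

lemma integral_Smat_mul_grad (hv : ∀ i, SmoothApprox (v i) (dv i) (vn i)) :
    ∫ x, ∑ i, ∑ j, Smat μ η (fun k l => dv k l x) i j * dv i j x
      = μ * (∑ i, ∑ j, ∫ x, dv i j x * dv i j x)
        + (μ / 3 + η) * ∫ x, (∑ i, dv i i x) * ∑ j, dv j j x := by
  have hint (i j k l : Fin 3) : Integrable fun x => dv i j x * dv k l x :=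
    ((hv i).memLp_grad j).integrable_mul ((hv k).memLp_grad l)
  have hterm (i j : Fin 3) : ∫ x, (μ * (dv i j x * dv i j x) + μ * (dv i j x * dv j i x)
      + (η - 2 / 3 * μ) * (dv i i x * dv j j x))
      = μ * (∫ x, dv i j x * dv i j x) + (μ / 3 + η) * ∫ x, dv i i x * dv j j x := by
    rw [integral_add (by exact ((hint ..).const_mul _).add ((hint ..).const_mul _))
        ((hint ..).const_mul _),
      integral_add ((hint ..).const_mul _) ((hint ..).const_mul _), integral_const_mul,
      integral_const_mul, integral_const_mul, (hv i).integral_grad_mul_grad_comm (hv j) i j]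
    ring
  have hterm_int (i j : Fin 3) : Integrable fun x => μ * (dv i j x * dv i j x)
      + μ * (dv i j x * dv j i x) + (η - 2 / 3 * μ) * (dv i i x * dv j j x) :=
    (((hint ..).const_mul _).add ((hint ..).const_mul _)).add ((hint ..).const_mul _)
  simp_rw [sum_Smat_mul_self, Finset.sum_mul_sum]
  rw [integral_finsetSum _ fun i _ => integrable_finsetSum _ fun j _ => hterm_int i j,
    integral_finsetSum _ fun i _ => integrable_finsetSum _ fun j _ => hint i i j j]
  simp_rw [fun i => integral_finsetSum Finset.univ fun j _ => hterm_int i j, hterm,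
    fun i => integral_finsetSum Finset.univ fun j _ => hint i i j j, Finset.sum_add_distrib,
    Finset.mul_sum]

theorem ae_eq_zero_of_integral_Smat_mul_grad (hμ : 0 < μ) (hη : 0 ≤ η)
    (hv : ∀ i, SmoothApprox (v i) (dv i) (vn i))
    (hS : ∫ x, ∑ i, ∑ j, Smat μ η (fun k l => dv k l x) i j * dv i j x = 0) (i : Fin 3) :
    v i =ᵐ[volume] 0 := by
  have hsq (k l : Fin 3) : 0 ≤ ∫ x, dv k l x * dv k l x :=
    integral_nonneg fun x => mul_self_nonneg _
  have hsum : 0 ≤ ∑ k, ∑ l, ∫ x, dv k l x * dv k l x :=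
    Finset.sum_nonneg fun k _ => Finset.sum_nonneg fun l _ => hsq k l
  have hdiv : 0 ≤ ∫ x, (∑ k, dv k k x) * ∑ l, dv l l x :=
    integral_nonneg fun x => mul_self_nonneg _
  have hzero : ∑ k, ∑ l, ∫ x, dv k l x * dv k l x = 0 := by
    rw [integral_Smat_mul_grad hv] at hS
    have := ((add_eq_zero_iff_of_nonneg (by positivity) (by positivity)).1 hS).1
    exact (mul_eq_zero.1 this).resolve_left hμ.ne'
  refine (hv i).ae_eq_zero fun j => ?_
  have hij : ∫ x, dv i j x * dv i j x = 0 := by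
    have := (Finset.sum_eq_zero_iff_of_nonneg fun k _ =>
      Finset.sum_nonneg fun l _ => hsq k l).1 hzero i (Finset.mem_univ i)
    exact (Finset.sum_eq_zero_iff_of_nonneg fun l _ => hsq i l).1 this j (Finset.mem_univ j)
  have := (integral_eq_zero_iff_of_nonneg (fun x => mul_self_nonneg _)
    (((hv i).memLp_grad j).integrable_mul ((hv i).memLp_grad j))).1 hij
  filter_upwards [this] with x hx using mul_self_eq_zero.1 hx

end Dissipation

section Energy

lemma monotoneOn_pressurePotential_div {p P P' : ℝ → ℝ} (hp : ∀ s, 0 ≤ s → 0 ≤ p s)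
    (hP : ∀ s, 0 < s → HasDerivAt P (P' s) s) (hode : ∀ s, 0 < s → s * P' s - P s = p s) :
    MonotoneOn (fun s => P s / s) (Ioi 0) := by
  have hderiv (s : ℝ) (hs : 0 < s) :
      HasDerivAt (fun s => P s / s) ((P' s * s - P s * 1) / s ^ 2) s :=
    (hP s hs).div (hasDerivAt_id s) hs.ne'
  refine monotoneOn_of_deriv_nonneg (convex_Ioi 0)
    (fun s hs => (hderiv s hs).continuousAt.continuousWithinAt) ?_ ?_ <;>
    rw [interior_Ioi] <;> intro s hs
  · exact (hderiv s hs).differentiableAt.differentiableWithinAt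
  · rw [(hderiv s hs).deriv]
    refine div_nonneg ?_ (sq_nonneg s)
    linarith [hode s hs, hp s (le_of_lt hs)]

lemma exists_pos_forall_ge_le_of_monotoneOn_div {P : ℝ → ℝ}
    (hmono : MonotoneOn (fun s => P s / s) (Ioi 0)) (hpos : ∀ᶠ s in 𝓝[>] 0, 0 < P s) (δ : ℝ)
    (hδ : 0 < δ) : ∃ c > 0, ∀ s, δ ≤ s → c ≤ P s := by
  obtain ⟨a, hPa, ha0, haδ⟩ := (hpos.and (Ioo_mem_nhdsGT hδ)).exists
  refine ⟨P a, hPa, fun s hs => ?_⟩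
  have has : a ≤ s := haδ.le.trans hs
  have hs0 : 0 < s := ha0.trans_le has
  calc P a ≤ P a * (s / a) := le_mul_of_one_le_right hPa.le ((one_le_div ha0).2 has)
    _ = P a / a * s := by ring
    _ ≤ P s / s * s := mul_le_mul_of_nonneg_right (hmono ha0 hs0 has) hs0.le
    _ = P s := div_mul_cancel₀ _ hs0.ne'

lemma eventually_le_pressurePotential {p P : ℝ → ℝ} {γ : ℝ}
    (hPp : ∃ c > 0, ∀ᶠ s in 𝓝[>] (0 : ℝ), c ≤ P s / p s)
    (hpγ : ∃ c > 0, ∀ᶠ s in 𝓝[>] (0 : ℝ), c ≤ p s / s ^ γ) :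
    (∃ c > 0, ∀ᶠ s in 𝓝[>] (0 : ℝ), c * p s ≤ P s) ∧
      ∃ c > 0, ∀ᶠ s in 𝓝[>] (0 : ℝ), c * s ^ γ ≤ P s := by
  obtain ⟨a, ha, hPp⟩ := hPp
  obtain ⟨b, hb, hpγ⟩ := hpγ
  have hpow : ∀ᶠ s in 𝓝[>] (0 : ℝ), 0 < s ^ γ :=
    eventually_mem_nhdsWithin.mono fun s hs => Real.rpow_pos_of_pos hs γ
  have hlow : ∀ᶠ s in 𝓝[>] (0 : ℝ), b * s ^ γ ≤ p s := by
    filter_upwards [hpγ, hpow] with s hs hs0 using (le_div_iff₀ hs0).1 hs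
  have hhigh : ∀ᶠ s in 𝓝[>] (0 : ℝ), a * p s ≤ P s := by
    filter_upwards [hPp, hpow, hlow] with s hs hs0 hsp
    exact (le_div_iff₀ ((mul_pos hb hs0).trans_le hsp)).1 hs
  refine ⟨⟨a, ha, hhigh⟩, a * b, mul_pos ha hb, ?_⟩
  filter_upwards [hlow, hhigh] with s hs hs'
  rw [mul_assoc]
  exact (mul_le_mul_of_nonneg_left hs ha.le).trans hs'

lemma eventually_pos_of_eventually_mul_rpow_le {P : ℝ → ℝ} {γ : ℝ}
    (h : ∃ c > 0, ∀ᶠ s in 𝓝[>] (0 : ℝ), c * s ^ γ ≤ P s) : ∀ᶠ s in 𝓝[>] (0 : ℝ), 0 < P s := by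
  obtain ⟨c, hc, hcP⟩ := h
  filter_upwards [hcP, eventually_mem_nhdsWithin] with s hs hs0
  exact (mul_pos hc (Real.rpow_pos_of_pos hs0 γ)).trans_le hs

variable {f p P : ℝ → ℝ}

lemma nonneg_of_forall_exists_pos_le (hP0 : P 0 = 0)
    (hP : ∀ δ > 0, ∃ c > 0, ∀ s, δ ≤ s → c ≤ P s) (s : ℝ) (hs : 0 ≤ s) : 0 ≤ P s := by
  rcases hs.eq_or_lt with rfl | hs0
  · exact hP0.ge
  · obtain ⟨c, hc, hcs⟩ := hP s hs0
    exact hc.le.trans (hcs s le_rfl)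

lemma exists_forall_mem_Icc_le_mul {M : ℝ} (hP0 : P 0 = 0)
    (hP : ∀ δ > 0, ∃ c > 0, ∀ s, δ ≤ s → c ≤ P s) (hf : ContinuousOn f (Ici 0)) (hf0 : f 0 = 0)
    (hfP : ∃ c > 0, ∀ᶠ s in 𝓝[>] (0 : ℝ), c * f s ≤ P s) :
    ∃ C ≥ 0, ∀ s ∈ Icc 0 M, f s ≤ C * P s := by
  obtain ⟨a, ha, hfa⟩ := hfP
  obtain ⟨δ, hδ, hsmall⟩ := mem_nhdsGT_iff_exists_Ioo_subset.1 hfa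
  obtain ⟨b, hb, hlarge⟩ := hP δ hδ
  obtain ⟨B, hB⟩ := isCompact_Icc.exists_bound_of_continuousOn (hf.mono Icc_subset_Ici_self)
  refine ⟨max a⁻¹ (B / b), le_max_of_le_left (inv_nonneg.2 ha.le), fun s hs => ?_⟩
  have hPs : 0 ≤ P s := nonneg_of_forall_exists_pos_le hP0 hP s hs.1
  rcases hs.1.eq_or_lt with rfl | hs0
  · rw [hf0, hP0, mul_zero]
  rcases lt_or_ge s δ with hsδ | hsδ
  · calc f s ≤ a⁻¹ * P s := (le_inv_mul_iff₀ ha).2 (hsmall ⟨hs0, hsδ⟩)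
      _ ≤ _ := mul_le_mul_of_nonneg_right (le_max_left _ _) hPs
  · have hfB : |f s| ≤ B := hB s hs
    calc f s ≤ B / b * b := by rw [div_mul_cancel₀ _ hb.ne']; exact (le_abs_self _).trans hfB
      _ ≤ B / b * P s :=
        mul_le_mul_of_nonneg_left (hlarge s hsδ) (div_nonneg ((abs_nonneg _).trans hfB) hb.le)
      _ ≤ _ := mul_le_mul_of_nonneg_right (le_max_right _ _) hPs

/-- The total energy density of a barotropic fluid with density `r`, velocity `v` and pressure
potential `P`. -/
def energyDensity (P : ℝ → ℝ) (r : E3 → ℝ) (v : Fin 3 → E3 → ℝ) (x : E3) : ℝ :=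
  1 / 2 * r x * (∑ i, (v i x) ^ 2) + P (r x)

/-- A density `0 ≤ r ≤ M` and a velocity `v` of finite total energy, for a pressure potential that
vanishes at vacuum and is bounded away from zero off vacuum. -/
structure FiniteEnergy (P : ℝ → ℝ) (r : E3 → ℝ) (M : ℝ) (v : Fin 3 → E3 → ℝ) : Prop where
  measurable : Measurable r
  nonneg : ∀ x, 0 ≤ r x
  le : ∀ x, r x ≤ M
  potential_zero : P 0 = 0
  potential_ge : ∀ δ > 0, ∃ c > 0, ∀ s, δ ≤ s → c ≤ P s
  integrable : Integrable (energyDensity P r v)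

namespace FiniteEnergy

variable {r : E3 → ℝ} {v : Fin 3 → E3 → ℝ} {M : ℝ}

lemma potential_le (h : FiniteEnergy P r M v) (x : E3) : P (r x) ≤ energyDensity P r v x :=
  le_add_of_nonneg_left (mul_nonneg (mul_nonneg (by norm_num) (h.nonneg x))
    (Finset.sum_nonneg fun i _ => sq_nonneg (v i x)))

lemma integrable_comp (h : FiniteEnergy P r M v) (hf : ContinuousOn f (Ici 0)) (hf0 : f 0 = 0)
    (hfnn : ∀ s, 0 ≤ s → 0 ≤ f s) (hfP : ∃ c > 0, ∀ᶠ s in 𝓝[>] (0 : ℝ), c * f s ≤ P s) :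
    Integrable fun x => f (r x) := by
  obtain ⟨C, hC, hfC⟩ :=
    exists_forall_mem_Icc_le_mul (M := M) h.potential_zero h.potential_ge hf hf0 hfP
  have hmeas : Measurable fun x => f (r x) := by
    have hcont : Continuous fun s => f (max s 0) :=
      hf.comp_continuous (by fun_prop) fun s => le_max_right s 0
    simpa only [Function.comp_def, max_eq_left (h.nonneg _)]
      using hcont.measurable.comp h.measurable
  refine (h.integrable.const_mul C).mono' hmeas.aestronglyMeasurable (.of_forall fun x => ?_)
  rw [Real.norm_of_nonneg (hfnn _ (h.nonneg x))]
  exact (hfC _ ⟨h.nonneg x, h.le x⟩).trans (mul_le_mul_of_nonneg_left (h.potential_le x) hC)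

lemma memLp_pressure (h : FiniteEnergy P r M v) (hp : ContinuousOn p (Ici 0)) (hp0 : p 0 = 0)
    (hpnn : ∀ s, 0 ≤ s → 0 ≤ p s) (hpP : ∃ c > 0, ∀ᶠ s in 𝓝[>] (0 : ℝ), c * p s ≤ P s) :
    MemLp (fun x => p (r x)) 2 := by
  rw [memLp_two_iff_integrable_sq (h.integrable_comp hp hp0 hpnn hpP).1]
  obtain ⟨c, hc, hcP⟩ := hpP
  have hlt : ∀ᶠ s in 𝓝[>] (0 : ℝ), p s < 1 :=
    ((hp 0 self_mem_Ici).mono Ioi_subset_Ici_self).tendsto.eventually_lt_const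
      (hp0.trans_lt one_pos)
  refine h.integrable_comp (f := fun s => p s ^ 2) (hp.pow 2) (by simp [hp0])
    (fun s _ => sq_nonneg _) ⟨c, hc, ?_⟩
  filter_upwards [hcP, hlt, eventually_mem_nhdsWithin] with s hs hs1 hs0
  exact (mul_le_mul_of_nonneg_left
    (pow_le_of_le_one (hpnn s (le_of_lt hs0)) hs1.le two_ne_zero) hc.le).trans hs

lemma memLp_density {γ : ℝ} (h : FiniteEnergy P r M v) (hγ : 0 < γ)
    (hγP : ∃ c > 0, ∀ᶠ s in 𝓝[>] (0 : ℝ), c * s ^ γ ≤ P s) (σ : ℝ) (hσ : γ ≤ σ) :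
    MemLp r (ENNReal.ofReal σ) := by
  have hσ0 : 0 < σ := hγ.trans_le hσ
  rw [← integrable_norm_rpow_iff h.measurable.aestronglyMeasurable (by simpa using hσ0)
    ENNReal.ofReal_ne_top, ENNReal.toReal_ofReal hσ0.le]
  simp_rw [Real.norm_of_nonneg (h.nonneg _)]
  obtain ⟨c, hc, hcP⟩ := hγP
  refine h.integrable_comp (f := fun s => s ^ σ) (Real.continuous_rpow_const hσ0.le).continuousOn
    (Real.zero_rpow hσ0.ne') (fun s hs => Real.rpow_nonneg hs σ) ⟨c, hc, ?_⟩
  filter_upwards [hcP, Ioc_mem_nhdsGT one_pos] with s hs hs1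
  exact (mul_le_mul_of_nonneg_left
    (Real.rpow_le_rpow_of_exponent_ge hs1.1 hs1.2 hσ) hc.le).trans hs

lemma memLp_momentum (h : FiniteEnergy P r M v) (i : Fin 3) (hv : Measurable (v i)) :
    MemLp (fun x => r x * v i x) 2 := by
  have hmeas : Measurable fun x => r x * v i x := h.measurable.mul hv
  rw [memLp_two_iff_integrable_sq hmeas.aestronglyMeasurable]
  refine (h.integrable.const_mul (2 * M)).mono' (hmeas.pow_const 2).aestronglyMeasurable
    (.of_forall fun x => ?_)
  have hM0 : 0 ≤ M := (h.nonneg x).trans (h.le x)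
  have hP : 0 ≤ P (r x) :=
    nonneg_of_forall_exists_pos_le h.potential_zero h.potential_ge _ (h.nonneg x)
  have hsq : v i x ^ 2 ≤ ∑ k, v k x ^ 2 :=
    Finset.single_le_sum (f := fun k => v k x ^ 2) (fun k _ => sq_nonneg _) (Finset.mem_univ i)
  rw [Real.norm_of_nonneg (sq_nonneg _)]
  calc (r x * v i x) ^ 2 = r x * (r x * v i x ^ 2) := by ring
    _ ≤ M * (r x * ∑ k, v k x ^ 2) :=
      mul_le_mul (h.le x) (mul_le_mul_of_nonneg_left hsq (h.nonneg x))
        (mul_nonneg (h.nonneg x) (sq_nonneg _)) hM0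
    _ ≤ 2 * M * energyDensity P r v x := by
      simp only [energyDensity]
      linarith [mul_nonneg hM0 hP]

lemma volume_lt_density_ne_top (h : FiniteEnergy P r M v) (δ : ℝ) (hδ : 0 < δ) :
    volume {x | δ < r x} ≠ ⊤ := by
  obtain ⟨c, hc, hcP⟩ := h.potential_ge δ hδ
  refine ((measure_mono fun x hx => ?_).trans_lt (h.integrable.measure_ge_lt_top hc)).ne
  exact (hcP (r x) (le_of_lt hx)).trans (h.potential_le x)

end FiniteEnergy

end Energy

section Momentum

lemma holderTriple_three_six_two : ENNReal.HolderTriple 3 6 2 := by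
  have h : Real.HolderTriple 3 6 2 := ⟨by norm_num, by norm_num, by norm_num⟩
  simpa using h.ennrealOfReal

lemma integral_sum_sum {α ι κ : Type*} [MeasurableSpace α] {ν : Measure α} [Fintype ι] [Fintype κ]
    {F : ι → κ → α → ℝ} (hF : ∀ i j, Integrable (F i j) ν) :
    ∫ x, ∑ i, ∑ j, F i j x ∂ν = ∑ i, ∑ j, ∫ x, F i j x ∂ν := by
  rw [integral_finsetSum _ fun i _ => integrable_finsetSum _ fun j _ => hF i j]
  simp_rw [fun i => integral_finsetSum Finset.univ fun j _ => hF i j]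

lemma tendsto_eLpNorm_mul_sub {α : Type*} [MeasurableSpace α] {ν : Measure α} {p q s : ENNReal}
    [p.HolderTriple q s] {f g : α → ℝ} {gn : ℕ → α → ℝ} (hf : MemLp f p ν) (hg : MemLp g q ν)
    (hgn : ∀ n, MemLp (gn n) q ν)
    (hlim : Tendsto (fun n => eLpNorm (gn n - g) q ν) atTop (𝓝 0)) :
    Tendsto (fun n => eLpNorm (f * gn n - f * g) s ν) atTop (𝓝 0) := by
  refine tendsto_of_tendsto_of_tendsto_of_le_of_le tendsto_const_nhds
    (by simpa using ENNReal.Tendsto.const_mul hlim (Or.inr hf.2.ne)) (fun _ => zero_le) fun n => ?_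
  have hHolder : eLpNorm (f • (gn n - g)) s ν ≤ eLpNorm f p ν * eLpNorm (gn n - g) q ν :=
    eLpNorm_smul_le_mul_eLpNorm ((hgn n).sub hg).1 hf.1
  rwa [smul_eq_mul, mul_sub] at hHolder

lemma memLp_Smat {α : Type*} [MeasurableSpace α] {ν : Measure α} {p : ENNReal}
    {dv : Fin 3 → Fin 3 → α → ℝ} (hdv : ∀ i j, MemLp (dv i j) p ν) (μ η : ℝ) (i j : Fin 3) :
    MemLp (fun x => Smat μ η (fun k l => dv k l x) i j) p ν := by
  have htr : MemLp (fun x => ∑ k, dv k k x) p ν := memLp_finsetSum _ fun k _ => hdv k k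
  exact ((((hdv i j).add (hdv j i)).sub ((htr.const_mul (2 / 3)).mul_const _)).const_mul μ).add
    ((htr.const_mul η).mul_const _)

namespace SteadyFlow

variable {r w : E3 → ℝ} {M : ℝ} {v : Fin 3 → E3 → ℝ} {dv : Fin 3 → Fin 3 → E3 → ℝ}
  {vn : Fin 3 → ℕ → E3 → ℝ} {dw : Fin 3 → E3 → ℝ} {wn : ℕ → E3 → ℝ}

lemma memLp_momentum (h : SteadyFlow r M v dv vn) (i : Fin 3) : MemLp (fun x => r x * v i x) 6 :=
  (h.approx i).memLp_mul h.measurable h.abs_le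

lemma sum_integral_mul_mul_pd_eq_zero (h : SteadyFlow r M v dv vn) {φ : E3 → ℝ}
    (hφ : ContDiff ℝ ∞ φ) (hφc : HasCompactSupport φ) :
    ∑ j, ∫ x, r x * v j x * φ x * pd φ j x = 0 := by
  have hdiff (x : E3) : DifferentiableAt ℝ φ x := hφ.differentiable (by simp) x
  have hmass := h.mass (fun x => φ x * φ x) (hφ.mul hφ) hφc.mul_right
  have hterm (j : Fin 3) : ∫ x, r x * v j x * pd (fun x => φ x * φ x) j x
      = 2 * ∫ x, r x * v j x * φ x * pd φ j x := by
    rw [← integral_const_mul]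
    congr with x
    rw [pd_mul (hdiff x) (hdiff x)]
    ring
  simpa [hterm, ← Finset.mul_sum] using hmass

theorem sum_integral_mul_mul_grad_eq_zero (h : SteadyFlow r M v dv vn)
    (hrv : ∀ j, MemLp (fun x => r x * v j x) 3) (hw : SmoothApprox w dw wn) :
    ∑ j, ∫ x, r x * v j x * w x * dw j x = 0 := by
  have := holderTriple_three_six_two
  have hlim (j : Fin 3) : Tendsto (fun n => ∫ x, r x * v j x * wn n x * pd (wn n) j x) atTop
      (𝓝 (∫ x, r x * v j x * w x * dw j x)) :=
    tendsto_integral_mul_of_tendsto_eLpNorm (p := 2) (q := 2) (hw.memLp.mul (hrv j))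
      (fun n => (hw.memLp_seq n 6).mul (hrv j))
      (tendsto_eLpNorm_mul_sub (hrv j) hw.memLp (hw.memLp_seq · 6) hw.tendsto)
      (hw.memLp_grad j) (hw.memLp_pd_seq · j 2) (hw.tendsto_grad j)
  refine tendsto_nhds_unique (tendsto_finsetSum Finset.univ fun j _ => hlim j) ?_
  simp_rw [h.sum_integral_mul_mul_pd_eq_zero (hw.contDiff _) (hw.hasCompactSupport _)]
  exact tendsto_const_nhds

variable {μ η : ℝ} {π : E3 → ℝ} {f : Fin 3 → E3 → ℝ}

lemma momentum_eq_sum (h : SteadyFlow r M v dv vn) {T S : Fin 3 → Fin 3 → E3 → ℝ}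
    (hT : ∀ i j, MemLp (T i j) 2) (hS : ∀ i j, MemLp (S i j) 2) (hπ : MemLp π 2)
    (hf : ∀ i, MemLp (f i) (ENNReal.ofReal (6 / 5))) (n : ℕ)
    (hmom : ∫ x, ((∑ i, ∑ j, T i j x * pd (vn i n) j x) + π x * ∑ i, pd (vn i n) i x)
      = (∫ x, ∑ i, ∑ j, S i j x * pd (vn i n) j x) - ∫ x, ∑ i, f i x * vn i n x) :
    (∑ i, ∑ j, ∫ x, T i j x * pd (vn i n) j x) + ∑ i, ∫ x, π x * pd (vn i n) i x
      = (∑ i, ∑ j, ∫ x, S i j x * pd (vn i n) j x) - ∑ i, ∫ x, f i x * vn i n x := by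
  have := holderConjugate_six_fifths_six
  have hint {F : E3 → ℝ} (hF : MemLp F 2) (i j : Fin 3) :
      Integrable fun x => F x * pd (vn i n) j x :=
    hF.integrable_mul ((h.approx i).memLp_pd_seq n j 2)
  have hintT : Integrable fun x => ∑ i, ∑ j, T i j x * pd (vn i n) j x :=
    integrable_finsetSum _ fun i _ => integrable_finsetSum _ fun j _ => hint (hT i j) i j
  have hintπ : Integrable fun x => ∑ i, π x * pd (vn i n) i x :=
    integrable_finsetSum _ fun i _ => hint hπ i i
  have hintf (i : Fin 3) : Integrable fun x => f i x * vn i n x :=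
    (hf i).integrable_mul ((h.approx i).memLp_seq n 6)
  simp_rw [Finset.mul_sum] at hmom
  rwa [integral_add hintT hintπ, integral_sum_sum fun i j => hint (hT i j) i j,
    integral_finsetSum _ fun i _ => hint hπ i i, integral_sum_sum fun i j => hint (hS i j) i j,
    integral_finsetSum _ fun i _ => hintf i] at hmom

lemma momentum_limit (h : SteadyFlow r M v dv vn) {T S : Fin 3 → Fin 3 → E3 → ℝ}
    (hT : ∀ i j, MemLp (T i j) 2) (hS : ∀ i j, MemLp (S i j) 2) (hπ : MemLp π 2)
    (hf : ∀ i, MemLp (f i) (ENNReal.ofReal (6 / 5)))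
    (hmom : ∀ n, ∫ x, ((∑ i, ∑ j, T i j x * pd (vn i n) j x) + π x * ∑ i, pd (vn i n) i x)
      = (∫ x, ∑ i, ∑ j, S i j x * pd (vn i n) j x) - ∫ x, ∑ i, f i x * vn i n x) :
    (∑ i, ∑ j, ∫ x, T i j x * dv i j x) + ∑ i, ∫ x, π x * dv i i x
      = (∑ i, ∑ j, ∫ x, S i j x * dv i j x) - ∑ i, ∫ x, f i x * v i x := by
  have := holderConjugate_six_fifths_six
  have hlim {F : E3 → ℝ} (hF : MemLp F 2) (i j : Fin 3) :
      Tendsto (fun n => ∫ x, F x * pd (vn i n) j x) atTop (𝓝 (∫ x, F x * dv i j x)) :=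
    tendsto_integral_const_mul_of_tendsto_eLpNorm hF ((h.approx i).memLp_grad j)
      ((h.approx i).memLp_pd_seq · j 2) ((h.approx i).tendsto_grad j)
  have hlim_force (i : Fin 3) :
      Tendsto (fun n => ∫ x, f i x * vn i n x) atTop (𝓝 (∫ x, f i x * v i x)) :=
    tendsto_integral_const_mul_of_tendsto_eLpNorm (hf i)
      (h.approx i).memLp ((h.approx i).memLp_seq · 6) (h.approx i).tendsto
  have hlim_sum {F : Fin 3 → Fin 3 → E3 → ℝ} (hF : ∀ i j, MemLp (F i j) 2) :
      Tendsto (fun n => ∑ i, ∑ j, ∫ x, F i j x * pd (vn i n) j x) atTop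
        (𝓝 (∑ i, ∑ j, ∫ x, F i j x * dv i j x)) :=
    tendsto_finsetSum _ fun i _ => tendsto_finsetSum _ fun j _ => hlim (hF i j) i j
  exact tendsto_nhds_unique
    (((hlim_sum hT).add (tendsto_finsetSum _ fun i _ => hlim hπ i i)).congr fun n =>
      h.momentum_eq_sum hT hS hπ hf n (hmom n))
    ((hlim_sum hS).sub (tendsto_finsetSum _ fun i _ => hlim_force i))

theorem integral_Smat_mul_grad_eq_zero (h : SteadyFlow r M v dv vn)
    (hrv : ∀ i, MemLp (fun x => r x * v i x) 3)
    (hπ : MemLp π 2) (hπdiv : ∑ i, ∫ x, π x * dv i i x = 0)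
    (hf : ∀ i, MemLp (f i) (ENNReal.ofReal (6 / 5))) (hfv : ∑ i, ∫ x, f i x * v i x = 0)
    (hmom : ∀ n, ∫ x, ((∑ i, ∑ j, r x * v i x * v j x * pd (vn i n) j x)
        + π x * ∑ i, pd (vn i n) i x)
      = (∫ x, ∑ i, ∑ j, Smat μ η (fun k l => dv k l x) i j * pd (vn i n) j x)
        - ∫ x, ∑ i, f i x * vn i n x) :
    ∫ x, ∑ i, ∑ j, Smat μ η (fun k l => dv k l x) i j * dv i j x = 0 := by
  have := holderTriple_three_six_two
  have hrvv (i j : Fin 3) : MemLp (fun x => r x * v i x * v j x) 2 :=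
    (h.approx j).memLp.mul (hrv i)
  have hS := memLp_Smat (fun i j => (h.approx i).memLp_grad j) μ η
  have hint (i j : Fin 3) : Integrable fun x => Smat μ η (fun k l => dv k l x) i j * dv i j x :=
    (hS i j).integrable_mul ((h.approx i).memLp_grad j)
  have hconv : ∑ i, ∑ j, ∫ x, r x * v i x * v j x * dv i j x = 0 :=
    Finset.sum_eq_zero fun i _ => by
      simpa only [mul_right_comm] using h.sum_integral_mul_mul_grad_eq_zero hrv (h.approx i)
  have hlimit := h.momentum_limit hrvv hS hπ hf hmom
  rw [hconv, hπdiv, hfv, add_zero, sub_zero] at hlimit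
  rw [integral_sum_sum hint, ← hlimit]

end SteadyFlow

end Momentum

section Potential

lemma exists_holderTriple_memLp {r : E3 → ℝ} {M γ q : ℝ} (hr : Measurable r)
    (hM : ∀ x, |r x| ≤ M) (hrγ : ∀ σ, γ ≤ σ → MemLp r (ENNReal.ofReal σ)) (hq : 6 / 5 ≤ q)
    (hγq : γ * (5 * q - 6) ≤ 6 * q) :
    ∃ s : ENNReal, s.HolderTriple (ENNReal.ofReal q) (ENNReal.ofReal (6 / 5)) ∧ MemLp r s := by
  rcases hq.eq_or_lt with rfl | hq
  · exact ⟨⊤, inferInstance,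
      memLp_top_of_bound hr.aestronglyMeasurable M (Eventually.of_forall hM)⟩
  · have hq5 : 0 < 5 * q - 6 := by linarith
    have htriple : Real.HolderTriple (6 * q / (5 * q - 6)) q (6 / 5) :=
      ⟨by field_simp; ring, by positivity, by positivity⟩
    exact ⟨_, htriple.ennrealOfReal, hrγ _ ((le_div_iff₀ hq5).2 hγq)⟩

namespace SteadyFlow

variable {r : E3 → ℝ} {M : ℝ} {v : Fin 3 → E3 → ℝ} {dv : Fin 3 → Fin 3 → E3 → ℝ}
  {vn : Fin 3 → ℕ → E3 → ℝ} {dg : Fin 3 → E3 → ℝ}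

theorem sum_integral_mul_grad_mul_eq_zero_of_tendsto (h : SteadyFlow r M v dv vn) {s q : ENNReal}
    [s.HolderTriple q (ENNReal.ofReal (6 / 5))] (hr : MemLp r s) (hdg : ∀ i, MemLp (dg i) q)
    {Gn : ℕ → E3 → ℝ} (hGn : ∀ n, ContDiff ℝ ∞ (Gn n)) (hGnc : ∀ n, HasCompactSupport (Gn n))
    (hlim : ∀ i, Tendsto (fun n => eLpNorm (pd (Gn n) i - dg i) q volume) atTop (𝓝 0)) :
    ∑ i, ∫ x, r x * dg i x * v i x = 0 := by
  have := holderConjugate_six_fifths_six.symm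
  have hpd (n : ℕ) (i : Fin 3) : MemLp (pd (Gn n) i) q :=
    (continuous_pd ((hGn n).of_le (by simp)) i).memLp_of_hasCompactSupport
      (hasCompactSupport_pd (hGnc n) i)
  have hforce (i : Fin 3) : MemLp (fun x => r x * dg i x) (ENNReal.ofReal (6 / 5)) :=
    (hdg i).mul hr
  have hforce_seq (n : ℕ) (i : Fin 3) :
      MemLp (fun x => r x * pd (Gn n) i x) (ENNReal.ofReal (6 / 5)) := (hpd n i).mul hr
  have hlim_force (i : Fin 3) : Tendsto (fun n => ∫ x, v i x * (r x * pd (Gn n) i x)) atTop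
      (𝓝 (∫ x, v i x * (r x * dg i x))) :=
    tendsto_integral_const_mul_of_tendsto_eLpNorm (h.approx i).memLp (hforce i)
      (hforce_seq · i) (tendsto_eLpNorm_mul_sub hr (hdg i) (hpd · i) (hlim i))
  have hmass (n : ℕ) : ∑ i, ∫ x, v i x * (r x * pd (Gn n) i x) = 0 := by
    simpa only [mul_comm, mul_left_comm, mul_assoc] using h.mass (Gn n) (hGn n) (hGnc n)
  have hsum := tendsto_nhds_unique
    ((tendsto_finsetSum Finset.univ fun i _ => hlim_force i).congr hmass) tendsto_const_nhds
  simpa only [mul_comm (v _ _)] using hsum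

end SteadyFlow

end Potential

section BoundedPotential

open ContinuousLinearMap (lsmul)
open scoped Convolution

/-- A bounded function `g` with a bounded weak gradient `dg` on `Ω`, both represented by measurable
functions on the whole space which are bounded by `B` everywhere. -/
structure BoundedWeakGrad (Ω : Set E3) (g : E3 → ℝ) (dg : Fin 3 → E3 → ℝ) (B : ℝ) : Prop where
  measurable : Measurable g
  measurable_grad : ∀ i, Measurable (dg i)
  abs_le : ∀ x, |g x| ≤ B
  abs_grad_le : ∀ i x, |dg i x| ≤ B
  integral_mul_pd : ∀ φ, IsTest Ω φ → ∀ i, ∫ x, g x * pd φ i x = -∫ x, dg i x * φ x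

lemma isTest_rescale_mollifier_sub {Ω : Set E3} {ε : ℝ} (hε : 0 < ε) {y : E3}
    (hy : closedBall y ε ⊆ Ω) : IsTest Ω fun t => rescale mollifier ε (y - t) := by
  refine ⟨(contDiff_rescale contDiff_mollifier ε).comp (by fun_prop),
    (hasCompactSupport_rescale hasCompactSupport_mollifier ε).comp_homeomorph
      (Homeomorph.subLeft y), ?_⟩
  refine (closure_minimal (fun t ht => ?_) isClosed_closedBall).trans hy
  rw [mem_closedBall, dist_comm, dist_eq_norm]
  by_contra! hlt
  exact ht (rescale_eq_zero mollifier_eq_zero hε (by rwa [one_mul]))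

/-- The squared length of the vector field with components `w`. -/
def speedSq (w : Fin 3 → E3 → ℝ) (x : E3) : ℝ := ∑ k, w k x ^ 2

lemma speedSq_nonneg (w : Fin 3 → E3 → ℝ) (x : E3) : 0 ≤ speedSq w x :=
  Finset.sum_nonneg fun _ _ => sq_nonneg _

lemma sq_le_speedSq (w : Fin 3 → E3 → ℝ) (k : Fin 3) (x : E3) : w k x ^ 2 ≤ speedSq w x :=
  Finset.single_le_sum (f := fun k => w k x ^ 2) (fun _ _ => sq_nonneg _) (Finset.mem_univ k)

lemma eq_zero_of_speedSq_eq_zero {w : Fin 3 → E3 → ℝ} {x : E3} (h : speedSq w x = 0)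
    (k : Fin 3) : w k x = 0 :=
  pow_eq_zero_iff two_ne_zero |>.1 (le_antisymm (h ▸ sq_le_speedSq w k x) (sq_nonneg _))

lemma contDiff_speedSq {w : Fin 3 → E3 → ℝ} (hw : ∀ k, ContDiff ℝ ∞ (w k)) :
    ContDiff ℝ ∞ (speedSq w) :=
  ContDiff.sum fun k _ => (hw k).pow 2

lemma measurable_speedSq {w : Fin 3 → E3 → ℝ} (hw : ∀ k, Measurable (w k)) :
    Measurable (speedSq w) :=
  Finset.measurable_fun_sum _ fun k _ => (hw k).pow_const 2

lemma pd_speedSq {w : Fin 3 → E3 → ℝ} (hw : ∀ k, ContDiff ℝ ∞ (w k)) (i : Fin 3) (x : E3) :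
    pd (speedSq w) i x = ∑ k, 2 * w k x * pd (w k) i x := by
  have hdiff (k : Fin 3) : DifferentiableAt ℝ (w k) x := (hw k).differentiable (by simp) x
  have hsq : speedSq w = fun y => ∑ k, w k y * w k y := by
    ext y
    simp [speedSq, pow_two]
  rw [hsq, pd_sum _ fun k _ => (hdiff k).fun_mul (hdiff k)]
  refine Finset.sum_congr rfl fun k _ => ?_
  rw [pd_mul (hdiff k) (hdiff k)]
  ring

/-- The cutoff `|w|² / (|w|² + e)`, which vanishes with `w` and tends to the indicator of `w ≠ 0`
as `e → 0`. -/
def speedCutoff (e : ℝ) (w : Fin 3 → E3 → ℝ) (x : E3) : ℝ := speedSq w x / (speedSq w x + e)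

variable {e : ℝ}

lemma speedSq_add_pos (w : Fin 3 → E3 → ℝ) (he : 0 < e) (x : E3) : 0 < speedSq w x + e := by
  linarith [speedSq_nonneg w x]

lemma abs_speedCutoff_le (w : Fin 3 → E3 → ℝ) (he : 0 < e) (x : E3) : |speedCutoff e w x| ≤ 1 := by
  have hnonneg := speedSq_nonneg w x
  rw [speedCutoff, abs_of_nonneg (by positivity), div_le_one (by positivity)]
  linarith

lemma pd_speedCutoff {w : Fin 3 → E3 → ℝ} (hw : ∀ k, ContDiff ℝ ∞ (w k)) (he : 0 < e) (i : Fin 3)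
    (x : E3) : pd (speedCutoff e w) i x
      = ∑ k, pd (w k) i x * (2 * w k x * e / (speedSq w x + e) ^ 2) := by
  have hderiv : HasDerivAt (fun s : ℝ => s / (s + e)) (e / (speedSq w x + e) ^ 2) (speedSq w x) :=
    ((hasDerivAt_id' _).fun_div ((hasDerivAt_id' _).add_const e)
      (speedSq_add_pos w he x).ne').congr_deriv (by ring)
  rw [show speedCutoff e w = fun y => speedSq w y / (speedSq w y + e) from rfl,
    pd_comp (h := fun s : ℝ => s / (s + e))
      ((contDiff_speedSq hw).differentiable (by simp) x) hderiv, pd_speedSq hw, Finset.mul_sum]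
  exact Finset.sum_congr rfl fun k _ => by ring

lemma isTest_speedCutoff {Ω : Set E3} {w : Fin 3 → E3 → ℝ} (hw : ∀ k, IsTest Ω (w k))
    (he : 0 < e) : IsTest Ω (speedCutoff e w) := by
  have hsq := contDiff_speedSq fun k => (hw k).1
  have hsupp : tsupport (speedCutoff e w) ⊆ ⋃ k, tsupport (w k) := by
    refine closure_minimal (fun x hx => ?_) (isClosed_iUnion_of_finite fun _ => isClosed_tsupport _)
    by_contra hnotMem
    simp only [mem_iUnion, not_exists] at hnotMem
    exact hx (by simp [speedCutoff, speedSq, image_eq_zero_of_notMem_tsupport (hnotMem _)])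
  exact ⟨hsq.div (hsq.add contDiff_const) fun x => (speedSq_add_pos w he x).ne',
    (isCompact_iUnion fun k => (hw k).2.1.isCompact).of_isClosed_subset (isClosed_tsupport _) hsupp,
    hsupp.trans (iUnion_subset fun k => (hw k).2.2)⟩

lemma abs_two_mul_mul_div_sq_le {a s : ℝ} (ha : a ^ 2 ≤ s) (he : 0 < e) (he1 : e ≤ 1) :
    |2 * a * e / (s + e) ^ 2| ≤ 2 / e := by
  have hs : 0 ≤ s := (sq_nonneg a).trans ha
  have hae : |a| * e ≤ s + e := by
    have hsq : |a| ^ 2 ≤ s := by rwa [sq_abs]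
    nlinarith [sq_nonneg (|a| - 1), abs_nonneg a, sq_nonneg (|a| - e)]
  rw [abs_div, abs_of_pos (show 0 < (s + e) ^ 2 by positivity), div_le_div_iff₀ (by positivity) he,
    abs_mul, abs_of_pos he, abs_mul, abs_two]
  nlinarith [abs_nonneg a]

lemma abs_two_mul_mul_mul_div_sq_le {a b s : ℝ} (ha : a ^ 2 ≤ s) (hb : b ^ 2 ≤ s) (he : 0 < e) :
    |2 * a * b * e / (s + e) ^ 2| ≤ 1 := by
  have hs : 0 ≤ s := (sq_nonneg a).trans ha
  have hab : |a * b| ≤ s := by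
    rw [abs_le]
    constructor <;> nlinarith [sq_nonneg (a - b), sq_nonneg (a + b)]
  rw [abs_div, abs_of_pos (show 0 < (s + e) ^ 2 by positivity), div_le_one (by positivity),
    abs_mul, abs_of_pos he, mul_assoc, abs_mul, abs_two]
  nlinarith [sq_nonneg (s - e), sq_nonneg s, sq_nonneg e]

variable {Ω : Set E3} {r g : E3 → ℝ} {M B : ℝ} {v dg : Fin 3 → E3 → ℝ}
  {dv : Fin 3 → Fin 3 → E3 → ℝ} {vn : Fin 3 → ℕ → E3 → ℝ}

namespace BoundedWeakGrad

lemma locallyIntegrable (hg : BoundedWeakGrad Ω g dg B) : LocallyIntegrable g :=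
  locallyIntegrable_of_abs_le hg.measurable hg.abs_le

lemma locallyIntegrable_grad (hg : BoundedWeakGrad Ω g dg B) (i : Fin 3) :
    LocallyIntegrable (dg i) :=
  locallyIntegrable_of_abs_le (hg.measurable_grad i) (hg.abs_grad_le i)

lemma pd_mollify_eq (hg : BoundedWeakGrad Ω g dg B) {ε : ℝ} (hε : 0 < ε) {y : E3}
    (hy : closedBall y ε ⊆ Ω) (i : Fin 3) : pd (mollify ε g) i y = mollify ε (dg i) y := by
  have hweak := hg.integral_mul_pd _ (isTest_rescale_mollifier_sub hε hy) i
  have hreflect (t : E3) : pd (fun t => rescale mollifier ε (y - t)) i t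
      = -pd (rescale mollifier ε) i (y - t) :=
    pd_comp_sub_left ((contDiff_rescale contDiff_mollifier ε).differentiable (by simp) _) i
  simp only [hreflect, mul_neg, integral_neg, neg_inj] at hweak
  rw [pd_mollify hg.locallyIntegrable]
  simpa only [mollify, convolution_lsmul, smul_eq_mul] using hweak

lemma eventually_pd_mollify_eq (hg : BoundedWeakGrad Ω g dg B) (hΩ : IsOpen Ω) {K : Set E3}
    (hK : IsCompact K) (hKΩ : K ⊆ Ω) :
    ∀ᶠ ε in 𝓝[>] 0, ∀ y ∈ K, ∀ i, pd (mollify ε g) i y = mollify ε (dg i) y := by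
  obtain ⟨δ, hδ, hthick⟩ := hK.exists_cthickening_subset_open hΩ hKΩ
  filter_upwards [Ioc_mem_nhdsGT hδ] with ε hε y hy i
  exact hg.pd_mollify_eq hε.1 ((closedBall_subset_closedBall hε.2).trans
    ((closedBall_subset_cthickening hy δ).trans hthick)) i

end BoundedWeakGrad

namespace SteadyFlow

lemma integrable_mul_momentum (h : SteadyFlow r M v dv vn) {f : E3 → ℝ} (hf : Continuous f)
    (hfc : HasCompactSupport f) (i : Fin 3) : Integrable fun x => f x * (r x * v i x) :=
  have := holderConjugate_six_fifths_six
  (hf.memLp_of_hasCompactSupport (p := ENNReal.ofReal (6 / 5)) hfc).integrable_mul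
    (h.memLp_momentum i)

lemma tendsto_integral_mul_momentum_mul_mollify (h : SteadyFlow r M v dv vn) {f c : E3 → ℝ}
    (hf : Continuous f) (hfc : HasCompactSupport f) (hc : Measurable c) (hB : ∀ x, |c x| ≤ B)
    (i : Fin 3) :
    Tendsto (fun ε => ∫ x, f x * (r x * v i x) * mollify ε c x) (𝓝[>] 0)
      (𝓝 (∫ x, f x * (r x * v i x) * c x)) :=
  have hcl := locallyIntegrable_of_abs_le hc hB
  tendsto_integral_mul_of_ae_bound (h.integrable_mul_momentum hf hfc i)
    (fun ε => (contDiff_mollify hcl ε).continuous.aestronglyMeasurable)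
    (eventually_mem_nhdsWithin.mono fun _ hε => .of_forall (abs_mollify_le hB hε))
    (ae_tendsto_mollify hcl)

lemma sum_integral_mul_mollify_add_eq_zero (h : SteadyFlow r M v dv vn)
    (hg : BoundedWeakGrad Ω g dg B) {ψ : E3 → ℝ} (hψ : IsTest Ω ψ) {ε : ℝ}
    (hpd : ∀ y ∈ tsupport ψ, ∀ i, pd (mollify ε g) i y = mollify ε (dg i) y) :
    ∑ i, ((∫ x, ψ x * (r x * v i x) * mollify ε (dg i) x)
      + ∫ x, pd ψ i x * (r x * v i x) * mollify ε g x) = 0 := by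
  obtain ⟨hψs, hψc, -⟩ := hψ
  have hgs := contDiff_mollify hg.locallyIntegrable ε
  have hdgs (i : Fin 3) := contDiff_mollify (hg.locallyIntegrable_grad i) ε
  rw [← h.mass (fun x => ψ x * mollify ε g x) (hψs.mul hgs) hψc.mul_right]
  refine Finset.sum_congr rfl fun i _ => ?_
  have hint_grad : Integrable fun x => ψ x * (r x * v i x) * mollify ε (dg i) x := by
    simpa only [Pi.mul_apply, mul_right_comm] using
      h.integrable_mul_momentum (hψs.continuous.mul (hdgs i).continuous) hψc.mul_right i
  have hint : Integrable fun x => pd ψ i x * (r x * v i x) * mollify ε g x := by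
    simpa only [Pi.mul_apply, mul_right_comm] using h.integrable_mul_momentum
      ((contDiff_pd hψs i).continuous.mul hgs.continuous) (hasCompactSupport_pd hψc i).mul_right i
  rw [← integral_add hint_grad hint]
  congr with x
  rw [pd_mul (hψs.differentiable (by simp) x) (hgs.differentiable (by simp) x)]
  by_cases hx : x ∈ tsupport ψ
  · rw [hpd x hx i]
    ring
  · rw [image_eq_zero_of_notMem_tsupport hx]
    ring

lemma sum_integral_mul_weakGrad_add_eq_zero (h : SteadyFlow r M v dv vn) (hΩ : IsOpen Ω)
    (hg : BoundedWeakGrad Ω g dg B) {ψ : E3 → ℝ} (hψ : IsTest Ω ψ) :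
    ∑ i, ((∫ x, ψ x * (r x * v i x) * dg i x) + ∫ x, pd ψ i x * (r x * v i x) * g x) = 0 := by
  obtain ⟨hψs, hψc, hψΩ⟩ := hψ
  refine tendsto_nhds_unique ((tendsto_finsetSum Finset.univ fun i _ =>
    (h.tendsto_integral_mul_momentum_mul_mollify hψs.continuous hψc (hg.measurable_grad i)
      (hg.abs_grad_le i) i).add
    (h.tendsto_integral_mul_momentum_mul_mollify (contDiff_pd hψs i).continuous
      (hasCompactSupport_pd hψc i) hg.measurable hg.abs_le i)).congr' ?_) tendsto_const_nhds
  filter_upwards [hg.eventually_pd_mollify_eq hΩ hψc.isCompact hψΩ] with ε hpd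
  exact h.sum_integral_mul_mollify_add_eq_zero hg ⟨hψs, hψc, hψΩ⟩ hpd

lemma isTest_seq (h : SteadyFlow r M v dv vn) (hvn : ∀ k n, tsupport (vn k n) ⊆ Ω) (n : ℕ)
    (k : Fin 3) : IsTest Ω (vn k n) :=
  ⟨(h.approx k).contDiff n, (h.approx k).hasCompactSupport n, hvn k n⟩

lemma ae_tendsto_speedSq (h : SteadyFlow r M v dv vn) :
    ∀ᵐ x, Tendsto (fun n => speedSq (vn · n) x) atTop (𝓝 (speedSq v x)) := by
  filter_upwards [ae_all_iff.2 fun k => (h.approx k).ae_tendsto] with x hx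
  exact tendsto_finsetSum _ fun k _ => (hx k).pow 2

lemma measurable_seq (h : SteadyFlow r M v dv vn) (n : ℕ) (k : Fin 3) : Measurable (vn k n) :=
  ((h.approx k).contDiff n).continuous.measurable

lemma sum_integral_speedCutoff_seq_eq_zero (h : SteadyFlow r M v dv vn) (hΩ : IsOpen Ω)
    (hvn : ∀ k n, tsupport (vn k n) ⊆ Ω) (hg : BoundedWeakGrad Ω g dg B)
    (hrv : ∀ i, MemLp (fun x => r x * v i x) 2) (he : 0 < e) (he1 : e ≤ 1) (n : ℕ) :
    ∑ i, ((∫ x, r x * dg i x * v i x * speedCutoff e (vn · n) x)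
      + ∑ k, ∫ x, r x * v i x * g x * pd (vn k n) i x
        * (2 * vn k n x * e / (speedSq (vn · n) x + e) ^ 2)) = 0 := by
  have htest := h.isTest_seq hvn n
  rw [← h.sum_integral_mul_weakGrad_add_eq_zero hΩ hg (isTest_speedCutoff htest he)]
  refine Finset.sum_congr rfl fun i _ => ?_
  have hint (k : Fin 3) : Integrable fun x => r x * v i x * g x * pd (vn k n) i x
      * (2 * vn k n x * e / (speedSq (vn · n) x + e) ^ 2) := by
    have hrvg : MemLp (fun x => r x * v i x * g x) 2 :=
      memLp_mul_of_ae_bound (hrv i) hg.measurable.aestronglyMeasurable (.of_forall hg.abs_le)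
    refine (hrvg.integrable_mul ((h.approx k).memLp_pd_seq n i 2)).mul_bdd (c := 2 / e) ?_
      (.of_forall fun x => abs_two_mul_mul_div_sq_le (sq_le_speedSq (vn · n) k x) he he1)
    exact ((((h.measurable_seq n k).const_mul 2).mul_const e).div
      (((measurable_speedSq (h.measurable_seq n)).add_const e).pow_const 2)).aestronglyMeasurable
  rw [← integral_finsetSum _ fun k _ => hint k]
  congr 2 with x
  · ring
  · rw [pd_speedCutoff (fun k => (htest k).1) he, Finset.sum_mul, Finset.sum_mul]
    exact Finset.sum_congr rfl fun k _ => by ring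

lemma tendsto_integral_mul_pd_speedCutoff_seq (h : SteadyFlow r M v dv vn)
    (hg : BoundedWeakGrad Ω g dg B) {i : Fin 3} (hrv : MemLp (fun x => r x * v i x) 2) (k : Fin 3)
    (he : 0 < e) (he1 : e ≤ 1) :
    Tendsto (fun n => ∫ x, r x * v i x * g x * pd (vn k n) i x
        * (2 * vn k n x * e / (speedSq (vn · n) x + e) ^ 2)) atTop
      (𝓝 (∫ x, r x * v i x * g x * dv k i x * (2 * v k x * e / (speedSq v x + e) ^ 2))) := by
  refine tendsto_integral_mul_mul_of_ae_bound (C := 2 / e)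
    (memLp_mul_of_ae_bound hrv hg.measurable.aestronglyMeasurable (.of_forall hg.abs_le))
    ((h.approx k).memLp_grad i) ((h.approx k).memLp_pd_seq · i 2) ((h.approx k).tendsto_grad i)
    (fun n => ((((h.measurable_seq n k).const_mul 2).mul_const e).div
      (((measurable_speedSq (h.measurable_seq n)).add_const e).pow_const 2)).aestronglyMeasurable)
    (fun n => .of_forall fun x => abs_two_mul_mul_div_sq_le (sq_le_speedSq (vn · n) k x) he he1) ?_
  filter_upwards [h.ae_tendsto_speedSq, (h.approx k).ae_tendsto] with x hx hk
  exact ((hk.const_mul 2).mul_const e).div ((hx.add_const e).pow 2)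
    (pow_pos (speedSq_add_pos v he x) 2).ne'

lemma sum_integral_speedCutoff_eq_zero (h : SteadyFlow r M v dv vn) (hΩ : IsOpen Ω)
    (hvn : ∀ k n, tsupport (vn k n) ⊆ Ω) (hg : BoundedWeakGrad Ω g dg B)
    (hrv : ∀ i, MemLp (fun x => r x * v i x) 2)
    (hforce : ∀ i, Integrable fun x => r x * dg i x * v i x) (he : 0 < e) (he1 : e ≤ 1) :
    ∑ i, ((∫ x, r x * dg i x * v i x * speedCutoff e v x)
      + ∑ k, ∫ x, r x * g x * dv k i x * (2 * v i x * v k x * e / (speedSq v x + e) ^ 2)) = 0 := by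
  have hsq (n : ℕ) : Measurable (speedSq (vn · n)) := measurable_speedSq (h.measurable_seq n)
  have hlim_grad (i : Fin 3) :
      Tendsto (fun n => ∫ x, r x * dg i x * v i x * speedCutoff e (vn · n) x) atTop
        (𝓝 (∫ x, r x * dg i x * v i x * speedCutoff e v x)) := by
    refine tendsto_integral_mul_of_ae_bound (C := 1) (hforce i)
      (fun n => ((hsq n).div ((hsq n).add_const e)).aestronglyMeasurable)
      (.of_forall fun n => .of_forall fun x => abs_speedCutoff_le _ he x) ?_
    filter_upwards [h.ae_tendsto_speedSq] with x hx
    exact hx.div (hx.add_const e) (speedSq_add_pos v he x).ne'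
  have hlimit := tendsto_nhds_unique ((tendsto_finsetSum Finset.univ fun i _ =>
    (hlim_grad i).add (tendsto_finsetSum Finset.univ fun k _ =>
      h.tendsto_integral_mul_pd_speedCutoff_seq hg (hrv i) k he he1)).congr
      (h.sum_integral_speedCutoff_seq_eq_zero hΩ hvn hg hrv he he1)) tendsto_const_nhds
  rw [← hlimit]
  refine Finset.sum_congr rfl fun i _ => congrArg _ (Finset.sum_congr rfl fun k _ => ?_)
  congr with x
  ring

lemma tendsto_integral_mul_speedCutoff (h : SteadyFlow r M v dv vn) {i : Fin 3}
    (hforce : Integrable fun x => r x * dg i x * v i x) :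
    Tendsto (fun e => ∫ x, r x * dg i x * v i x * speedCutoff e v x) (𝓝[>] 0)
      (𝓝 (∫ x, r x * dg i x * v i x)) := by
  have hsq : Measurable (speedSq v) := measurable_speedSq fun k => (h.approx k).measurable
  refine tendsto_integral_filter_of_dominated_convergence (fun x => ‖r x * dg i x * v i x‖)
    (.of_forall fun e => hforce.1.mul (hsq.div (hsq.add_const e)).aestronglyMeasurable) ?_
    hforce.norm (.of_forall fun x => ?_)
  · filter_upwards [self_mem_nhdsWithin] with e he
    refine .of_forall fun x => ?_
    rw [norm_mul]
    exact mul_le_of_le_one_right (norm_nonneg _) (abs_speedCutoff_le v he x)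
  · rcases eq_or_ne (speedSq v x) 0 with hx | hx
    · simp [eq_zero_of_speedSq_eq_zero hx i]
    · have hlim :
          Tendsto (fun e => speedCutoff e v x) (𝓝 0) (𝓝 (speedSq v x / (speedSq v x + 0))) :=
        tendsto_const_nhds.div (tendsto_const_nhds.add tendsto_id) (by simpa using hx)
      rw [add_zero, div_self hx] at hlim
      simpa using (hlim.mono_left nhdsWithin_le_nhds).const_mul (r x * dg i x * v i x)

lemma tendsto_integral_mul_grad_speedCutoff (h : SteadyFlow r M v dv vn) {i k : Fin 3}
    (hint : Integrable fun x => r x * g x * dv k i x) :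
    Tendsto (fun e => ∫ x, r x * g x * dv k i x * (2 * v i x * v k x * e / (speedSq v x + e) ^ 2))
      (𝓝[>] 0) (𝓝 0) := by
  have hmeas (k : Fin 3) : Measurable (v k) := (h.approx k).measurable
  have hlim := tendsto_integral_mul_of_ae_bound (l := 𝓝[>] 0) (C := 1) (c := fun _ => 0)
    (cn := fun e x => 2 * v i x * v k x * e / (speedSq v x + e) ^ 2) hint
    (fun e => (((((hmeas i).const_mul 2).mul (hmeas k)).mul_const e).div
      (((measurable_speedSq hmeas).add_const e).pow_const 2)).aestronglyMeasurable)
    (eventually_mem_nhdsWithin.mono fun e he => .of_forall fun x =>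
      abs_two_mul_mul_mul_div_sq_le (sq_le_speedSq v i x) (sq_le_speedSq v k x) he)
    (.of_forall fun x => ?_)
  · simpa using hlim
  · rcases eq_or_ne (speedSq v x) 0 with hx | hx
    · simp [eq_zero_of_speedSq_eq_zero hx i]
    · have hlim : Tendsto (fun e => 2 * v i x * v k x * e / (speedSq v x + e) ^ 2) (𝓝 0)
          (𝓝 (2 * v i x * v k x * 0 / (speedSq v x + 0) ^ 2)) :=
        (tendsto_id.const_mul _).div ((tendsto_const_nhds.add tendsto_id).pow 2) (by simpa using hx)
      rw [mul_zero, zero_div] at hlim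
      exact hlim.mono_left nhdsWithin_le_nhds

theorem sum_integral_mul_weakGrad_mul_eq_zero (h : SteadyFlow r M v dv vn) (hΩ : IsOpen Ω)
    (hvn : ∀ k n, tsupport (vn k n) ⊆ Ω) (hg : BoundedWeakGrad Ω g dg B) (hr : MemLp r 2)
    (hrv : ∀ i, MemLp (fun x => r x * v i x) 2)
    (hforce : ∀ i, Integrable fun x => r x * dg i x * v i x) :
    ∑ i, ∫ x, r x * dg i x * v i x = 0 := by
  have hrg : MemLp (fun x => r x * g x) 2 :=
    memLp_mul_of_ae_bound hr hg.measurable.aestronglyMeasurable (.of_forall hg.abs_le)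
  have hlim := tendsto_finsetSum Finset.univ fun i _ =>
    (h.tendsto_integral_mul_speedCutoff (hforce i)).add
      (tendsto_finsetSum Finset.univ fun k _ =>
        h.tendsto_integral_mul_grad_speedCutoff (hrg.integrable_mul ((h.approx k).memLp_grad i)))
  simp only [Finset.sum_const_zero, add_zero] at hlim
  refine tendsto_nhds_unique (hlim.congr' ?_) tendsto_const_nhds
  filter_upwards [Ioc_mem_nhdsGT zero_lt_one] with e he
  exact h.sum_integral_speedCutoff_eq_zero hΩ hvn hg hrv hforce he.1 he.2

end SteadyFlow

end BoundedPotential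

section ZeroExtension

/-- `F` is, up to a null set, the extension of `f` from `Ω` to the whole space by zero; being an
almost everywhere notion, it leaves room for choosing a measurable, bounded representative. -/
structure IsZeroExtension {α : Type*} [MeasureSpace α] (Ω : Set α) (f F : α → ℝ) : Prop where
  ae_eq : F =ᵐ[volume.restrict Ω] f
  eq_zero : ∀ x, x ∉ Ω → F x = 0

lemma exists_ae_norm_le_of_memLp_top {α E : Type*} [MeasurableSpace α] [NormedAddCommGroup E]
    {ν : Measure α} {f : α → E} (hf : MemLp f ⊤ ν) : ∃ B, ∀ᵐ x ∂ν, ‖f x‖ ≤ B := by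
  refine ⟨(eLpNorm f ⊤ ν).toReal, ?_⟩
  filter_upwards [ae_le_eLpNormEssSup (f := f) (μ := ν)] with x hx
  rw [← toReal_enorm]
  exact ENNReal.toReal_mono hf.2.ne (hx.trans_eq eLpNorm_exponent_top.symm)

namespace IsZeroExtension

variable {α : Type*} [MeasureSpace α] {Ω : Set α} {f F : α → ℝ}

lemma indicator (hΩ : MeasurableSet Ω) (f : α → ℝ) : IsZeroExtension Ω f (Ω.indicator f) :=
  ⟨indicator_ae_eq_restrict hΩ, fun _ hx => indicator_of_notMem hx f⟩

lemma exists_measurable (hΩ : MeasurableSet Ω) (hf : AEMeasurable f (volume.restrict Ω))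
    {t : Set ℝ} (ht : ∀ᵐ x ∂volume.restrict Ω, f x ∈ t) (h0 : 0 ∈ t) :
    ∃ F, IsZeroExtension Ω f F ∧ Measurable F ∧ ∀ x, F x ∈ t := by
  obtain ⟨g, hg, hgt, hfg⟩ := hf.exists_ae_eq_range_subset ht ⟨0, h0⟩
  refine ⟨Ω.indicator g, ⟨(indicator_ae_eq_restrict hΩ).trans hfg.symm,
    fun _ hx => indicator_of_notMem hx g⟩, hg.indicator hΩ, fun x => ?_⟩
  by_cases hx : x ∈ Ω
  · rw [indicator_of_mem hx]
    exact hgt (mem_range_self x)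
  · rwa [indicator_of_notMem hx]

lemma ae_eq_indicator (h : IsZeroExtension Ω f F) (hΩ : MeasurableSet Ω) :
    F =ᵐ[volume] Ω.indicator f := by
  filter_upwards [(ae_restrict_iff' hΩ).1 h.ae_eq] with x hx
  by_cases hxΩ : x ∈ Ω
  · rw [hx hxΩ, indicator_of_mem hxΩ]
  · rw [h.eq_zero x hxΩ, indicator_of_notMem hxΩ]

lemma integral_eq (h : IsZeroExtension Ω f F) : ∫ x, F x = ∫ x in Ω, f x := by
  rw [← setIntegral_eq_integral_of_forall_compl_eq_zero h.eq_zero]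
  exact integral_congr_ae h.ae_eq

lemma integrable (h : IsZeroExtension Ω f F) (hΩ : MeasurableSet Ω) (hf : IntegrableOn f Ω) :
    Integrable F :=
  ((integrable_indicator_iff hΩ).2 hf).congr (h.ae_eq_indicator hΩ).symm

lemma eLpNorm_eq (h : IsZeroExtension Ω f F) (hΩ : MeasurableSet Ω) (p : ENNReal) :
    eLpNorm F p = eLpNorm f p (volume.restrict Ω) := by
  rw [eLpNorm_congr_ae (h.ae_eq_indicator hΩ), eLpNorm_indicator_eq_eLpNorm_restrict hΩ]

lemma memLp (h : IsZeroExtension Ω f F) (hΩ : MeasurableSet Ω) {p : ENNReal}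
    (hf : MemLp f p (volume.restrict Ω)) : MemLp F p :=
  (memLp_congr_ae (h.ae_eq_indicator hΩ)).2 ((memLp_indicator_iff_restrict hΩ).2 hf)

lemma sub_left (h : IsZeroExtension Ω f F) {φ : α → ℝ} (hφ : ∀ x, x ∉ Ω → φ x = 0) :
    IsZeroExtension Ω (φ - f) (φ - F) where
  ae_eq := h.ae_eq.mono fun x hx => by simp [hx]
  eq_zero x hx := by simp [hφ x hx, h.eq_zero x hx]

lemma ae_tendsto {ι : Type*} {l : Filter ι} {φ : ι → α → ℝ} (h : IsZeroExtension Ω f F)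
    (hΩ : MeasurableSet Ω) (hφ : ∀ n x, x ∉ Ω → φ n x = 0)
    (hlim : ∀ᵐ x ∂volume.restrict Ω, Tendsto (φ · x) l (𝓝 (f x))) :
    ∀ᵐ x, Tendsto (φ · x) l (𝓝 (F x)) := by
  filter_upwards [(ae_restrict_iff' hΩ).1 hlim, (ae_restrict_iff' hΩ).1 h.ae_eq] with x hx hFx
  by_cases hxΩ : x ∈ Ω
  · simpa [hFx hxΩ] using hx hxΩ
  · simp only [h.eq_zero x hxΩ, hφ _ x hxΩ, tendsto_const_nhds]

end IsZeroExtension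

end ZeroExtension

section TestFunctions

variable {Ω : Set E3}

lemma eq_zero_of_isTest {φ : E3 → ℝ} (h : IsTest Ω φ) (x : E3) (hx : x ∉ Ω) : φ x = 0 :=
  image_eq_zero_of_notMem_tsupport fun hxφ => hx (h.2.2 hxφ)

lemma pd_eq_zero_of_isTest {φ : E3 → ℝ} (h : IsTest Ω φ) (i : Fin 3) (x : E3) (hx : x ∉ Ω) :
    pd φ i x = 0 :=
  image_eq_zero_of_notMem_tsupport fun hxφ => hx (h.2.2 (tsupport_pd_subset φ i hxφ))

lemma isTest_apply {φ : E3 → Fin 3 → ℝ} (h : IsTestVec ∞ Ω φ) (i : Fin 3) :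
    IsTest Ω fun x => φ x i := by
  have hsub : tsupport (fun x => φ x i) ⊆ tsupport φ :=
    closure_mono fun x hx hφ => hx (congrFun hφ i)
  exact ⟨contDiff_pi.1 h.1 i, h.2.1.isCompact.of_isClosed_subset (isClosed_tsupport _) hsub,
    hsub.trans h.2.2⟩

end TestFunctions

section Globalization

variable {Ω : Set E3} {ρ : E3 → ℝ} {u : E3 → Fin 3 → ℝ} {du : E3 → Fin 3 → Fin 3 → ℝ}
  {r : E3 → ℝ} {M : ℝ} {v : Fin 3 → E3 → ℝ} {dv : Fin 3 → Fin 3 → E3 → ℝ}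
  {vn : Fin 3 → ℕ → E3 → ℝ}

lemma smoothApprox_of_isZeroExtension {f w : E3 → ℝ} {df dw : Fin 3 → E3 → ℝ} {wn : ℕ → E3 → ℝ}
    (hΩ : MeasurableSet Ω) (hw : IsZeroExtension Ω f w) (hwm : Measurable w)
    (hdw : ∀ j, IsZeroExtension Ω (df j) (dw j)) (hdf : ∀ j, MemLp (df j) 2 (volume.restrict Ω))
    (hwn : ∀ n, IsTest Ω (wn n))
    (hlim : Tendsto (fun n => eLpNorm (wn n - f) 6 (volume.restrict Ω)) atTop (𝓝 0))
    (hlim_grad : ∀ j, Tendsto (fun n => eLpNorm (pd (wn n) j - df j) 2 (volume.restrict Ω))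
      atTop (𝓝 0))
    (hae : ∀ᵐ x ∂volume.restrict Ω, Tendsto (wn · x) atTop (𝓝 (f x))) :
    SmoothApprox w dw wn := by
  have hlim_ext : Tendsto (fun n => eLpNorm (wn n - w) 6) atTop (𝓝 0) :=
    hlim.congr fun n => ((hw.sub_left (eq_zero_of_isTest (hwn n))).eLpNorm_eq hΩ 6).symm
  refine
    { measurable := hwm
      memLp := ?_
      memLp_grad := fun j => (hdw j).memLp hΩ (hdf j)
      contDiff := fun n => (hwn n).1
      hasCompactSupport := fun n => (hwn n).2.1
      tendsto := hlim_ext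
      tendsto_grad := fun j => (hlim_grad j).congr fun n =>
        (((hdw j).sub_left (pd_eq_zero_of_isTest (hwn n) j)).eLpNorm_eq hΩ 2).symm
      ae_tendsto := hw.ae_tendsto hΩ (fun n => eq_zero_of_isTest (hwn n)) hae }
  obtain ⟨n, hn⟩ := (hlim_ext.eventually_lt_const one_pos).exists
  have hcont := (hwn n).1.continuous
  have hsub : MemLp (wn n - w) 6 :=
    ⟨hcont.aestronglyMeasurable.sub hwm.aestronglyMeasurable, hn.trans ENNReal.one_lt_top⟩
  simpa using (hcont.memLp_of_hasCompactSupport (hwn n).2.1).sub hsub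

lemma MemD012.exists_smoothApprox (h : MemD012 Ω u du) (hΩ : IsOpen Ω)
    (hv : ∀ i, IsZeroExtension Ω (u · i) (v i)) (hvm : ∀ i, Measurable (v i))
    (hdv : ∀ i j, IsZeroExtension Ω (du · i j) (dv i j)) :
    ∃ vn : Fin 3 → ℕ → E3 → ℝ, (∀ n, IsTestVec ∞ Ω fun x i => vn i n x) ∧
      ∀ i, SmoothApprox (v i) (dv i) (vn i) := by
  obtain ⟨hu, -, hdu, un, hun, hgrad, hlim⟩ := h
  have hmeas : AEStronglyMeasurable u (volume.restrict Ω) := hu.aestronglyMeasurable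
  obtain ⟨ns, hns, hae⟩ := (tendstoInMeasure_of_tendsto_eLpNorm (by norm_num)
    (fun n => (hun n).1.continuous.aestronglyMeasurable) hmeas hlim).exists_seq_tendsto_ae
  refine ⟨fun i n x => un (ns n) x i, fun n => hun (ns n), fun i => ?_⟩
  refine smoothApprox_of_isZeroExtension hΩ.measurableSet (hv i) (hvm i) (hdv i)
    (fun j => (hdu.eval i).eval j) (fun n => isTest_apply (hun (ns n)) i) ?_ (fun j => ?_)
    (hae.mono fun x hx => tendsto_pi_nhds.1 hx i)
  · refine tendsto_of_tendsto_of_tendsto_of_le_of_le tendsto_const_nhds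
      (hlim.comp hns.tendsto_atTop) (fun _ => zero_le) fun n => ?_
    exact eLpNorm_mono fun x => norm_le_pi_norm (un (ns n) x - u x) i
  · refine tendsto_of_tendsto_of_tendsto_of_le_of_le tendsto_const_nhds
      (hgrad.comp hns.tendsto_atTop) (fun _ => zero_le) fun n => ?_
    exact eLpNorm_mono fun x => (norm_le_pi_norm ((tgrad (un (ns n)) x - du x) i) j).trans
      (norm_le_pi_norm (tgrad (un (ns n)) x - du x) i)

/-- The zero extension to `ℝ³` of a density `ρ` and a velocity `u` with gradient `du` on `Ω`: a
steady flow of density `0 ≤ r ≤ M` and velocity `v`, the latter approximated by the fields `vn`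
compactly supported in `Ω`. -/
structure ZeroExtendedFlow (Ω : Set E3) (ρ : E3 → ℝ) (u : E3 → Fin 3 → ℝ)
    (du : E3 → Fin 3 → Fin 3 → ℝ) (r : E3 → ℝ) (M : ℝ) (v : Fin 3 → E3 → ℝ)
    (dv : Fin 3 → Fin 3 → E3 → ℝ) (vn : Fin 3 → ℕ → E3 → ℝ) : Prop
    extends SteadyFlow r M v dv vn where
  nonneg : ∀ x, 0 ≤ r x
  density : IsZeroExtension Ω ρ r
  velocity : ∀ i, IsZeroExtension Ω (u · i) (v i)
  velocity_grad : ∀ i j, IsZeroExtension Ω (du · i j) (dv i j)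
  isTestVec : ∀ n, IsTestVec ∞ Ω fun x i => vn i n x

section WeakSolution

variable {μ η : ℝ} {p : ℝ → ℝ} {G : E3 → ℝ} {dG : E3 → Fin 3 → ℝ}

lemma WeakSolution.sum_integral_mul_pd_eq_zero (h : WeakSolution Ω μ η p G dG ρ u du)
    (hr : Measurable r) (hM : ∀ x, |r x| ≤ M) (hρ : IsZeroExtension Ω ρ r)
    (hv : ∀ i, IsZeroExtension Ω (u · i) (v i)) (happrox : ∀ i, SmoothApprox (v i) (dv i) (vn i))
    {φ : E3 → ℝ} (hφ : ContDiff ℝ ∞ φ) (hφc : HasCompactSupport φ) :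
    ∑ i, ∫ x, r x * v i x * pd φ i x = 0 := by
  have := holderConjugate_six_fifths_six.symm
  have hpd (i : Fin 3) : MemLp (pd φ i) (ENNReal.ofReal (6 / 5)) :=
    (continuous_pd (hφ.of_le (by simp)) i).memLp_of_hasCompactSupport (hasCompactSupport_pd hφc i)
  have hint (i : Fin 3) : Integrable fun x => r x * v i x * pd φ i x :=
    ((happrox i).memLp_mul hr hM).integrable_mul (hpd i)
  rw [← integral_finsetSum _ fun i _ => hint i, ← h.mass φ hφ hφc]
  refine IsZeroExtension.integral_eq ⟨?_, fun x hx => by simp [hρ.eq_zero x hx]⟩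
  filter_upwards [hρ.ae_eq, eventually_all.2 fun i => (hv i).ae_eq] with x hx hvx
  simp only [hx, hvx, Finset.mul_sum, mul_assoc]

theorem WeakSolution.exists_zeroExtendedFlow (h : WeakSolution Ω μ η p G dG ρ u du)
    (hΩ : IsOpen Ω) (hρ : MemLp ρ ⊤ (volume.restrict Ω)) :
    ∃ r M v dv vn, ZeroExtendedFlow Ω ρ u du r M v dv vn := by
  have hΩm := hΩ.measurableSet
  obtain ⟨B, hB⟩ := exists_ae_norm_le_of_memLp_top hρ
  have hρI : ∀ᵐ x ∂volume.restrict Ω, ρ x ∈ Icc 0 (max B 0) := by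
    filter_upwards [h.ρ_nonneg, hB] with x h0 hx
    exact ⟨h0, (le_abs_self _).trans (hx.trans (le_max_left _ _))⟩
  obtain ⟨r, hr, hrm, hrI⟩ := IsZeroExtension.exists_measurable hΩm hρ.1.aemeasurable hρI
    ⟨le_rfl, le_max_right _ _⟩
  have hu (i : Fin 3) : AEMeasurable (u · i) (volume.restrict Ω) :=
    (aemeasurable_pi_iff.1 h.aemeas_u i).restrict
  choose v hv hvm _ using fun i => IsZeroExtension.exists_measurable hΩm (hu i)
    (t := univ) (.of_forall fun _ => mem_univ _) (mem_univ _)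
  have hdv (i j : Fin 3) := IsZeroExtension.indicator hΩm (du · i j)
  obtain ⟨vn, hvn, happrox⟩ := h.u_D012.exists_smoothApprox hΩ hv hvm hdv
  have hM (x : E3) : |r x| ≤ max B 0 := (abs_of_nonneg (hrI x).1).trans_le (hrI x).2
  exact ⟨r, max B 0, v, _, vn,
    { measurable := hrm
      abs_le := hM
      approx := happrox
      mass := fun φ => h.sum_integral_mul_pd_eq_zero hrm hM hr hv happrox
      nonneg := fun x => (hrI x).1
      density := hr
      velocity := hv
      velocity_grad := hdv
      isTestVec := hvn }⟩

end WeakSolution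

namespace ZeroExtendedFlow

lemma isTest (h : ZeroExtendedFlow Ω ρ u du r M v dv vn) (i : Fin 3) (n : ℕ) :
    IsTest Ω (vn i n) :=
  isTest_apply (h.isTestVec n) i

lemma momentum {μ η : ℝ} {p : ℝ → ℝ} {G : E3 → ℝ} {dG : E3 → Fin 3 → ℝ} {dg : Fin 3 → E3 → ℝ}
    (h : ZeroExtendedFlow Ω ρ u du r M v dv vn) (hsol : WeakSolution Ω μ η p G dG ρ u du)
    (hp0 : p 0 = 0) (hdg : ∀ i, IsZeroExtension Ω (dG · i) (dg i)) (n : ℕ) :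
    ∫ x, ((∑ i, ∑ j, r x * v i x * v j x * pd (vn i n) j x) + p (r x) * ∑ i, pd (vn i n) i x)
      = (∫ x, ∑ i, ∑ j, Smat μ η (fun k l => dv k l x) i j * pd (vn i n) j x)
        - ∫ x, ∑ i, r x * dg i x * vn i n x := by
  have hr0 (x : E3) (hx : x ∉ Ω) : r x = 0 := h.density.eq_zero x hx
  have hv : ∀ᵐ x ∂volume.restrict Ω, ∀ i, v i x = u x i :=
    eventually_all.2 fun i => (h.velocity i).ae_eq
  have hdv : ∀ᵐ x ∂volume.restrict Ω, ∀ i j, dv i j x = du x i j :=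
    eventually_all.2 fun i => eventually_all.2 fun j => (h.velocity_grad i j).ae_eq
  have htest : IsTestVec 1 Ω fun x i => vn i n x :=
    ⟨(h.isTestVec n).1.of_le (by simp), (h.isTestVec n).2⟩
  refine Eq.trans ?_
    ((hsol.momentum _ htest).trans (congrArg₂ (· - ·) (Eq.symm ?_) (Eq.symm ?_)))
  · refine IsZeroExtension.integral_eq ⟨?_, fun x hx => by simp [hr0 x hx, hp0]⟩
    filter_upwards [h.density.ae_eq, hv] with x hrx hvx
    simp only [hrx, hvx, tgrad]
  · refine IsZeroExtension.integral_eq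
      ⟨?_, fun x hx => by simp [pd_eq_zero_of_isTest (h.isTest _ n) _ x hx]⟩
    filter_upwards [hdv] with x hdvx
    simp only [hdvx, tgrad]
  · refine IsZeroExtension.integral_eq ⟨?_, fun x hx => by simp [hr0 x hx]⟩
    filter_upwards [h.density.ae_eq, eventually_all.2 fun i => (hdg i).ae_eq] with x hrx hdgx
    simp only [hrx, hdgx]

lemma finiteEnergy {P : ℝ → ℝ} (h : ZeroExtendedFlow Ω ρ u du r M v dv vn)
    (hΩ : MeasurableSet Ω) (hP0 : P 0 = 0) (hP : ∀ δ > 0, ∃ c > 0, ∀ s, δ ≤ s → c ≤ P s)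
    (hE : IntegrableOn (fun x => (1 / 2) * ρ x * (∑ i, (u x i) ^ 2) + P (ρ x)) Ω) :
    FiniteEnergy P r M v where
  measurable := h.measurable
  nonneg := h.nonneg
  le x := (le_abs_self _).trans (h.abs_le x)
  potential_zero := hP0
  potential_ge := hP
  integrable := by
    refine IsZeroExtension.integrable (F := energyDensity P r v)
      ⟨?_, fun x hx => by simp [energyDensity, h.density.eq_zero x hx, hP0]⟩ hΩ hE
    filter_upwards [h.density.ae_eq, eventually_all.2 fun i => (h.velocity i).ae_eq] with x hrx hvx
    simp only [energyDensity, hrx, hvx]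

end ZeroExtendedFlow

lemma MemW1inf.exists_boundedWeakGrad {G : E3 → ℝ} {dG : E3 → Fin 3 → ℝ} (h : MemW1inf Ω G dG)
    (hΩ : MeasurableSet Ω) : ∃ g dg B, BoundedWeakGrad Ω g dg B ∧
      ∀ i, IsZeroExtension Ω (dG · i) (dg i) := by
  obtain ⟨hweak, hG, hdG⟩ := h
  obtain ⟨B, hB⟩ := exists_ae_norm_le_of_memLp_top hG
  obtain ⟨B', hB'⟩ := exists_ae_norm_le_of_memLp_top hdG
  set C := max (max B B') 0
  have hGC : ∀ᵐ x ∂volume.restrict Ω, G x ∈ {s : ℝ | |s| ≤ C} :=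
    hB.mono fun x hx => hx.trans ((le_max_left _ _).trans (le_max_left _ _))
  have hdGC (i : Fin 3) : ∀ᵐ x ∂volume.restrict Ω, dG x i ∈ {s : ℝ | |s| ≤ C} :=
    hB'.mono fun x hx => (norm_le_pi_norm (dG x) i).trans
      (hx.trans ((le_max_right _ _).trans (le_max_left _ _)))
  have hC : (0 : ℝ) ∈ {s : ℝ | |s| ≤ C} := by simp [C]
  obtain ⟨g, hg, hgm, hgC⟩ := IsZeroExtension.exists_measurable hΩ hG.1.aemeasurable hGC hC
  choose dg hdg hdgm hdgC using fun i =>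
    IsZeroExtension.exists_measurable hΩ (hdG.eval i).1.aemeasurable (hdGC i) hC
  refine ⟨g, dg, C, ⟨hgm, hdgm, hgC, hdgC, fun φ hφ i => ?_⟩, hdg⟩
  refine Eq.trans ?_ ((hweak φ hφ i).trans (congrArg Neg.neg (Eq.symm ?_)))
  · refine IsZeroExtension.integral_eq ⟨?_, fun x hx => by simp [hg.eq_zero x hx]⟩
    filter_upwards [hg.ae_eq] with x hx using by rw [hx]
  · refine IsZeroExtension.integral_eq ⟨?_, fun x hx => by simp [(hdg i).eq_zero x hx]⟩
    filter_upwards [(hdg i).ae_eq] with x hx using by rw [hx]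

/-- The zero extension `dg` of the potential gradient `dG` gives rise to a force `r dg` in the dual
`L^{6/5}` of the space of velocities, and this force performs no work along the flow `v`. -/
structure IsWorklessForce (Ω : Set E3) (dG : E3 → Fin 3 → ℝ) (r : E3 → ℝ) (v : Fin 3 → E3 → ℝ)
    (dg : Fin 3 → E3 → ℝ) : Prop where
  grad : ∀ i, IsZeroExtension Ω (dG · i) (dg i)
  memLp : ∀ i, MemLp (fun x => r x * dg i x) (ENNReal.ofReal (6 / 5))
  work : ∑ i, ∫ x, r x * dg i x * v i x = 0

namespace ZeroExtendedFlow

variable {G : E3 → ℝ} {dG : E3 → Fin 3 → ℝ} {γ : ℝ}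

lemma exists_isWorklessForce_of_memD01q {q : ℝ} (h : ZeroExtendedFlow Ω ρ u du r M v dv vn)
    (hΩ : MeasurableSet Ω) (hrγ : ∀ σ, γ ≤ σ → MemLp r (ENNReal.ofReal σ)) (hq : 6 / 5 ≤ q)
    (hγq : γ * (5 * q - 6) ≤ 6 * q) (hG : MemD01q Ω G dG q) :
    ∃ dg, IsWorklessForce Ω dG r v dg := by
  obtain ⟨-, hdG, Gn, hGn, hlim, -⟩ := hG
  obtain ⟨s, hs, hrs⟩ := exists_holderTriple_memLp h.measurable h.abs_le hrγ hq hγq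
  have hdg (i : Fin 3) := IsZeroExtension.indicator hΩ (dG · i)
  have hdgq (i : Fin 3) : MemLp (Ω.indicator (dG · i)) (ENNReal.ofReal q) :=
    (hdg i).memLp hΩ (hdG.eval i)
  refine ⟨_, hdg, fun i => (hdgq i).mul hrs, ?_⟩
  refine h.sum_integral_mul_grad_mul_eq_zero_of_tendsto hrs hdgq (fun n => (hGn n).1)
    (fun n => (hGn n).2.1) fun i => ?_
  refine tendsto_of_tendsto_of_tendsto_of_le_of_le tendsto_const_nhds hlim
    (fun _ => zero_le) fun n => ?_
  calc eLpNorm (pd (Gn n) i - Ω.indicator (dG · i)) (ENNReal.ofReal q) volume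
      = eLpNorm (pd (Gn n) i - (dG · i)) (ENNReal.ofReal q) (volume.restrict Ω) :=
        ((hdg i).sub_left (pd_eq_zero_of_isTest (hGn n) i)).eLpNorm_eq hΩ _
    _ ≤ _ := eLpNorm_mono fun x => norm_le_pi_norm ((fun i => pd (Gn n) i x) - dG x) i

lemma exists_isWorklessForce_of_memW1inf (h : ZeroExtendedFlow Ω ρ u du r M v dv vn) (hΩ : IsOpen Ω)
    (hrγ : ∀ σ, γ ≤ σ → MemLp r (ENNReal.ofReal σ)) (hγ : γ ≤ 6 / 5)
    (hrv : ∀ i, MemLp (fun x => r x * v i x) 2) (hG : MemW1inf Ω G dG) :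
    ∃ dg, IsWorklessForce Ω dG r v dg := by
  have := holderConjugate_six_fifths_six
  obtain ⟨g, dg, B, hg, hdg⟩ := hG.exists_boundedWeakGrad hΩ.measurableSet
  have hforce (i : Fin 3) : MemLp (fun x => r x * dg i x) (ENNReal.ofReal (6 / 5)) :=
    memLp_mul_of_ae_bound (hrγ _ hγ) (hg.measurable_grad i).aestronglyMeasurable
      (.of_forall (hg.abs_grad_le i))
  have hr2 : MemLp r 2 := by simpa using hrγ 2 (by linarith)
  exact ⟨dg, hdg, hforce, h.sum_integral_mul_weakGrad_mul_eq_zero hΩ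
    (fun k n => (h.isTest k n).2.2) hg hr2 hrv
    fun i => (hforce i).integrable_mul (h.approx i).memLp⟩

lemma exists_isWorklessForce (h : ZeroExtendedFlow Ω ρ u du r M v dv vn) (hΩ : IsOpen Ω)
    (hrγ : ∀ σ, γ ≤ σ → MemLp r (ENNReal.ofReal σ)) (hrv : ∀ i, MemLp (fun x => r x * v i x) 2)
    (hG : (6 / 5 < γ ∧ ∃ q : ℝ, 6 / 5 ≤ q ∧ q ≤ 6 * γ / (5 * γ - 6) ∧ MemD01q Ω G dG q) ∨
      (γ ≤ 6 / 5 ∧ ((∃ q : ℝ, 6 / 5 ≤ q ∧ MemD01q Ω G dG q) ∨ MemW1inf Ω G dG))) :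
    ∃ dg, IsWorklessForce Ω dG r v dg := by
  have hΩm := hΩ.measurableSet
  rcases hG with ⟨hγ, q, hq, hqγ, hGq⟩ | ⟨hγ, ⟨q, hq, hGq⟩ | hGW⟩
  · rw [le_div_iff₀ (by linarith)] at hqγ
    exact h.exists_isWorklessForce_of_memD01q hΩm hrγ hq (by linarith) hGq
  · exact h.exists_isWorklessForce_of_memD01q hΩm hrγ hq (by nlinarith) hGq
  · exact h.exists_isWorklessForce_of_memW1inf hΩ hrγ hγ hrv hGW

end ZeroExtendedFlow

end Globalization

theorem liouville_finite_energy_general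
    (Ω : Set E3) (hΩ_open : IsOpen Ω)
    (μ η : ℝ) (hμ : 0 < μ) (hη : 0 ≤ η)
    (p p' P P' : ℝ → ℝ) (γ : ℝ) (hγ : 1 < γ)
    (G : E3 → ℝ) (dG : E3 → Fin 3 → ℝ)
    (ρ : E3 → ℝ) (u : E3 → Fin 3 → ℝ) (du : E3 → Fin 3 → Fin 3 → ℝ)
    (hp_cont : ContinuousOn p (Ici 0)) (hp0 : p 0 = 0)
    (hp_nonneg : ∀ s, 0 ≤ s → 0 ≤ p s)
    (hp_deriv : ∀ s, 0 < s → HasDerivAt p (p' s) s)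
    (hp'_cont : ContinuousOn p' (Ioi 0))
    (hP0 : P 0 = 0)
    (hP_deriv : ∀ s, 0 < s → HasDerivAt P (P' s) s)
    (hP_ode : ∀ s, 0 < s → s * P' s - P s = p s)
    (hliminf1 : ∃ c > 0, ∀ᶠ s in 𝓝[>] (0 : ℝ), c ≤ P s / p s)
    (hliminf2 : ∃ c > 0, ∀ᶠ s in 𝓝[>] (0 : ℝ), c ≤ p s / s ^ γ)
    (hG : (6 / 5 < γ ∧ ∃ q : ℝ, 6 / 5 ≤ q ∧ q ≤ 6 * γ / (5 * γ - 6) ∧ MemD01q Ω G dG q) ∨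
          (γ ≤ 6 / 5 ∧ ((∃ q : ℝ, 6 / 5 ≤ q ∧ MemD01q Ω G dG q) ∨ MemW1inf Ω G dG)))
    (hsol : WeakSolution Ω μ η p G dG ρ u du)
    (hρ_top : MemLp ρ ⊤ (volume.restrict Ω))
    (henergy : IntegrableOn
      (fun x => (1 / 2) * ρ x * (∑ i, (u x i) ^ 2) + P (ρ x)) Ω volume) :
    ∀ᵐ x ∂(volume.restrict Ω), u x = 0 := by
  obtain ⟨r, M, v, dv, vn, hflow⟩ := hsol.exists_zeroExtendedFlow hΩ_open hρ_top
  obtain ⟨hpP, hγP⟩ := eventually_le_pressurePotential hliminf1 hliminf2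
  have hE : FiniteEnergy P r M v := hflow.finiteEnergy hΩ_open.measurableSet hP0
    (exists_pos_forall_ge_le_of_monotoneOn_div
      (monotoneOn_pressurePotential_div hp_nonneg hP_deriv hP_ode)
      (eventually_pos_of_eventually_mul_rpow_le hγP)) henergy
  have hrv (i : Fin 3) := hE.memLp_momentum i (hflow.approx i).measurable
  obtain ⟨dg, hforce⟩ := hflow.exists_isWorklessForce hΩ_open
    (hE.memLp_density (zero_lt_one.trans hγ) hγP) hrv hG
  have hpressure : MemLp (fun x => p (r x)) 2 := hE.memLp_pressure hp_cont hp0 hp_nonneg hpP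
  have hdiv : ∑ i, ∫ x, p (r x) * dv i i x = 0 :=
    hflow.sum_integral_pressure_mul_div_eq_zero hE.nonneg hE.volume_lt_density_ne_top hp_cont
      (contDiffOn_one_of_hasDerivAt isOpen_Ioi hp_deriv hp'_cont) hp0 hpressure
  have hdissipation : ∫ x, ∑ i, ∑ j, Smat μ η (fun k l => dv k l x) i j * dv i j x = 0 :=
    hflow.integral_Smat_mul_grad_eq_zero
      (fun i => memLp_of_memLp_memLp (hrv i) (hflow.memLp_momentum i) (by norm_num) (by norm_num)
        (by norm_num) (by norm_num))
      hpressure hdiv hforce.memLp hforce.work (hflow.momentum hsol hp0 hforce.grad)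
  filter_upwards [ae_restrict_of_ae (eventually_all.2
      (ae_eq_zero_of_integral_Smat_mul_grad hμ hη hflow.approx hdissipation)),
    eventually_all.2 fun i => (hflow.velocity i).ae_eq] with x hvx hux
  exact funext fun i => (hux i).symm.trans (hvx i)

end

/-- **Theorem 2 (finite energy).** Suppose the pressure `p` is continuous with `p(0) = 0`,
`p ≥ 0`, is `C¹` on `(0,∞)` with `p′ ≥ 0`, and for some `γ > 1` one has
`liminf_{s→0⁺} P(s)/p(s) > 0` and `liminf_{s→0⁺} p(s)/s^γ > 0`, where `P` is the pressure
potential (`P(0) = 0`, `s·P′(s) − P(s) = p(s)`). Assume the stated conditions on `G`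
according to whether `γ > 6/5` or `1 < γ ≤ 6/5`. If `ρ ∈ L^∞(Ω)` and the total energy
`∫_Ω ((1/2) ρ|u|² + P(ρ))` is finite, then `u = 0` a.e. in `Ω`. -/
theorem liouville_finite_energy
    (Ω : Set E3) (hΩ_open : IsOpen Ω) (hΩ_conn : IsConnected Ω)
    (μ η : ℝ) (hμ : 0 < μ) (hη : 0 ≤ η)
    (p p' P P' : ℝ → ℝ) (γ : ℝ) (hγ : 1 < γ)
    (G : E3 → ℝ) (dG : E3 → Fin 3 → ℝ)
    (ρ : E3 → ℝ) (u : E3 → Fin 3 → ℝ) (du : E3 → Fin 3 → Fin 3 → ℝ)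
    (hp_cont : ContinuousOn p (Ici 0)) (hp0 : p 0 = 0)
    (hp_nonneg : ∀ s, 0 ≤ s → 0 ≤ p s)
    (hp_deriv : ∀ s, 0 < s → HasDerivAt p (p' s) s)
    (hp'_cont : ContinuousOn p' (Ioi 0))
    (hp'_nonneg : ∀ s, 0 < s → 0 ≤ p' s)
    (hP0 : P 0 = 0)
    (hP_deriv : ∀ s, 0 < s → HasDerivAt P (P' s) s)
    (hP'_cont : ContinuousOn P' (Ioi 0))
    (hP_ode : ∀ s, 0 < s → s * P' s - P s = p s)
    (hliminf1 : ∃ c > 0, ∀ᶠ s in 𝓝[>] (0 : ℝ), c ≤ P s / p s)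
    (hliminf2 : ∃ c > 0, ∀ᶠ s in 𝓝[>] (0 : ℝ), c ≤ p s / s ^ γ)
    (hG : (6 / 5 < γ ∧ ∃ q : ℝ, 6 / 5 ≤ q ∧ q ≤ 6 * γ / (5 * γ - 6) ∧ MemD01q Ω G dG q) ∨
          (γ ≤ 6 / 5 ∧ ((∃ q : ℝ, 6 / 5 ≤ q ∧ MemD01q Ω G dG q) ∨ MemW1inf Ω G dG)))
    (hsol : WeakSolution Ω μ η p G dG ρ u du)
    (hρ_top : MemLp ρ ⊤ (volume.restrict Ω))
    (henergy : IntegrableOn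
      (fun x => (1 / 2) * ρ x * (∑ i, (u x i) ^ 2) + P (ρ x)) Ω volume) :
    ∀ᵐ x ∂(volume.restrict Ω), u x = 0 :=
  liouville_finite_energy_general Ω hΩ_open μ η hμ hη p p' P P' γ hγ G dG ρ u du
    hp_cont hp0 hp_nonneg hp_deriv hp'_cont hP0 hP_deriv hP_ode hliminf1 hliminf2 hG hsol hρ_top
    henergy
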